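/- Every τ-tilting-finite commutative ladder over an algebraically closed field K is representation-finite. -/

import Mathlib

/- Formalization of statements from
   "Report on the finiteness of silting objects"
   by T. Aihara, T. Honma, K. Miyamoto, Q. Wang. -/

open CategoryTheory CategoryTheory.Limits

universe u v w

noncomputable section
namespace PaperSilting
/-! ### Module-theoretic notions.

We model right `Λ`-modules as left modules over the opposite ring; all the
definitions below are stated for left modules over a ring `R` and are applied
with `R := Λᵐᵒᵖ`. -/

/-- The category of `R`-modules (in `Type 0`). -/
abbrev ModCat (R : Type) [Ring R] := ModuleCat.{0} R

variable {R : Type} [Ring R]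

/-- The module object `M` is finitely generated. -/
def IsFGMod {R : Type} [Ring R] (M : ModCat R) : Prop := Module.Finite R M

/-- Indecomposable module object. -/
def IsIndecMod {R : Type} [Ring R] (M : ModCat R) : Prop :=
  ¬ IsZero M ∧ ∀ A B : ModCat R, Nonempty (M ≅ A ⊞ B) → IsZero A ∨ IsZero B

/-- `N` belongs to `add M`, i.e. `N` is a direct summand of a finite direct sum
of copies of `M`. -/
def MemAddMod {R : Type} [Ring R] (N M : ModCat R) : Prop :=
  ∃ (k : ℕ) (g : N ⟶ ⨁ (fun _ : Fin k => M)) (h : (⨁ (fun _ : Fin k => M)) ⟶ N),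
    g ≫ h = 𝟙 N

/-- A basic module: it has no direct summand of the form `N ⊕ N` with `N ≠ 0`. -/
def IsBasicMod {R : Type} [Ring R] (M : ModCat R) : Prop :=
  ∀ N X : ModCat R, Nonempty (M ≅ (N ⊞ N) ⊞ X) → IsZero N

/-- `M` is τ-rigid, i.e. `Hom(M, τM) = 0`: there is a projective presentation
`P₁ → P₀ → M → 0` by finitely generated projectives such that
`Hom(P₀, M) → Hom(P₁, M)` is surjective (Adachi–Iyama–Reiten). -/
def IsTauRigidMod {R : Type} [Ring R] (M : ModCat R) : Prop :=
  ∃ (P₁ P₀ : ModCat R) (f : P₁ ⟶ P₀) (g : P₀ ⟶ M),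
    Projective P₁ ∧ Projective P₀ ∧ IsFGMod P₁ ∧ IsFGMod P₀ ∧
    Function.Surjective g ∧ Function.Exact f g ∧
    ∀ h : P₁ ⟶ M, ∃ k : P₀ ⟶ M, f ≫ k = h

/-- A τ-rigid pair `(M, P)`: `M` is a τ-rigid module and `P` is a finitely
generated projective with `Hom(P, M) = 0`. -/
def IsTauRigidPairMod {R : Type} [Ring R] (M P : ModCat R) : Prop :=
  IsFGMod M ∧ IsTauRigidMod M ∧ IsFGMod P ∧ Projective P ∧ ∀ f : P ⟶ M, f = 0

/-- `M` is a support τ-tilting module: `(M, P)` is a maximal τ-rigid pair for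
some projective `P` (Adachi–Iyama–Reiten; equivalently, `M` is the `0`-th
cohomology of a two-term silting complex in `K^b(proj)`). -/
def IsSupportTauTiltingMod {R : Type} [Ring R] (M : ModCat R) : Prop :=
  ∃ P : ModCat R, IsTauRigidPairMod M P ∧
    ∀ N Q : ModCat R, IsTauRigidPairMod (M ⊞ N) (P ⊞ Q) → MemAddMod N M ∧ MemAddMod Q P

/-- The ring `R` admits only finitely many basic support τ-tilting modules up
to isomorphism. -/
def IsTauTiltingFiniteRing (R : Type) [Ring R] : Prop :=
  ∃ (n : ℕ) (f : Fin n → ModCat R),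
    ∀ M : ModCat R, IsSupportTauTiltingMod M → IsBasicMod M → ∃ i, Nonempty (M ≅ f i)

/-- The ring `R` admits only finitely many finitely generated indecomposable
modules up to isomorphism. -/
def IsRepFiniteRing (R : Type) [Ring R] : Prop :=
  ∃ (n : ℕ) (f : Fin n → ModCat R),
    ∀ M : ModCat R, IsFGMod M → IsIndecMod M → ∃ i, Nonempty (M ≅ f i)

/-- `R` has exactly `n` isomorphism classes of basic support τ-tilting modules. -/
def SupportTauTiltingCount (R : Type) [Ring R] (n : ℕ) : Prop :=
  ∃ f : Fin n → ModCat R,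
    (∀ i, IsSupportTauTiltingMod (f i) ∧ IsBasicMod (f i)) ∧
    (∀ i j, Nonempty (f i ≅ f j) → i = j) ∧
    (∀ M : ModCat R, IsSupportTauTiltingMod M → IsBasicMod M → ∃ i, Nonempty (M ≅ f i))

/-- An algebra `Λ` is τ-tilting-finite (with respect to right modules,
i.e. left `Λᵐᵒᵖ`-modules). -/
def IsTauTiltingFinite (Λ : Type) [Ring Λ] : Prop := IsTauTiltingFiniteRing Λᵐᵒᵖ

/-- An algebra `Λ` is representation-finite (with respect to right modules). -/
def IsRepFinite (Λ : Type) [Ring Λ] : Prop := IsRepFiniteRing Λᵐᵒᵖ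
/-! ### Commutative ladders. -/

/-- The commutative ladder of degree `n` is the incidence algebra of the poset
`Fin 2 × Fin n` (the path algebra of the ladder quiver with two rows of `n`
vertices, bound by all commutativity relations), realized as the subalgebra of
the matrix algebra consisting of matrices supported on pairs `p ≤ q`. -/
def ladderSubalgebra (K : Type) [Field K] (n : ℕ) :
    Subalgebra K (Matrix (Fin 2 × Fin n) (Fin 2 × Fin n) K) where
  carrier := {A | ∀ p q : Fin 2 × Fin n, ¬ p ≤ q → A p q = 0}
  add_mem' := by
    intro A B hA hB p q hpq
    simp [Matrix.add_apply, hA p q hpq, hB p q hpq]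
  zero_mem' := by intro p q _; simp
  mul_mem' := by
    intro A B hA hB p q hpq
    show ∑ z, A p z * B z q = 0
    refine Finset.sum_eq_zero fun z _ => ?_
    by_cases h1 : p ≤ z
    · by_cases h2 : z ≤ q
      · exact absurd (le_trans h1 h2) hpq
      · rw [hB z q h2, mul_zero]
    · rw [hA p z h1, zero_mul]
  one_mem' := by
    intro p q hpq
    have : p ≠ q := fun h => hpq (h ▸ le_refl p)
    simp [Matrix.one_apply_ne this]
  algebraMap_mem' := by
    intro k p q hpq
    have : p ≠ q := fun h => hpq (h ▸ le_refl p)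
    simp [Matrix.algebraMap_matrix_apply, this]

/-- The commutative ladder of degree `n` over `K`. -/
def CommLadder (K : Type) [Field K] (n : ℕ) : Type := ladderSubalgebra K n

instance (K : Type) [Field K] (n : ℕ) : Ring (CommLadder K n) :=
  inferInstanceAs (Ring (ladderSubalgebra K n))

instance (K : Type) [Field K] (n : ℕ) : Algebra K (CommLadder K n) :=
  inferInstanceAs (Algebra K (ladderSubalgebra K n))
structure QRep (K : Type) [Field K] where
  E : Type
  [acg : AddCommGroup E]
  [mod : Module K E]
  [fin : FiniteDimensional K E]
  φ : Fin 8 → Fin 8 → E →ₗ[K] E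

attribute [instance] QRep.acg QRep.mod QRep.fin

namespace QRep

variable {K : Type} [Field K]

structure Rel (h : Fin 8 → Fin 8 → Bool) (M : QRep K) : Prop where
  one : ∀ e, ∑ i, M.φ i i e = e
  orth : ∀ i j k l e, j ≠ k → M.φ k l (M.φ i j e) = 0
  comp : ∀ i j k e, h i j = true → h j k = true → M.φ j k (M.φ i j e) = M.φ i k e
  zero : ∀ i j e, h i j = false → M.φ i j e = 0

def IsHom (M M' : QRep K) (f : M.E →ₗ[K] M'.E) : Prop :=
  ∀ i j e, f (M.φ i j e) = M'.φ i j (f e)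

def Indec (M : QRep K) : Prop :=
  (∃ e : M.E, e ≠ 0) ∧ ∀ f : M.E →ₗ[K] M.E, IsHom M M f → (∀ e, f (f e) = f e) →
    (∀ e, f e = 0) ∨ (∀ e, f e = e)

def Iso (M M' : QRep K) : Prop :=
  ∃ (f : M.E →ₗ[K] M'.E) (g : M'.E →ₗ[K] M.E), IsHom M M' f ∧ IsHom M' M g ∧
    (∀ e, g (f e) = e) ∧ (∀ e, f (g e) = e)

def dim (M : QRep K) (i : Fin 8) : ℕ := Module.finrank K (LinearMap.range (M.φ i i))

structure StepOK (h : Fin 8 → Fin 8 → Bool) (x : Fin 8) (J : Fin 8 → Bool) (s : Fin 8 → ℤ)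
    (h' : Fin 8 → Fin 8 → Bool) : Prop where
  refl : ∀ i, h i i = true
  refl' : ∀ i, h' i i = true
  sgn : ∀ i, s i * s i = 1
  sink : ∀ k, k ≠ x → h x k = false
  xJ : J x = false
  Jx : ∀ j, J j = true → h j x = true
  fac : ∀ i, i ≠ x → J i = false → h i x = true → ∃ l, J l = true ∧ h i l = true
  anti : ∀ i j, J i = true → J j = true → i ≠ j → h i j = false
  hJ : ∀ l, J l = true → h' x l = true
  eq : ∀ i j, i ≠ x → j ≠ x → h' i j = h i j
  mem : ∀ i, i ≠ x → h' i x = true → h i x = true →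
    ∑ l, (if J l = true ∧ h i l = true then s l else 0) = 0
  c1 : ∀ j k l, j ≠ x → k ≠ x → h' x j = true → h' j k = true → J l = true → h l k = true →
    h l j = h' x k
  c2 : ∀ i j l, i ≠ x → j ≠ x → h' i j = true → h' j x = true → J l = true → h i l = true →
    h j l = h' i x
  c3 : ∀ i k, i ≠ x → k ≠ x → h' i x = true → h' x k = true → h i k = true →
    ∑ l, (if J l = true ∧ h i l = true ∧ h l k = true then (1:ℤ) else 0) = 1
  c4 : ∀ j, j ≠ x → h' x j = true → h' j x = true → False

section step

variable {h : Fin 8 → Fin 8 → Bool} {x : Fin 8} {J : Fin 8 → Bool} {s : Fin 8 → ℤ}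
  {h' : Fin 8 → Fin 8 → Bool}

/-- sum over `J` of the components `i → l`. -/
def toJ (M : QRep K) (J : Fin 8 → Bool) (i : Fin 8) : M.E →ₗ[K] M.E :=
  ∑ l, if J l = true then M.φ i l else 0
def fromJ (M : QRep K) (J : Fin 8 → Bool) (k : Fin 8) : M.E →ₗ[K] M.E :=
  ∑ l, if J l = true then M.φ l k else 0
def pJ (M : QRep K) (J : Fin 8 → Bool) : M.E →ₗ[K] M.E :=
  ∑ l, if J l = true then M.φ l l else 0
def psi (M : QRep K) (J : Fin 8 → Bool) (s : Fin 8 → ℤ) (x : Fin 8) : M.E →ₗ[K] M.E :=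
  ∑ l, if J l = true then s l • M.φ l x else 0

lemma ite_app {E F : Type} [AddCommGroup E] [Module K E] [AddCommGroup F] [Module K F]
    (p : Prop) [Decidable p] (f : E →ₗ[K] F) (e : E) :
    (if p then f else 0) e = if p then f e else 0 := by split <;> simp

lemma toJ_apply (M : QRep K) (i : Fin 8) (e) :
    M.toJ J i e = ∑ l, if J l = true then M.φ i l e else 0 := by
  simp [toJ, LinearMap.sum_apply, ite_app]
lemma fromJ_apply (M : QRep K) (i : Fin 8) (e) :
    M.fromJ J i e = ∑ l, if J l = true then M.φ l i e else 0 := by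
  simp [fromJ, LinearMap.sum_apply, ite_app]
lemma pJ_apply (M : QRep K) (e) :
    M.pJ J e = ∑ l, if J l = true then M.φ l l e else 0 := by
  simp [pJ, LinearMap.sum_apply, ite_app]
lemma psi_apply (M : QRep K) (e) :
    M.psi J s x e = ∑ l, if J l = true then s l • M.φ l x e else 0 := by
  simp [psi, LinearMap.sum_apply, ite_app]

variable {M : QRep K} (hM : Rel h M) (H : StepOK h x J s h')
include hM H

lemma idem (i e) : M.φ i i (M.φ i i e) = M.φ i i e := hM.comp i i i e (H.refl i) (H.refl i)

lemma src (i j e) : M.φ i j (M.φ i i e) = M.φ i j e := by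
  by_cases hh : h i j = true
  · exact hM.comp i i j e (H.refl i) hh
  · rw [hM.zero i j _ (by simpa using hh), hM.zero i j _ (by simpa using hh)]

lemma tgt (i j e) : M.φ j j (M.φ i j e) = M.φ i j e := by
  by_cases hh : h i j = true
  · exact hM.comp i j j e hh (H.refl j)
  · rw [hM.zero i j _ (by simpa using hh), map_zero]

lemma xk (k e) (hk : k ≠ x) : M.φ x k e = 0 := hM.zero _ _ _ (H.sink k hk)

/-- `i ∈ J` : `φ i x` through psi -/
lemma psi_phi (i e) (hi : J i = true) : M.psi J s x (M.φ i i e) = s i • M.φ i x e := by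
  rw [psi_apply, Finset.sum_eq_single i]
  · rw [if_pos hi, src hM H]
  · intro b _ hb
    rw [hM.orth i i b x e (Ne.symm hb)]; simp
  · simp

lemma phi_x (i e) (hi : J i = true) : M.φ i x e = s i • M.psi J s x (M.φ i i e) := by
  rw [psi_phi hM H i e hi, smul_smul, H.sgn, one_smul]

lemma xx_psi (e) : M.φ x x (M.psi J s x e) = M.psi J s x e := by
  simp only [psi_apply, map_sum]
  refine Finset.sum_congr rfl fun l _ => ?_
  split
  · rw [map_zsmul, tgt hM H]
  · simp

lemma psi_pJ (e) : M.psi J s x (M.pJ J e) = M.psi J s x e := by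
  rw [pJ_apply, map_sum, psi_apply]
  refine Finset.sum_congr rfl fun l _ => ?_
  split
  · rename_i hl; rw [psi_phi hM H _ _ hl]
  · simp

lemma ll_pJ (l e) (hl : J l = true) : M.φ l l (M.pJ J e) = M.φ l l e := by
  rw [pJ_apply, map_sum, Finset.sum_eq_single l]
  · rw [if_pos hl, src hM H]
  · intro b _ hb
    split
    · rw [hM.orth _ _ _ _ _ hb]
    · simp
  · simp

lemma pJ_pJ (e) : M.pJ J (M.pJ J e) = M.pJ J e := by
  rw [pJ_apply M (M.pJ J e)]
  conv_rhs => rw [pJ_apply]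
  refine Finset.sum_congr rfl fun l _ => ?_
  split
  · rename_i hl; rw [ll_pJ hM H _ _ hl]
  · rfl

lemma pJ_of (i l e) (hl : J l = true) : M.pJ J (M.φ i l e) = M.φ i l e := by
  rw [pJ_apply, Finset.sum_eq_single l]
  · rw [if_pos hl, tgt hM H]
  · intro b _ hb
    split
    · rw [hM.orth _ _ _ _ _ (Ne.symm hb)]
    · simp
  · simp

lemma xx_pJ (e) : M.φ x x (M.pJ J e) = 0 := by
  rw [pJ_apply, map_sum]
  refine Finset.sum_eq_zero fun l _ => ?_
  split
  · rename_i hl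
    apply hM.orth
    rintro rfl; rw [H.xJ] at hl; simp at hl
  · simp

/-- an element killed by xi∘psi is killed on all arrows into x. -/
lemma kill_in {F : Type} [AddCommGroup F] [Module K F] (ξ : M.E →ₗ[K] F)
    (hξ : ∀ e, ξ (M.psi J s x e) = 0) (i e) (hi : i ≠ x) : ξ (M.φ i x e) = 0 := by
  by_cases hJ : J i = true
  · rw [phi_x hM H i e hJ, map_zsmul, hξ, smul_zero]
  · by_cases hh : h i x = true
    · obtain ⟨l, hl, hil⟩ := H.fac i hi (by simpa using hJ) hh
      rw [← hM.comp i l x e hil (H.Jx l hl), phi_x hM H l _ hl, map_zsmul, hξ, smul_zero]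
    · rw [hM.zero _ _ _ (by simpa using hh), map_zero]

end step

end QRep

set_option linter.unusedSectionVars false
namespace QRep

section step2
variable {K : Type} [Field K]
variable {h : Fin 8 → Fin 8 → Bool} {x : Fin 8} {J : Fin 8 → Bool} {s : Fin 8 → ℤ}
  {h' : Fin 8 → Fin 8 → Bool}

/-- the vertex x is covered -/
def Cov (M : QRep K) (J : Fin 8 → Bool) (s : Fin 8 → ℤ) (x : Fin 8) : Prop :=
  ∀ e, ∃ y, M.psi J s x y = M.φ x x e

lemma Cov.section {M : QRep K} (hc : M.Cov J s x) :
    ∃ σ : M.E →ₗ[K] M.E, ∀ e, M.psi J s x (σ e) = M.φ x x e := by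
  let f : M.E →ₗ[K] LinearMap.range (M.psi J s x) := LinearMap.rangeRestrict _
  have hf : Function.Surjective f := LinearMap.surjective_rangeRestrict _
  let g : M.E →ₗ[K] LinearMap.range (M.psi J s x) :=
    LinearMap.codRestrict _ (M.φ x x) (fun e => hc e)
  obtain ⟨σ, hσ⟩ := Module.projective_lifting_property f g hf
  refine ⟨σ, fun e => ?_⟩
  have := LinearMap.congr_fun hσ e
  exact congrArg Subtype.val this

/-- the rank one map to x -/
def rk1 (M M' : QRep K) (x : Fin 8) (ξ : M.E →ₗ[K] K) (u : M'.E) : M.E →ₗ[K] M'.E :=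
  (LinearMap.toSpanSingleton K M'.E u) ∘ₗ ξ ∘ₗ M.φ x x

lemma rk1_apply (M M' : QRep K) (ξ : M.E →ₗ[K] K) (u : M'.E) (e) :
    rk1 M M' x ξ u e = ξ (M.φ x x e) • u := rfl

lemma rk1_hom {M M' : QRep K} (hM : Rel h M) (hM' : Rel h M') (H : StepOK h x J s h')
    (ξ : M.E →ₗ[K] K) (u : M'.E) (hξ : ∀ e, ξ (M.psi J s x e) = 0) (hu : M'.φ x x u = u) :
    IsHom M M' (rk1 M M' x ξ u) := by
  intro i j e
  rw [rk1_apply, rk1_apply, map_smul]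
  by_cases hj : j = x
  · subst hj
    rw [tgt hM H]
    by_cases hi : i = j
    · subst hi; rw [hu]
    · rw [kill_in hM H ξ hξ i e hi, ← hu, hM'.orth _ _ _ _ _ (Ne.symm hi)]; simp
  · rw [hM.orth _ _ _ _ _ hj]
    by_cases hi : i = x
    · subst hi; rw [xk hM' H j _ hj]; simp
    · rw [← hu, hM'.orth _ _ _ _ _ (Ne.symm hi)]; simp

lemma notCov {M : QRep K} (hM : Rel h M) (H : StepOK h x J s h') (hI : Indec M)
    (hc : ¬ M.Cov J s x) : ∃ (ξ : M.E →ₗ[K] K) (u : M.E), (∀ e, ξ (M.psi J s x e) = 0) ∧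
      M.φ x x u = u ∧ ξ u = 1 ∧ ∀ e, rk1 M M x ξ u e = e := by
  simp only [Cov, not_forall, not_exists] at hc
  obtain ⟨e, he⟩ := hc
  have : M.φ x x e ∉ LinearMap.range (M.psi J s x) := by
    rintro ⟨y, hy⟩; exact he y hy
  obtain ⟨ξ, h1, h2⟩ := Submodule.exists_le_ker_of_notMem this
  refine ⟨(ξ (M.φ x x e))⁻¹ • ξ, M.φ x x e, ?_, idem hM H _ _, ?_, ?_⟩
  · intro y
    have : ξ (M.psi J s x y) = 0 := h2 ⟨y, rfl⟩
    simp [this]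
  · simp [h1]
  · have hh := rk1_hom hM hM H ((ξ (M.φ x x e))⁻¹ • ξ) (M.φ x x e) (by
      intro y
      have : ξ (M.psi J s x y) = 0 := h2 ⟨y, rfl⟩
      simp [this]) (idem hM H _ _)
    rcases hI.2 _ hh (by
      intro y
      simp only [rk1_apply, map_smul, idem hM H, LinearMap.smul_apply]
      simp [h1]) with h0 | h0
    · exfalso
      have := h0 e
      simp only [rk1_apply, LinearMap.smul_apply] at this
      have h3 : M.φ x x e = 0 := by simpa [h1] using this
      rw [h3] at h1; simp at h1
    · exact h0

lemma iso_notCov {M M' : QRep K} (hM : Rel h M) (hM' : Rel h M') (H : StepOK h x J s h')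
    (hI : Indec M) (hI' : Indec M') (hc : ¬ M.Cov J s x) (hc' : ¬ M'.Cov J s x) : Iso M M' := by
  obtain ⟨ξ, u, h1, h2, h3, h4⟩ := notCov hM H hI hc
  obtain ⟨ξ', u', h1', h2', h3', h4'⟩ := notCov hM' H hI' hc'
  refine ⟨rk1 M M' x ξ u', rk1 M' M x ξ' u, rk1_hom hM hM' H _ _ h1 h2',
    rk1_hom hM' hM H _ _ h1' h2, ?_, ?_⟩
  · intro e
    have := h4 e
    simp only [rk1_apply, map_smul] at *
    rw [h2', h3']; simpa using this
  · intro e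
    have := h4' e
    simp only [rk1_apply, map_smul] at *
    rw [h2, h3]; simpa using this

/-- the carrier of the reflected representation -/
def refC (M : QRep K) (J : Fin 8 → Bool) (s : Fin 8 → ℤ) (x : Fin 8) :
    Submodule K (M.E × M.E) where
  carrier := {z | M.φ x x z.1 = 0 ∧ M.pJ J z.2 = z.2 ∧ M.psi J s x z.2 = 0}
  add_mem' := by
    rintro a b ⟨h1, h2, h3⟩ ⟨h4, h5, h6⟩
    simp [*]
  zero_mem' := by simp
  smul_mem' := by
    rintro c b ⟨h4, h5, h6⟩
    simp [*]

/-- the reflected maps -/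
def refφ (M : QRep K) (J : Fin 8 → Bool) (x : Fin 8) (h' : Fin 8 → Fin 8 → Bool)
    (i j : Fin 8) : (M.E × M.E) →ₗ[K] (M.E × M.E) :=
  if i = x then
    if j = x then (LinearMap.inr K M.E M.E) ∘ₗ (LinearMap.snd K M.E M.E)
    else if h' i j = true then (LinearMap.inl K M.E M.E) ∘ₗ M.fromJ J j ∘ₗ (LinearMap.snd K M.E M.E)
    else 0
  else
    if j = x then
      if h' i j = true then (LinearMap.inr K M.E M.E) ∘ₗ M.toJ J i ∘ₗ (LinearMap.fst K M.E M.E)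
      else 0
    else (LinearMap.inl K M.E M.E) ∘ₗ M.φ i j ∘ₗ (LinearMap.fst K M.E M.E)

lemma refφ_xx (M : QRep K) (z) : refφ M J x h' x x z = (0, z.2) := by simp [refφ]
lemma refφ_xk (M : QRep K) (j z) (hj : j ≠ x) (hh : h' x j = true) :
    refφ M J x h' x j z = (M.fromJ J j z.2, 0) := by simp [refφ, hj, hh]
lemma refφ_xk0 (M : QRep K) (j z) (hj : j ≠ x) (hh : h' x j = false) :
    refφ M J x h' x j z = 0 := by simp [refφ, hj, hh]
lemma refφ_ix (M : QRep K) (i z) (hj : i ≠ x) (hh : h' i x = true) :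
    refφ M J x h' i x z = (0, M.toJ J i z.1) := by simp [refφ, hj, hh]
lemma refφ_ix0 (M : QRep K) (i z) (hj : i ≠ x) (hh : h' i x = false) :
    refφ M J x h' i x z = 0 := by simp [refφ, hj, hh]
lemma refφ_ij (M : QRep K) (i j z) (hi : i ≠ x) (hj : j ≠ x) :
    refφ M J x h' i j z = (M.φ i j z.1, 0) := by simp [refφ, hj, hi]

variable {M : QRep K} (hM : Rel h M) (H : StepOK h x J s h')
include hM H

lemma pJ_toJ (i e) : M.pJ J (M.toJ J i e) = M.toJ J i e := by
  rw [toJ_apply, map_sum]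
  refine Finset.sum_congr rfl fun l _ => ?_
  split
  · rename_i hl; exact pJ_of hM H _ _ _ hl
  · simp

lemma psi_toJ (i e) (hi : i ≠ x) (hh : h' i x = true) : M.psi J s x (M.toJ J i e) = 0 := by
  have : M.psi J s x (M.toJ J i e) =
      (∑ l, (if J l = true ∧ h i l = true then s l else 0)) • M.φ i x e := by
    rw [toJ_apply, map_sum, Finset.sum_smul]
    refine Finset.sum_congr rfl fun l _ => ?_
    by_cases hl : J l = true
    · rw [if_pos hl, ← tgt hM H, psi_phi hM H _ _ hl]
      by_cases hil : h i l = true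
      · rw [hM.comp i l x e hil (H.Jx l hl), if_pos ⟨hl, hil⟩]
      · rw [if_neg (fun h => hil h.2), hM.zero i l _ (by simpa using hil)]; simp
    · simp [hl]
  rw [this]
  by_cases hix : h i x = true
  · rw [H.mem i hi hh hix, zero_smul]
  · rw [hM.zero _ _ _ (by simpa using hix), smul_zero]

lemma xx_fromJ (k e) (hk : k ≠ x) : M.φ x x (M.fromJ J k e) = 0 := by
  rw [fromJ_apply, map_sum]
  refine Finset.sum_eq_zero fun l _ => ?_
  split
  · exact hM.orth _ _ _ _ _ hk
  · simp

lemma refφ_mem (i j z) (hz : z ∈ refC M J s x) : refφ M J x h' i j z ∈ refC M J s x := by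
  obtain ⟨h1, h2, h3⟩ := hz
  by_cases hi : i = x
  · subst hi
    by_cases hj : j = i
    · subst hj; rw [refφ_xx]; exact ⟨by simp, h2, h3⟩
    · by_cases hh : h' i j = true
      · rw [refφ_xk _ _ _ hj hh]; exact ⟨xx_fromJ hM H _ _ hj, by simp, by simp⟩
      · rw [refφ_xk0 _ _ _ hj (by simpa using hh)]; exact zero_mem _
  · by_cases hj : j = x
    · subst hj
      by_cases hh : h' i j = true
      · rw [refφ_ix _ _ _ hi hh]; exact ⟨by simp, pJ_toJ hM H _ _, psi_toJ hM H _ _ hi hh⟩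
      · rw [refφ_ix0 _ _ _ hi (by simpa using hh)]; exact zero_mem _
    · rw [refφ_ij _ _ _ _ hi hj]
      exact ⟨hM.orth _ _ _ _ _ hj, by simp, by simp⟩

/-- reflected representation -/
def refl : QRep K where
  E := refC M J s x
  φ i j := (refφ M J x h' i j).restrict (fun z hz => refφ_mem hM H i j z hz)

/-- underlying pair -/
def rv : (refl hM H).E →ₗ[K] M.E × M.E := (refC M J s x).subtype

lemma rv_φ (i j z) : rv hM H ((refl hM H).φ i j z) = refφ M J x h' i j (rv hM H z) := rfl

lemma rv_inj {z w : (refl hM H).E} (hzw : rv hM H z = rv hM H w) : z = w := Subtype.ext hzw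

lemma rv_mem (z) : rv hM H z ∈ refC M J s x := z.2

/-- element from a pair -/
def rmk (z : M.E × M.E) (hz : z ∈ refC M J s x) : (refl hM H).E := ⟨z, hz⟩

lemma rv_mk (z : M.E × M.E) (hz : z ∈ refC M J s x) : rv hM H (rmk hM H z hz) = z := rfl

lemma rel_refl : Rel h' (refl hM H) := by
  constructor
  · intro z
    apply rv_inj hM H
    obtain ⟨h1, h2, h3⟩ := rv_mem hM H z
    simp only [map_sum, rv_φ]
    rw [← Finset.add_sum_erase _ _ (Finset.mem_univ x), refφ_xx]
    have : ∑ i ∈ Finset.univ.erase x, refφ M J x h' i i (rv hM H z) = ((rv hM H z).1, 0) := by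
      rw [Finset.sum_congr rfl (fun i hi => refφ_ij M i i (rv hM H z) (Finset.ne_of_mem_erase hi)
        (Finset.ne_of_mem_erase hi))]
      ext
      · simp only [Prod.fst_sum]
        conv_rhs => rw [← hM.one (rv hM H z).1, ← Finset.add_sum_erase _ _ (Finset.mem_univ x), h1,
          zero_add]
      · simp [Prod.snd_sum]
    rw [this]; simp
  · intro i j k l z0 hjk
    apply rv_inj hM H
    rw [rv_φ, rv_φ, map_zero]
    generalize rv hM H z0 = z
    by_cases hk : k = x
    · subst hk
      have : (refφ M J k h' i j z).2 = 0 := by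
        by_cases hi : i = k
        · subst hi
          by_cases hh : h' i j = true
          · rw [refφ_xk _ _ _ hjk hh]
          · rw [refφ_xk0 _ _ _ hjk (by simpa using hh)]; rfl
        · rw [refφ_ij _ _ _ _ hi hjk]
      by_cases hl : l = k
      · subst hl; rw [refφ_xx, this]; rfl
      · by_cases hh : h' k l = true
        · rw [refφ_xk _ _ _ hl hh, this]; simp
        · rw [refφ_xk0 _ _ _ hl (by simpa using hh)]
    · have : M.φ k k (refφ M J x h' i j z).1 = 0 := by
        by_cases hi : i = x
        · subst hi
          by_cases hj : j = i
          · subst hj; rw [refφ_xx]; simp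
          · by_cases hh : h' i j = true
            · rw [refφ_xk _ _ _ hj hh]
              rw [fromJ_apply, map_sum]
              refine Finset.sum_eq_zero fun l _ => ?_
              split
              · exact hM.orth _ _ _ _ _ hjk
              · simp
            · rw [refφ_xk0 _ _ _ hj (by simpa using hh)]; simp
        · by_cases hj : j = x
          · subst hj
            by_cases hh : h' i j = true
            · rw [refφ_ix _ _ _ hi hh]; simp
            · rw [refφ_ix0 _ _ _ hi (by simpa using hh)]; simp
          · rw [refφ_ij _ _ _ _ hi hj]; exact hM.orth _ _ _ _ _ hjk
      have h2 : ∀ l, M.φ k l (refφ M J x h' i j z).1 = 0 := fun l => by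
        rw [← src hM H, this, map_zero]
      by_cases hl : l = x
      · subst hl
        by_cases hh : h' k l = true
        · rw [refφ_ix _ _ _ hk hh, toJ_apply]; simp [h2]
        · rw [refφ_ix0 _ _ _ hk (by simpa using hh)]
      · rw [refφ_ij _ _ _ _ hk hl, h2]; rfl
  · intro i j k z0 hij hjk
    apply rv_inj hM H
    rw [rv_φ, rv_φ, rv_φ]
    have hz := rv_mem hM H z0
    revert hz
    generalize rv hM H z0 = z
    rintro ⟨hz1, hz2, hz3⟩
    by_cases hi : i = x
    · subst hi
      by_cases hj : j = i
      · subst hj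
        rw [refφ_xx]
        by_cases hk : k = j
        · subst hk; rw [refφ_xx, refφ_xx]
        · rw [refφ_xk _ _ _ hk hjk, refφ_xk _ _ _ hk hjk]
      · by_cases hk : k = i
        · subst hk; exact (H.c4 j hj hij hjk).elim
        · rw [refφ_ij _ _ _ _ hj hk, refφ_xk _ _ _ hj hij]
          by_cases hik : h' i k = true
          · rw [refφ_xk _ _ _ hk hik]
            congr 1
            simp only [fromJ_apply, map_sum]
            refine Finset.sum_congr rfl fun l _ => ?_
            by_cases hl : J l = true
            · rw [if_pos hl, if_pos hl]
              by_cases hlk : h l k = true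
              · have := H.c1 j k l hj hk hij hjk hl hlk
                exact hM.comp _ _ _ _ (this.trans hik) ((H.eq j k hj hk) ▸ hjk)
              · rw [hM.zero l k _ (by simpa using hlk)]
                by_cases hlj : h l j = true
                · rw [hM.comp _ _ _ _ hlj ((H.eq j k hj hk) ▸ hjk), hM.zero l k _ (by simpa using hlk)]
                · rw [hM.zero l j _ (by simpa using hlj), map_zero]
            · simp [hl]
          · rw [refφ_xk0 _ _ _ hk (by simpa using hik)]
            have : M.φ j k (M.fromJ J j z.2) = 0 := by
              simp only [fromJ_apply, map_sum]
              refine Finset.sum_eq_zero fun l _ => ?_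
              by_cases hl : J l = true
              · rw [if_pos hl]
                by_cases hlj : h l j = true
                · rw [hM.comp _ _ _ _ hlj ((H.eq j k hj hk) ▸ hjk)]
                  by_cases hlk : h l k = true
                  · have := H.c1 j k l hj hk hij hjk hl hlk
                    exact (hik (this ▸ hlj)).elim
                  · rw [hM.zero l k _ (by simpa using hlk)]
                · rw [hM.zero l j _ (by simpa using hlj), map_zero]
              · simp [hl]
            rw [this]; rfl
    · by_cases hj : j = x
      · subst hj
        rw [refφ_ix _ _ _ hi hij]
        by_cases hk : k = j
        · subst hk
          rw [refφ_xx, refφ_ix _ _ _ hi hij]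
        · rw [refφ_xk _ _ _ hk hjk, refφ_ij _ _ _ _ hi hk]
          congr 1
          have : M.fromJ J k (M.toJ J i z.1) =
              (∑ l, (if J l = true ∧ h i l = true ∧ h l k = true then (1:ℤ) else 0)) • M.φ i k z.1 := by
            rw [fromJ_apply, Finset.sum_smul]
            refine Finset.sum_congr rfl fun l _ => ?_
            by_cases hl : J l = true
            · rw [if_pos hl, ← src hM H]
              have : M.φ l l (M.toJ J i z.1) = M.φ i l z.1 := by
                rw [toJ_apply, map_sum, Finset.sum_eq_single l]
                · rw [if_pos hl, tgt hM H]
                · intro b _ hb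
                  split
                  · exact hM.orth _ _ _ _ _ hb
                  · simp
                · simp
              rw [this]
              by_cases hil : h i l = true
              · by_cases hlk : h l k = true
                · rw [hM.comp _ _ _ _ hil hlk, if_pos ⟨hl, hil, hlk⟩, one_smul]
                · rw [hM.zero l k _ (by simpa using hlk), if_neg (fun h => hlk h.2.2), zero_smul]
              · rw [hM.zero i l _ (by simpa using hil), if_neg (fun h => hil h.2.1), zero_smul,
                  map_zero]
            · simp [hl]
          dsimp only
          rw [this]
          by_cases hik : h i k = true
          · rw [H.c3 i k hi hk hij hjk hik, one_smul]
          · rw [hM.zero i k _ (by simpa using hik), smul_zero]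
      · rw [refφ_ij _ _ _ _ hi hj]
        by_cases hk : k = x
        · subst hk
          rw [refφ_ix _ _ _ hj hjk]
          have key : ∀ l, J l = true → h i l = true → h j l = h' i k := fun l hl hil =>
            H.c2 i j l hi hj hij hjk hl hil
          have hij' : h i j = true := (H.eq i j hi hj) ▸ hij
          have h0 : ∀ l, J l = true → M.φ j l (M.φ i j z.1) =
              if h' i k = true then M.φ i l z.1 else 0 := by
            intro l hl
            by_cases hil : h i l = true
            · rw [← key l hl hil]
              by_cases hjl : h j l = true
              · rw [hM.comp _ _ _ _ hij' hjl, if_pos hjl]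
              · rw [hM.zero j l _ (by simpa using hjl), if_neg hjl]
            · rw [hM.zero i l _ (by simpa using hil), ite_self]
              by_cases hjl : h j l = true
              · rw [hM.comp _ _ _ _ hij' hjl, hM.zero i l _ (by simpa using hil)]
              · rw [hM.zero j l _ (by simpa using hjl)]
          have h1 : M.toJ J j (M.φ i j z.1) = if h' i k = true then M.toJ J i z.1 else 0 := by
            rw [toJ_apply, toJ_apply]
            rw [Finset.sum_congr rfl (g := fun l => if J l = true then
              (if h' i k = true then M.φ i l z.1 else 0) else 0)]
            · split <;> simp
            · intro l _
              split
              · rename_i hl; exact h0 l hl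
              · rfl
          dsimp only
          rw [h1]
          by_cases hik : h' i k = true
          · rw [refφ_ix _ _ _ hi hik, if_pos hik]
          · rw [refφ_ix0 _ _ _ hi (by simpa using hik), if_neg hik]; rfl
        · rw [refφ_ij _ _ _ _ hj hk, refφ_ij _ _ _ _ hi hk]
          rw [hM.comp _ _ _ _ ((H.eq i j hi hj) ▸ hij) ((H.eq j k hj hk) ▸ hjk)]
  · intro i j z hij
    apply rv_inj hM H
    rw [rv_φ, map_zero]
    by_cases hi : i = x
    · subst hi
      by_cases hj : j = i
      · subst hj; rw [H.refl'] at hij; simp at hij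
      · rw [refφ_xk0 _ _ _ hj hij]
    · by_cases hj : j = x
      · subst hj; rw [refφ_ix0 _ _ _ hi hij]
      · rw [refφ_ij _ _ _ _ hi hj, hM.zero _ _ _ ((H.eq i j hi hj) ▸ hij)]; rfl

end step2
end QRep

set_option linter.unusedSectionVars false
namespace QRep

section step3
variable {K : Type} [Field K]
variable {h : Fin 8 → Fin 8 → Bool} {x : Fin 8} {J : Fin 8 → Bool} {s : Fin 8 → ℤ}
  {h' : Fin 8 → Fin 8 → Bool}

lemma hom_pJ {M M' : QRep K} {g : M.E →ₗ[K] M'.E} (hg : IsHom M M' g) (e) :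
    g (M.pJ J e) = M'.pJ J (g e) := by
  simp only [pJ_apply, map_sum]
  refine Finset.sum_congr rfl fun l _ => ?_
  split
  · exact hg _ _ _
  · simp

lemma hom_psi {M M' : QRep K} {g : M.E →ₗ[K] M'.E} (hg : IsHom M M' g) (e) :
    g (M.psi J s x e) = M'.psi J s x (g e) := by
  simp only [psi_apply, map_sum]
  refine Finset.sum_congr rfl fun l _ => ?_
  split
  · rw [map_zsmul, hg]
  · simp

lemma faithful {M M' : QRep K} (hM : Rel h M) (hM' : Rel h M') (H : StepOK h x J s h')
    (hc : M.Cov J s x) {g g' : M.E →ₗ[K] M'.E} (hg : IsHom M M' g) (hg' : IsHom M M' g')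
    (heq : ∀ e, M.φ x x e = 0 → g e = g' e) (e) : g e = g' e := by
  have h1 : g (M.φ x x e) = g' (M.φ x x e) := by
    obtain ⟨y, hy⟩ := hc e
    rw [← hy, ← psi_pJ hM H, hom_psi hg, hom_psi hg', heq _ (xx_pJ hM H y)]
  have h2 : g (e - M.φ x x e) = g' (e - M.φ x x e) := by
    apply heq; rw [map_sub, idem hM H, sub_self]
  rw [map_sub, map_sub, h1] at h2
  exact sub_left_injective h2

lemma hom_comp {M M' M'' : QRep K} {f : M.E →ₗ[K] M'.E} {g : M'.E →ₗ[K] M''.E}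
    (hf : IsHom M M' f) (hg : IsHom M' M'' g) : IsHom M M'' (g ∘ₗ f) := by
  intro i j e
  simp [hf i j, hg i j]

lemma hom_id (M : QRep K) : IsHom M M LinearMap.id := fun _ _ _ => rfl
lemma hom_zero (M M' : QRep K) : IsHom M M' 0 := fun i j e => by simp

lemma full {M M' : QRep K} (hM : Rel h M) (hM' : Rel h M') (H : StepOK h x J s h')
    (hc : M.Cov J s x) (G : (refl hM H).E →ₗ[K] (refl hM' H).E)
    (hG : IsHom (refl hM H) (refl hM' H) G) :
    ∃ g : M.E →ₗ[K] M'.E, IsHom M M' g ∧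
      ∀ z, rv hM' H (G z) = (g (rv hM H z).1, g (rv hM H z).2) := by
  obtain ⟨σ, hσ⟩ := hc.section
  -- inclusion of the part off x
  have hι : ∀ e : M.E, ((e - M.φ x x e, 0) : M.E × M.E) ∈ refC M J s x := fun e =>
    ⟨by simp [idem hM H], by simp, by simp⟩
  let ι : M.E →ₗ[K] (refl hM H).E := LinearMap.codRestrict (refC M J s x)
    ((LinearMap.inl K M.E M.E) ∘ₗ (LinearMap.id - M.φ x x)) hι
  have rvι : ∀ e, rv hM H (ι e) = (e - M.φ x x e, 0) := fun e => rfl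
  let g0 : M.E →ₗ[K] M'.E := (LinearMap.fst K M'.E M'.E) ∘ₗ rv hM' H ∘ₗ G ∘ₗ ι
  have g0_def : ∀ e, g0 e = (rv hM' H (G (ι e))).1 := fun e => rfl
  have g0x : ∀ e, M'.φ x x (g0 e) = 0 := fun e => (rv_mem hM' H (G (ι e))).1
  have rvG : ∀ e, rv hM' H (G (ι e)) = (g0 e, 0) := by
    intro e
    have h1 : (refl hM H).φ x x (ι e) = 0 := by
      apply rv_inj hM H; rw [rv_φ, refφ_xx, rvι, map_zero]; rfl
    have h2 := hG x x (ι e)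
    rw [h1, map_zero] at h2
    have h3 := congrArg (rv hM' H) h2
    rw [rv_φ, refφ_xx, map_zero] at h3
    ext
    · rfl
    · exact (congrArg Prod.snd h3).symm
  have g0φ : ∀ i j e, i ≠ x → j ≠ x → g0 (M.φ i j e) = M'.φ i j (g0 e) := by
    intro i j e hi hj
    have h1 : (refl hM H).φ i j (ι e) = ι (M.φ i j e) := by
      apply rv_inj hM H
      rw [rv_φ, refφ_ij _ _ _ _ hi hj, rvι, rvι]
      rw [hM.orth _ _ _ _ _ hj]
      simp [hM.orth _ _ _ _ _ (Ne.symm hi)]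
    have h2 := hG i j (ι e)
    rw [h1] at h2
    have h3 := congrArg (rv hM' H) h2
    rw [rv_φ, refφ_ij _ _ _ _ hi hj, rvG, rvG] at h3
    exact congrArg Prod.fst h3
  have g0J : ∀ e, g0 (M.pJ J e) = M'.pJ J (g0 e) := by
    intro e
    simp only [pJ_apply, map_sum]
    refine Finset.sum_congr rfl fun l _ => ?_
    split
    · rename_i hl
      have : l ≠ x := by rintro rfl; rw [H.xJ] at hl; simp at hl
      exact g0φ _ _ _ this this
    · simp
  have fromJl : ∀ (N : QRep K) (hN : Rel h N) (l : Fin 8) (v : N.E), J l = true →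
      N.fromJ J l v = N.φ l l v := by
    intro N hN l v hl
    rw [fromJ_apply, Finset.sum_eq_single l]
    · rw [if_pos hl]
    · intro b _ hb
      split
      · rename_i hb'; exact hN.zero _ _ _ (H.anti b l hb' hl hb)
      · rfl
    · simp
  have Gx : ∀ (v : M.E) (hv : ((0, v) : M.E × M.E) ∈ refC M J s x),
      rv hM' H (G (rmk hM H (0, v) hv)) = (0, g0 v) := by
    intro v hv
    have h1 : (refl hM H).φ x x (rmk hM H (0, v) hv) = rmk hM H (0, v) hv := by
      apply rv_inj hM H; rw [rv_φ, refφ_xx, rv_mk]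
    have h2 := congrArg (rv hM' H) (hG x x (rmk hM H (0, v) hv))
    rw [h1, rv_φ, refφ_xx] at h2
    have hw := (rv_mem hM' H (G (rmk hM H (0, v) hv))).2.1
    set w := (rv hM' H (G (rmk hM H (0, v) hv))).2 with hwdef
    rw [h2]
    congr 1
    have hl : ∀ l, J l = true → M'.φ l l w = M'.φ l l (g0 v) := by
      intro l hl
      have hlx : l ≠ x := by rintro rfl; rw [H.xJ] at hl; simp at hl
      have h3 := congrArg (rv hM' H) (hG x l (rmk hM H (0, v) hv))
      have h4 : (refl hM H).φ x l (rmk hM H (0, v) hv) = ι (M.φ l l v) := by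
        apply rv_inj hM H
        rw [rv_φ, refφ_xk _ _ _ hlx (H.hJ l hl), rv_mk, rvι, hM.orth _ _ _ _ _ hlx, sub_zero]
        rw [fromJl M hM l _ hl]
      rw [h4, rvG, rv_φ, refφ_xk _ _ _ hlx (H.hJ l hl), fromJl M' hM' l _ hl] at h3
      rw [← g0φ l l v hlx hlx]
      exact (congrArg Prod.fst h3).symm
    have hv2 : M.pJ J v = v := hv.2.1
    rw [← hw, ← hv2, g0J, pJ_apply, pJ_apply]
    refine Finset.sum_congr rfl fun l _ => ?_
    split
    · rename_i hl'; exact hl l hl'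
    · rfl
  let g1 : M.E →ₗ[K] M'.E := (M'.psi J s x) ∘ₗ g0 ∘ₗ (M.pJ J) ∘ₗ σ ∘ₗ M.φ x x
  have g1_def : ∀ e, g1 e = M'.psi J s x (g0 (M.pJ J (σ (M.φ x x e)))) := fun e => rfl
  have ker : ∀ v, M.psi J s x v = 0 → M'.psi J s x (g0 (M.pJ J v)) = 0 := by
    intro v hv
    have hm : ((0, M.pJ J v) : M.E × M.E) ∈ refC M J s x :=
      ⟨by simp, pJ_pJ hM H v, by simpa [psi_pJ hM H] using hv⟩
    have h1 := (rv_mem hM' H (G (rmk hM H _ hm))).2.2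
    rw [Gx] at h1
    exact h1
  have g1psi : ∀ v, g1 (M.psi J s x v) = M'.psi J s x (g0 (M.pJ J v)) := by
    intro v
    rw [g1_def, xx_psi hM H]
    have := ker (σ (M.psi J s x v) - v) (by rw [map_sub, hσ, xx_psi hM H, sub_self])
    rw [map_sub, map_sub, map_sub, sub_eq_zero] at this
    exact this
  have g1x : ∀ e, M.φ x x e = 0 → g1 e = 0 := by
    intro e he; rw [g1_def, he]; simp
  have g0xx : ∀ e, g0 (M.φ x x e) = 0 := by
    intro e
    have : ι (M.φ x x e) = 0 := by
      apply rv_inj hM H; rw [rvι, idem hM H, sub_self, map_zero]; rfl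
    rw [g0_def, this]; simp
  have xg1 : ∀ e, M'.φ x x (g1 e) = g1 e := fun e => by rw [g1_def, xx_psi hM' H]
  have into : ∀ i e, J i = true → g1 (M.φ i x e) = M'.φ i x (g0 e) := by
    intro i e hi
    have hix : i ≠ x := by rintro rfl; rw [H.xJ] at hi; simp at hi
    rw [phi_x hM H i e hi, map_zsmul, g1psi, phi_x hM' H i _ hi, pJ_of hM H _ _ _ hi,
      g0φ _ _ _ hix hix]
  have into' : ∀ i e, i ≠ x → g1 (M.φ i x e) = M'.φ i x (g0 e) := by
    intro i e hi
    by_cases hJ : J i = true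
    · exact into i e hJ
    · by_cases hh : h i x = true
      · obtain ⟨l, hl, hil⟩ := H.fac i hi (by simpa using hJ) hh
        have hlx : l ≠ x := by rintro rfl; rw [H.xJ] at hl; simp at hl
        rw [← hM.comp i l x e hil (H.Jx l hl), into _ _ hl, g0φ _ _ _ hi hlx,
          hM'.comp i l x _ hil (H.Jx l hl)]
      · rw [hM.zero _ _ _ (by simpa using hh), hM'.zero _ _ _ (by simpa using hh), map_zero]
  refine ⟨g0 + g1, ?_, ?_⟩
  · intro i j e
    simp only [LinearMap.add_apply, map_add]
    by_cases hi : i = x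
    · subst hi
      by_cases hj : j = i
      · subst hj
        rw [g0xx, g0x, xg1, g1_def, idem hM H, ← g1_def]
      · rw [xk hM H _ _ hj, xk hM' H _ _ hj, xk hM' H _ _ hj]; simp
    · have h0 : M'.φ i j (g1 e) = 0 := by rw [← xg1, hM'.orth _ _ _ _ _ (Ne.symm hi)]
      rw [h0, add_zero]
      by_cases hj : j = x
      · subst hj
        have : g0 (M.φ i j e) = 0 := by rw [← tgt hM H, g0xx]
        rw [this, zero_add, into' _ _ hi]
      · rw [g0φ _ _ _ hi hj, g1x _ (hM.orth _ _ _ _ _ hj), add_zero]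
  · intro z
    obtain ⟨h1, h2, h3⟩ := rv_mem hM H z
    have hm : ((0, (rv hM H z).2) : M.E × M.E) ∈ refC M J s x := ⟨by simp, h2, h3⟩
    have hz : z = ι (rv hM H z).1 + rmk hM H _ hm := by
      apply rv_inj hM H
      rw [map_add, rvι, rv_mk, h1]; simp
    have hx2 : M.φ x x (rv hM H z).2 = 0 := by rw [← h2, xx_pJ hM H]
    conv_lhs => rw [hz]
    rw [map_add, map_add, rvG, Gx]
    simp only [LinearMap.add_apply, g1x _ h1, g1x _ hx2]
    simp

lemma indec_refl {M : QRep K} (hM : Rel h M) (H : StepOK h x J s h')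
    (hc : M.Cov J s x) (hI : Indec M) : Indec (refl hM H) := by
  have hin : ∀ e : M.E, M.φ x x e = 0 → ((e, 0) : M.E × M.E) ∈ refC M J s x := fun e he =>
    ⟨by simp [he], by simp, by simp⟩
  constructor
  · by_contra hcon
    push Not at hcon
    obtain ⟨e, he⟩ := hI.1
    apply he
    have := faithful hM hM H hc (hom_id M) (hom_zero M M) (by
      intro e he
      have := congrArg (fun z => (rv hM H z).1) (hcon (rmk hM H _ (hin e he)))
      simpa [rv_mk] using this) e
    simpa using this
  · intro G hG hGG
    obtain ⟨g, hg, hgz⟩ := full hM hM H hc G hG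
    have hgg : ∀ e, (g ∘ₗ g) e = g e := by
      apply faithful hM hM H hc (hom_comp hg hg) hg
      intro e he
      have h1 := congrArg (fun z => (rv hM H z).1) (hGG (rmk hM H _ (hin e he)))
      simp only [hgz, rv_mk] at h1
      exact h1
    rcases hI.2 g hg hgg with h0 | h0
    · left
      intro z; apply rv_inj hM H; rw [hgz, h0, h0]; simp
    · right
      intro z; apply rv_inj hM H; rw [hgz, h0, h0]

lemma iso_of_refl {M M' : QRep K} (hM : Rel h M) (hM' : Rel h M') (H : StepOK h x J s h')
    (hc : M.Cov J s x) (hc' : M'.Cov J s x) (hiso : Iso (refl hM H) (refl hM' H)) : Iso M M' := by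
  obtain ⟨F, G, hF, hG, hGF, hFG⟩ := hiso
  obtain ⟨f, hf, hfz⟩ := full hM hM' H hc F hF
  obtain ⟨g, hg, hgz⟩ := full hM' hM H hc' G hG
  refine ⟨f, g, hf, hg, ?_, ?_⟩
  · apply faithful hM hM H hc (hom_comp hf hg) (hom_id M)
    intro e he
    have h1 := congrArg (fun z => (rv hM H z).1)
      (hGF (rmk hM H (e, 0) ⟨by simp [he], by simp, by simp⟩))
    simp only [hgz, hfz, rv_mk] at h1
    exact h1
  · apply faithful hM' hM' H hc' (hom_comp hg hf) (hom_id M')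
    intro e he
    have h1 := congrArg (fun z => (rv hM' H z).1)
      (hFG (rmk hM' H (e, 0) ⟨by simp [he], by simp, by simp⟩))
    simp only [hgz, hfz, rv_mk] at h1
    exact h1

end step3
end QRep

set_option linter.unusedSectionVars false
namespace QRep

section step4
variable {K : Type} [Field K]

lemma finrank_orth {ι E : Type} [DecidableEq ι] [AddCommGroup E] [Module K E] [FiniteDimensional K E]
    (a : ι → E →ₗ[K] E) (h1 : ∀ i e, a i (a i e) = a i e) (h2 : ∀ i j e, i ≠ j → a i (a j e) = 0)
    (S : Finset ι) : Module.finrank K (LinearMap.range (∑ l ∈ S, a l)) =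
      ∑ l ∈ S, Module.finrank K (LinearMap.range (a l)) := by
  induction S using Finset.induction_on with
  | empty =>
    have : LinearMap.range (0 : E →ₗ[K] E) = ⊥ := LinearMap.range_eq_bot.2 rfl
    rw [Finset.sum_empty, this]; simp
  | insert k S hk ih =>
    rw [Finset.sum_insert hk, Finset.sum_insert hk, ← ih]
    set b := ∑ l ∈ S, a l with hb
    have hab : ∀ e, a k (b e) = 0 := by
      intro e
      rw [hb, LinearMap.sum_apply, map_sum]
      exact Finset.sum_eq_zero fun l hl => h2 _ _ _ (by rintro rfl; exact hk hl)
    have hba : ∀ e, b (a k e) = 0 := by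
      intro e
      rw [hb, LinearMap.sum_apply]
      exact Finset.sum_eq_zero fun l hl => h2 _ _ _ (by rintro rfl; exact hk hl)
    have hbb : ∀ e, b (b e) = b e := by
      intro e
      conv_rhs => rw [hb, LinearMap.sum_apply]
      conv_lhs => rw [hb, LinearMap.sum_apply]
      refine Finset.sum_congr rfl fun l hl => ?_
      rw [← hb]
      conv_lhs => rw [hb, LinearMap.sum_apply, map_sum]
      rw [Finset.sum_eq_single l]
      · exact h1 _ _
      · intro m _ hm; exact h2 _ _ _ (Ne.symm hm)
      · intro h; exact (h hl).elim
    have hsup : LinearMap.range (a k + b) = LinearMap.range (a k) ⊔ LinearMap.range b := by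
      apply le_antisymm
      · rintro _ ⟨e, rfl⟩
        exact Submodule.add_mem_sup ⟨e, rfl⟩ ⟨e, rfl⟩
      · apply sup_le
        · rintro _ ⟨e, rfl⟩
          exact ⟨a k e, by simp [h1, hba]⟩
        · rintro _ ⟨e, rfl⟩
          exact ⟨b e, by simp [hab, hbb]⟩
    have hinf : LinearMap.range (a k) ⊓ LinearMap.range b = ⊥ := by
      rw [eq_bot_iff]
      rintro _ ⟨⟨e, rfl⟩, ⟨e', he'⟩⟩
      have : a k (a k e) = 0 := by rw [← he', hab]
      rw [h1] at this
      rw [this]; exact zero_mem _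
    have := Submodule.finrank_sup_add_finrank_inf_eq (LinearMap.range (a k)) (LinearMap.range b)
    rw [hinf, finrank_bot, add_zero] at this
    rw [hsup, this]

variable {h : Fin 8 → Fin 8 → Bool} {x : Fin 8} {J : Fin 8 → Bool} {s : Fin 8 → ℤ}
  {h' : Fin 8 → Fin 8 → Bool}
variable {M : QRep K} (hM : Rel h M) (H : StepOK h x J s h')

include hM H in
lemma finrank_pJ : Module.finrank K (LinearMap.range (M.pJ J)) =
    ∑ l, if J l = true then M.dim l else 0 := by
  unfold pJ
  rw [finrank_orth]
  · refine Finset.sum_congr rfl fun l _ => ?_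
    by_cases hl : J l = true
    · have e : (if J l = true then M.φ l l else 0) = M.φ l l := if_pos hl
      rw [e, if_pos hl]; rfl
    · have : LinearMap.range (0 : M.E →ₗ[K] M.E) = ⊥ := LinearMap.range_eq_bot.2 rfl
      have e : (if J l = true then M.φ l l else 0) = 0 := if_neg hl
      rw [e, this, if_neg hl]; simp
  · intro i e; split
    · exact idem hM H _ _
    · rfl
  · intro i j e hij
    split
    · split
      · exact hM.orth _ _ _ _ _ (Ne.symm hij)
      · simp
    · rfl

lemma dim_refl_ne (i) (hi : i ≠ x) : (refl hM H).dim i = M.dim i := by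
  unfold dim
  have e1 := LinearEquiv.finrank_eq (Submodule.equivMapOfInjective (rv hM H)
    (fun _ _ h => rv_inj hM H h) (LinearMap.range ((refl hM H).φ i i)))
  have e2 := LinearEquiv.finrank_eq (Submodule.equivMapOfInjective (LinearMap.inl K M.E M.E)
    LinearMap.inl_injective (LinearMap.range (M.φ i i)))
  rw [e1, e2]
  suffices hs : Submodule.map (rv hM H) (LinearMap.range ((refl hM H).φ i i)) =
    Submodule.map (LinearMap.inl K M.E M.E) (LinearMap.range (M.φ i i)) by rw [hs]
  ext z
  constructor
  · rintro ⟨_, ⟨w, rfl⟩, rfl⟩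
    rw [rv_φ, refφ_ij _ _ _ _ hi hi]
    exact ⟨_, ⟨_, rfl⟩, rfl⟩
  · rintro ⟨_, ⟨w, rfl⟩, rfl⟩
    have hm : ((M.φ i i w, 0) : M.E × M.E) ∈ refC M J s x :=
      ⟨hM.orth _ _ _ _ _ hi, by simp, by simp⟩
    refine ⟨_, ⟨rmk hM H (M.φ i i w, 0) hm, rfl⟩, ?_⟩
    rw [rv_φ, refφ_ij _ _ _ _ hi hi, rv_mk]
    simp [idem hM H]

lemma dim_refl_x (hc : M.Cov J s x) :
    (refl hM H).dim x + M.dim x = ∑ l, if J l = true then M.dim l else 0 := by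
  rw [← finrank_pJ hM H]
  unfold dim
  have e1 := LinearEquiv.finrank_eq (Submodule.equivMapOfInjective (rv hM H)
    (fun _ _ h => rv_inj hM H h) (LinearMap.range ((refl hM H).φ x x)))
  let f := (M.psi J s x).domRestrict (LinearMap.range (M.pJ J))
  have e2 := LinearEquiv.finrank_eq (Submodule.equivMapOfInjective
    ((LinearMap.inr K M.E M.E) ∘ₗ (LinearMap.range (M.pJ J)).subtype)
    (LinearMap.inr_injective.comp (Submodule.subtype_injective _)) (LinearMap.ker f))
  have e3 := LinearMap.finrank_range_add_finrank_ker f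
  have e4 : LinearMap.range f = LinearMap.range (M.φ x x) := by
    apply le_antisymm
    · rintro _ ⟨⟨y, hy⟩, rfl⟩
      exact ⟨M.psi J s x y, xx_psi hM H y⟩
    · rintro _ ⟨y, rfl⟩
      obtain ⟨w, hw⟩ := hc y
      exact ⟨⟨M.pJ J w, w, rfl⟩, (psi_pJ hM H w).trans hw⟩
  rw [e4] at e3
  rw [← e3, e1, e2, add_comm]
  congr 1
  suffices hs : Submodule.map (rv hM H) (LinearMap.range ((refl hM H).φ x x)) =
    Submodule.map ((LinearMap.inr K M.E M.E) ∘ₗ (LinearMap.range (M.pJ J)).subtype)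
      (LinearMap.ker f) by rw [hs]
  ext z
  constructor
  · rintro ⟨_, ⟨w, rfl⟩, rfl⟩
    obtain ⟨h1, h2, h3⟩ := rv_mem hM H w
    rw [rv_φ, refφ_xx]
    exact ⟨⟨(rv hM H w).2, _, h2⟩, h3, rfl⟩
  · rintro ⟨⟨_, w, rfl⟩, hw, rfl⟩
    have hm : ((0, M.pJ J w) : M.E × M.E) ∈ refC M J s x := ⟨by simp, pJ_pJ hM H w, hw⟩
    refine ⟨_, ⟨rmk hM H (0, M.pJ J w) hm, rfl⟩, ?_⟩
    rw [rv_φ, refφ_xx, rv_mk]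
    rfl

end step4

/-! checker -/

def all8 (p : Fin 8 → Bool) : Bool := p 0 && p 1 && p 2 && p 3 && p 4 && p 5 && p 6 && p 7

lemma all8_spec {p : Fin 8 → Bool} (hp : all8 p = true) (i : Fin 8) : p i = true := by
  simp only [all8, Bool.and_eq_true] at hp
  obtain ⟨⟨⟨⟨⟨⟨⟨h0, h1⟩, h2⟩, h3⟩, h4⟩, h5⟩, h6⟩, h7⟩ := hp
  fin_cases i <;> assumption

def any8 (p : Fin 8 → Bool) : Bool := p 0 || p 1 || p 2 || p 3 || p 4 || p 5 || p 6 || p 7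

lemma any8_spec {p : Fin 8 → Bool} (hp : any8 p = true) : ∃ i, p i = true := by
  simp only [any8, Bool.or_eq_true] at hp
  rcases hp with ((((((h | h) | h) | h) | h) | h) | h) | h <;> exact ⟨_, h⟩

def sum8 (f : Fin 8 → ℤ) : ℤ := f 0 + f 1 + f 2 + f 3 + f 4 + f 5 + f 6 + f 7

lemma sum8_spec (f : Fin 8 → ℤ) : ∑ i, f i = sum8 f := by
  simp only [sum8, Fin.sum_univ_eight]

def adj (m : ℕ) (i j : Fin 8) : Bool := m.testBit (8 * i.val + j.val)
def inJ (m : ℕ) (i : Fin 8) : Bool := m.testBit i.val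
def sg (m : ℕ) (i : Fin 8) : ℤ := if m.testBit i.val then -1 else 1
def lam (l : List ℤ) (i : Fin 8) : ℤ := l.getD i.val 0

def ne8 (i j : Fin 8) : Bool := !(Nat.beq i.val j.val)

lemma ne8_spec {i j : Fin 8} (h : i ≠ j) : ne8 i j = true := by
  have : ¬ (Nat.beq i.val j.val = true) := by rw [Nat.beq_eq]; exact fun e => h (Fin.ext e)
  rw [ne8, Bool.not_eq_true', ← Bool.not_eq_true]; exact this

/-- implication -/
def imp (a b : Bool) : Bool := !a || b

lemma imp_spec {a b : Bool} (h : imp a b = true) (ha : a = true) : b = true := by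
  subst ha; simpa [imp] using h

structure Step where
  x : Fin 8
  J : ℕ
  S : ℕ
  h' : ℕ
  l : List ℤ

def checkStep (h : ℕ) (x : Fin 8) (J S h' : ℕ) : Bool :=
  all8 (fun i => adj h i i && adj h' i i) &&
  all8 (fun k => imp (ne8 k x) (!(adj h x k))) &&
  (!(inJ J x)) &&
  all8 (fun j => imp (inJ J j) (adj h j x && adj h' x j)) &&
  all8 (fun i => imp (ne8 i x && !(inJ J i) && adj h i x) (any8 fun l => inJ J l && adj h i l)) &&
  all8 (fun i => imp (inJ J i) (all8 fun j => imp (inJ J j && ne8 i j) (!(adj h i j)))) &&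
  all8 (fun i => imp (ne8 i x) (all8 fun j => imp (ne8 j x) (adj h' i j == adj h i j))) &&
  all8 (fun i => imp (ne8 i x && adj h' i x && adj h i x)
    (decide (sum8 (fun l => if inJ J l = true ∧ adj h i l = true then sg S l else 0) = 0))) &&
  all8 (fun j => imp (ne8 j x && adj h' x j) (all8 fun k => imp (ne8 k x && adj h' j k) (all8 fun l =>
    imp (inJ J l && adj h l k) (adj h l j == adj h' x k)))) &&
  all8 (fun j => imp (ne8 j x && adj h' j x) (all8 fun i => imp (ne8 i x && adj h' i j) (all8 fun l =>
    imp (inJ J l && adj h i l) (adj h j l == adj h' i x)))) &&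
  all8 (fun i => imp (ne8 i x && adj h' i x) (all8 fun k => imp (ne8 k x && adj h' x k && adj h i k)
    (decide (sum8 (fun l => if inJ J l = true ∧ adj h i l = true ∧ adj h l k = true then 1 else 0)
      = 1)))) &&
  all8 (fun j => imp (ne8 j x) (!(adj h' x j && adj h' j x)))

lemma checkStep_spec {h : ℕ} {x : Fin 8} {J S h' : ℕ} (H : checkStep h x J S h' = true) :
    StepOK (adj h) x (inJ J) (sg S) (adj h') := by
  simp only [checkStep, Bool.and_eq_true] at H
  obtain ⟨⟨⟨⟨⟨⟨⟨⟨⟨⟨⟨h1, h2⟩, h3⟩, h4⟩, h5⟩, h6⟩, h7⟩, h8⟩, h9⟩, h10⟩, h11⟩, h12⟩ := H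
  replace h1 := fun i => all8_spec h1 i
  simp only [Bool.and_eq_true] at h1
  constructor
  · exact fun i => (h1 i).1
  · exact fun i => (h1 i).2
  · intro i; unfold sg; split <;> rfl
  · intro k hk
    simpa using imp_spec (all8_spec h2 k) (ne8_spec hk)
  · simpa using h3
  · intro j hj
    have := imp_spec (all8_spec h4 j) hj
    simp only [Bool.and_eq_true] at this
    exact this.1
  · intro i hi hJ hx
    obtain ⟨l, hl⟩ := any8_spec (imp_spec (all8_spec h5 i) (by simp [ne8_spec hi, hJ, hx]))
    exact ⟨l, by simpa using hl⟩
  · intro i j hi hj hij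
    simpa using imp_spec (all8_spec (imp_spec (all8_spec h6 i) hi) j) (by simp [hj, ne8_spec hij])
  · intro j hj
    have := imp_spec (all8_spec h4 j) hj
    simp only [Bool.and_eq_true] at this
    exact this.2
  · intro i j hi hj
    simpa using imp_spec (all8_spec (imp_spec (all8_spec h7 i) (ne8_spec hi)) j) (ne8_spec hj)
  · intro i hi ha hb
    rw [sum8_spec]
    simpa using imp_spec (all8_spec h8 i) (by simp [ne8_spec hi, ha, hb])
  · intro j k l hj hk a b c d
    simpa using imp_spec (all8_spec (imp_spec (all8_spec (imp_spec (all8_spec h9 j)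
      (by simp [ne8_spec hj, a])) k) (by simp [ne8_spec hk, b])) l) (by simp [c, d])
  · intro i j l hi hj a b c d
    simpa using imp_spec (all8_spec (imp_spec (all8_spec (imp_spec (all8_spec h10 j)
      (by simp [ne8_spec hj, b])) i) (by simp [ne8_spec hi, a])) l) (by simp [c, d])
  · intro i k hi hk a b c
    rw [sum8_spec]
    simpa using imp_spec (all8_spec (imp_spec (all8_spec h11 i)
      (by simp [ne8_spec hi, a])) k) (by simp [ne8_spec hk, b, c])
  · intro j hj a b
    have := imp_spec (all8_spec h12 j) (ne8_spec hj)
    simp [a, b] at this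

def pull (x : Fin 8) (J : ℕ) (l : List ℤ) (i : Fin 8) : ℤ :=
  if Nat.beq i.val x.val then - lam l x else if inJ J i then lam l i + lam l x else lam l i

def check : ℕ → List ℤ → List Step → Bool
  | _, l, [] => all8 (fun i => decide (0 ≤ lam l i))
  | h, l, st :: t => checkStep h st.x st.J st.S st.h' &&
      all8 (fun i => decide (pull st.x st.J st.l i ≤ lam l i)) && check st.h' st.l t

structure Good (K : Type) [Field K] (h : ℕ) (l : List ℤ) (M : QRep K) : Prop where
  rel : Rel (adj h) M
  ind : Indec M
  neg : ∑ i, lam l i * (M.dim i : ℤ) < 0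

theorem finite_of_check (K : Type) [Field K] (t : List Step) : ∀ (h : ℕ) (l : List ℤ),
    check h l t = true → ∃ (N : ℕ) (c : QRep K → Fin N), ∀ M M' : QRep K, Good K h l M →
      Good K h l M' → c M = c M' → Iso M M' := by
  induction t with
  | nil =>
    intro h l hc
    refine ⟨1, fun _ => 0, fun M M' hM _ _ => ?_⟩
    exfalso
    have := hM.neg
    have h2 : 0 ≤ ∑ i, lam l i * (M.dim i : ℤ) := Finset.sum_nonneg fun i _ =>
      mul_nonneg (by simpa using all8_spec hc i) (Int.natCast_nonneg _)
    omega
  | cons st t ih =>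
    intro h l hc
    simp only [check, Bool.and_eq_true] at hc
    obtain ⟨⟨hc1, hc2⟩, hc3⟩ := hc
    have H := checkStep_spec hc1
    obtain ⟨N, c, hN⟩ := ih _ _ hc3
    classical
    refine ⟨N + 1, fun M => if hM : Rel (adj h) M ∧ M.Cov (inJ st.J) (sg st.S) st.x then
      (c (refl hM.1 H)).succ else 0, ?_⟩
    have good : ∀ M (hM : Good K h l M), M.Cov (inJ st.J) (sg st.S) st.x →
        Good K st.h' st.l (refl hM.rel H) := by
      intro M hM hcov
      refine ⟨rel_refl _ _, indec_refl _ _ hcov hM.ind, ?_⟩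
      refine lt_of_le_of_lt ?_ hM.neg
      have hx := dim_refl_x hM.rel H hcov
      have e1 : ∑ i, lam st.l i * ((refl hM.rel H).dim i : ℤ) =
          ∑ i, pull st.x st.J st.l i * (M.dim i : ℤ) := by
        have hx' : ((refl hM.rel H).dim st.x : ℤ) =
          (∑ i, if inJ st.J i = true then (M.dim i : ℤ) else 0) - M.dim st.x := by
          rw [eq_sub_iff_add_eq]; exact_mod_cast hx
        rw [← Finset.add_sum_erase _ _ (Finset.mem_univ st.x), hx']
        rw [← Finset.add_sum_erase (a := st.x) (f := fun i => if inJ st.J i = true then (M.dim i : ℤ) else 0) _ (Finset.mem_univ st.x)]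
        rw [← Finset.add_sum_erase (a := st.x) (f := fun i => pull st.x st.J st.l i * (M.dim i : ℤ)) _ (Finset.mem_univ st.x)]
        rw [if_neg (by rw [H.xJ]; simp), zero_add]
        have e2 : pull st.x st.J st.l st.x = - lam st.l st.x := by simp [pull]
        have e3 : ∑ i ∈ Finset.univ.erase st.x, pull st.x st.J st.l i * (M.dim i : ℤ) =
            ∑ i ∈ Finset.univ.erase st.x, lam st.l i * (M.dim i : ℤ) + lam st.l st.x *
            ∑ i ∈ Finset.univ.erase st.x, if inJ st.J i = true then (M.dim i : ℤ) else 0 := by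
          rw [Finset.mul_sum, ← Finset.sum_add_distrib]
          refine Finset.sum_congr rfl fun i hi => ?_
          have hi' : ¬ (Nat.beq i.val st.x.val = true) := by
            rw [Nat.beq_eq]; exact fun e => Finset.ne_of_mem_erase hi (Fin.ext e)
          rw [pull, if_neg hi']
          split <;> ring
        have e4 : ∑ i ∈ Finset.univ.erase st.x, lam st.l i * ((refl hM.rel H).dim i : ℤ) =
            ∑ i ∈ Finset.univ.erase st.x, lam st.l i * (M.dim i : ℤ) :=
          Finset.sum_congr rfl fun i hi => by
            rw [dim_refl_ne _ _ _ (Finset.ne_of_mem_erase hi)]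
        rw [e2, e3, e4]; ring
      rw [e1]
      refine Finset.sum_le_sum fun i _ => mul_le_mul_of_nonneg_right ?_ (Int.natCast_nonneg _)
      simpa using all8_spec hc2 i
    intro M M' hM hM' hcc
    by_cases h1 : M.Cov (inJ st.J) (sg st.S) st.x
    · by_cases h2 : M'.Cov (inJ st.J) (sg st.S) st.x
      · simp only [hM.rel, hM'.rel, h1, h2, and_self, dite_true, Fin.succ_inj] at hcc
        exact iso_of_refl hM.rel hM'.rel H h1 h2 (hN _ _ (good M hM h1) (good M' hM' h2) hcc)
      · simp only [hM.rel, hM'.rel, h1, h2, and_self, and_false, dite_true, dite_false] at hcc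
        exact (Fin.succ_ne_zero _ hcc).elim
    · by_cases h2 : M'.Cov (inJ st.J) (sg st.S) st.x
      · simp only [hM.rel, hM'.rel, h1, h2, and_self, and_false, dite_true, dite_false] at hcc
        exact (Fin.succ_ne_zero _ hcc.symm).elim
      · exact iso_notCov hM.rel hM'.rel H hM.ind hM'.ind h1 h2

def table : List Step :=
  [⟨7, 72, 64, 14429639240395321087, [-1, -1, -1, -2, -1, -1, -2, 1]⟩,
   ⟨3, 128, 0, 13853178491312596727, [-1, -1, -1, 2, -1, -1, -2, -1]⟩,
   ⟨6, 160, 128, 9286457824458893047, [-1, -1, -1, 2, -1, -3, 2, -3]⟩,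
   ⟨5, 80, 64, 9277679186183767799, [-1, -1, -1, 2, -4, 3, -1, -3]⟩,
   ⟨4, 32, 0, 9277662556070397671, [-1, -1, -1, 2, 4, -1, -1, -3]⟩,
   ⟨7, 76, 64, 14717869616533915367, [-1, -1, -4, -1, 4, -1, -4, 3]⟩,
   ⟨2, 128, 0, 14429639240395309795, [-1, -1, 4, -1, 4, -1, -4, -1]⟩,
   ⟨3, 128, 0, 13853178491312589547, [-1, -1, 4, 1, 4, -1, -4, -2]⟩,
   ⟨6, 160, 128, 9286457824458869483, [-1, -1, 4, 1, 4, -5, 4, -6]⟩,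
   ⟨5, 80, 0, 9277679186183752395, [-1, -1, 4, 1, -1, 5, -1, -6]⟩,
   ⟨4, 32, 0, 9277662556070382283, [-1, -1, 4, 1, 1, 4, -1, -6]⟩,
   ⟨7, 76, 64, 14717869616533867211, [-1, -1, -2, -5, 1, 4, -7, 6]⟩,
   ⟨2, 128, 0, 14429639240395262671, [-1, -1, 2, -5, 1, 4, -7, 4]⟩,
   ⟨3, 130, 128, 13853178491346092751, [-1, -6, 2, 5, 1, 4, -7, -1]⟩,
   ⟨1, 8, 0, 13853178491312589517, [-1, 6, 2, -1, 1, 4, -7, -1]⟩,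
   ⟨6, 160, 0, 9286457824458869389, [-1, 6, 2, -1, 1, -3, 7, -8]⟩,
   ⟨5, 80, 0, 9277679186183752333, [-1, 6, 2, -1, -2, 3, 4, -8]⟩,
   ⟨4, 32, 0, 9277662556070382221, [-1, 6, 2, -1, 2, 1, 4, -8]⟩,
   ⟨7, 76, 8, 14717869616533867149, [-1, 6, -6, -9, 2, 1, -4, 8]⟩,
   ⟨2, 128, 0, 14429639240395262601, [-1, 6, 6, -9, 2, 1, -4, 2]⟩,
   ⟨3, 130, 0, 13853178491346092673, [-1, -3, 6, 9, 2, 1, -4, -7]⟩,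
   ⟨1, 8, 0, 13853178491312589441, [-1, 3, 6, 6, 2, 1, -4, -7]⟩,
   ⟨6, 160, 0, 9286457824458869441, [-1, 3, 6, 6, 2, -3, 4, -11]⟩,
   ⟨5, 80, 0, 9277679186183752417, [-1, 3, 6, 6, -1, 3, 1, -11]⟩,
   ⟨4, 32, 0, 9277662556070382321, [-1, 3, 6, 6, 1, 2, 1, -11]⟩,
   ⟨7, 76, 0, 14717869616533867121, [-1, 3, -5, -5, 1, 2, -10, 11]⟩,
   ⟨2, 128, 0, 14429639240395262577, [-1, 3, 5, -5, 1, 2, -10, 6]⟩,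
   ⟨3, 130, 0, 13853178491346092657, [-1, -2, 5, 5, 1, 2, -10, 1]⟩,
   ⟨1, 8, 0, 13853178491312589425, [-1, 2, 5, 3, 1, 2, -10, 1]⟩,
   ⟨6, 160, 0, 9286457824458869297, [-1, 2, 5, 3, 1, -8, 10, -9]⟩,
   ⟨5, 80, 0, 9277679186183752209, [-1, 2, 5, 3, -7, 8, 2, -9]⟩,
   ⟨4, 33, 0, 9277662560365349377, [-8, 2, 5, 3, 7, 1, 2, -9]⟩,
   ⟨0, 16, 0, 9277662556070382321, [8, 2, 5, 3, -1, 1, 2, -9]⟩,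
   ⟨7, 76, 0, 14717869616533867121, [7, 2, -4, -6, -1, 1, -7, 9]⟩,
   ⟨2, 128, 0, 14429639240395262577, [7, 2, 4, -6, -1, 1, -7, 5]⟩,
   ⟨3, 130, 0, 13853178491346092657, [7, -4, 4, 6, -1, 1, -7, -1]⟩,
   ⟨1, 8, 0, 13853178491312589425, [7, 4, 4, 2, -1, 1, -7, -1]⟩,
   ⟨6, 160, 0, 9286457824458869297, [7, 4, 4, 2, -1, -6, 7, -8]⟩,
   ⟨5, 80, 0, 9277679186183752209, [7, 4, 4, 2, -7, 6, 1, -8]⟩,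
   ⟨4, 33, 0, 9277662560365349377, [0, 4, 4, 2, 7, -1, 1, -8]⟩,
   ⟨0, 16, 0, 9277662556070382321, [0, 4, 4, 2, 7, -1, 1, -8]⟩,
   ⟨7, 76, 0, 14717869616533867121, [0, 4, -4, -6, 7, -1, -7, 8]⟩,
   ⟨2, 128, 0, 14429639240395262577, [0, 4, 4, -6, 7, -1, -7, 4]⟩,
   ⟨3, 130, 0, 13853178491346092657, [0, -2, 4, 6, 7, -1, -7, -2]⟩,
   ⟨1, 8, 0, 13853178491312589425, [0, 2, 4, 4, 7, -1, -7, -2]⟩,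
   ⟨6, 160, 0, 9286457824458869297, [0, 2, 4, 4, 7, -8, 7, -9]⟩,
   ⟨5, 80, 0, 9277679186183752209, [0, 2, 4, 4, -1, 8, -1, -9]⟩,
   ⟨4, 33, 0, 9277662560365349377, [-1, 2, 4, 4, 1, 7, -1, -9]⟩,
   ⟨0, 16, 0, 9277662556070382321, [1, 2, 4, 4, 0, 7, -1, -9]⟩,
   ⟨7, 76, 0, 14717869616533867121, [1, 2, -5, -5, 0, 7, -10, 9]⟩,
   ⟨2, 128, 0, 14429639240395262577, [1, 2, 5, -5, 0, 7, -10, 4]⟩,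
   ⟨3, 130, 0, 13853178491346092657, [1, -3, 5, 5, 0, 7, -10, -1]⟩,
   ⟨1, 8, 0, 13853178491312589425, [1, 3, 5, 2, 0, 7, -10, -1]⟩,
   ⟨6, 160, 0, 9286457824458869297, [1, 3, 5, 2, 0, -3, 10, -11]⟩,
   ⟨5, 80, 0, 9277679186183752209, [1, 3, 5, 2, -3, 3, 7, -11]⟩,
   ⟨4, 33, 0, 9277662560365349377, [-2, 3, 5, 2, 3, 0, 7, -11]⟩,
   ⟨0, 16, 0, 9277662556070382321, [2, 3, 5, 2, 1, 0, 7, -11]⟩,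
   ⟨7, 76, 0, 14717869616533867121, [2, 3, -6, -9, 1, 0, -4, 11]⟩,
   ⟨2, 128, 0, 14429639240395262577, [2, 3, 6, -9, 1, 0, -4, 5]⟩,
   ⟨3, 130, 0, 13853178491346092657, [2, -6, 6, 9, 1, 0, -4, -4]⟩,
   ⟨1, 8, 0, 13853178491312589425, [2, 6, 6, 3, 1, 0, -4, -4]⟩,
   ⟨6, 160, 0, 9286457824458869297, [2, 5, 6, 3, 1, -4, 4, -8]⟩,
   ⟨5, 80, 0, 9277679186183752209, [2, 5, 6, 3, -3, 4, 0, -8]⟩,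
   ⟨4, 33, 0, 9277662560365349377, [-1, 5, 6, 3, 3, 1, 0, -8]⟩,
   ⟨0, 16, 0, 9277662556070382321, [1, 5, 6, 3, 2, 1, 0, -8]⟩,
   ⟨7, 76, 0, 14717869616533867121, [1, 5, -2, -5, 2, 1, -8, 8]⟩,
   ⟨2, 128, 0, 14429639240395262577, [1, 5, 2, -5, 2, 1, -8, 6]⟩,
   ⟨3, 130, 0, 13853178491346092657, [1, 0, 2, 5, 2, 1, -8, 1]⟩,
   ⟨1, 8, 0, 13853178491312589425, [1, 0, 2, 5, 2, 1, -8, 1]⟩,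
   ⟨6, 160, 0, 9286457824458869297, [1, 0, 2, 5, 2, -7, 8, -7]⟩,
   ⟨5, 80, 0, 9277679186183752209, [1, 0, 2, 5, -5, 7, 1, -7]⟩,
   ⟨4, 33, 0, 9277662560365349377, [-4, 0, 2, 5, 5, 2, 1, -7]⟩,
   ⟨0, 16, 0, 9277662556070382321, [4, 0, 2, 5, 1, 2, 1, -7]⟩,
   ⟨7, 76, 0, 14717869616533867121, [3, 0, -5, -2, 1, 2, -6, 7]⟩,
   ⟨2, 128, 0, 14429639240395262577, [3, 0, 5, -2, 1, 2, -6, 2]⟩,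
   ⟨3, 130, 0, 13853178491346092657, [3, -2, 5, 2, 1, 2, -6, 0]⟩,
   ⟨1, 8, 0, 13853178491312589425, [3, 2, 5, 0, 1, 2, -6, 0]⟩,
   ⟨6, 160, 0, 9286457824458869297, [3, 2, 5, 0, 1, -4, 6, -6]⟩,
   ⟨5, 80, 0, 9277679186183752209, [3, 2, 5, 0, -3, 4, 2, -6]⟩,
   ⟨4, 33, 0, 9277662560365349377, [0, 2, 5, 0, 3, 1, 2, -6]⟩,
   ⟨0, 16, 0, 9277662556070382321, [0, 2, 5, 0, 3, 1, 2, -6]⟩,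
   ⟨7, 76, 0, 14717869616533867121, [0, 2, -1, -6, 3, 1, -4, 6]⟩,
   ⟨2, 128, 0, 14429639240395262577, [0, 2, 1, -6, 3, 1, -4, 5]⟩,
   ⟨3, 130, 0, 13853178491346092657, [0, -4, 1, 6, 3, 1, -4, -1]⟩,
   ⟨1, 8, 0, 13853178491312589425, [0, 4, 1, 2, 3, 1, -4, -1]⟩,
   ⟨6, 160, 0, 9286457824458869297, [0, 3, 1, 2, 3, -3, 4, -5]⟩,
   ⟨5, 80, 0, 9277679186183752209, [0, 3, 1, 2, 0, 3, 1, -5]⟩,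
   ⟨4, 33, 0, 9277662560365349377, [0, 3, 1, 2, 0, 3, 1, -5]⟩,
   ⟨0, 16, 0, 9277662556070382321, [0, 3, 1, 2, 0, 3, 1, -5]⟩,
   ⟨7, 76, 0, 14717869616533867121, [0, 3, -4, -3, 0, 3, -4, 5]⟩,
   ⟨2, 128, 0, 14429639240395262577, [0, 3, 4, -3, 0, 3, -4, 1]⟩,
   ⟨3, 130, 0, 13853178491346092657, [0, 0, 4, 3, 0, 3, -4, -2]⟩,
   ⟨1, 8, 0, 13853178491312589425, [0, 0, 4, 3, 0, 3, -4, -2]⟩,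
   ⟨6, 160, 0, 9286457824458869297, [0, 0, 4, 3, 0, -1, 4, -6]⟩,
   ⟨5, 80, 0, 9277679186183752209, [0, 0, 4, 3, -1, 1, 3, -6]⟩,
   ⟨4, 33, 0, 9277662560365349377, [-1, 0, 4, 3, 1, 0, 3, -6]⟩,
   ⟨0, 16, 0, 9277662556070382321, [1, 0, 4, 3, 0, 0, 3, -6]⟩,
   ⟨7, 76, 0, 14717869616533867121, [1, 0, -2, -3, 0, 0, -3, 6]⟩,
   ⟨2, 128, 0, 14429639240395262577, [1, 0, 2, -3, 0, 0, -3, 4]⟩,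
   ⟨3, 130, 0, 13853178491346092657, [1, -3, 2, 3, 0, 0, -3, 1]⟩,
   ⟨1, 8, 0, 13853178491312589425, [1, 3, 2, 0, 0, 0, -3, 1]⟩,
   ⟨6, 160, 0, 9286457824458869297, [1, 2, 2, 0, 0, -3, 3, -2]⟩,
   ⟨5, 80, 0, 9277679186183752209, [1, 2, 2, 0, -3, 3, 0, -2]⟩,
   ⟨4, 33, 0, 9277662560365349377, [-2, 2, 2, 0, 3, 0, 0, -2]⟩,
   ⟨0, 16, 0, 9277662556070382321, [2, 2, 2, 0, 1, 0, 0, -2]⟩,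
   ⟨7, 76, 0, 14717869616533867121, [1, 2, 0, -2, 1, 0, -2, 2]⟩,
   ⟨2, 128, 0, 14429639240395262577, [1, 2, 0, -2, 1, 0, -2, 2]⟩,
   ⟨3, 130, 0, 13853178491346092657, [1, 0, 0, 2, 1, 0, -2, 0]⟩,
   ⟨1, 8, 0, 13853178491312589425, [1, 0, 0, 2, 1, 0, -2, 0]⟩,
   ⟨6, 160, 0, 9286457824458869297, [1, 0, 0, 2, 1, -2, 2, -2]⟩,
   ⟨5, 80, 0, 9277679186183752209, [1, 0, 0, 2, -1, 2, 0, -2]⟩,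
   ⟨4, 33, 0, 9277662560365349377, [0, 0, 0, 2, 1, 1, 0, -2]⟩,
   ⟨0, 16, 0, 9277662556070382321, [0, 0, 0, 2, 1, 1, 0, -2]⟩,
   ⟨7, 76, 0, 14717869616533867121, [0, 0, -2, 0, 1, 1, -2, 2]⟩,
   ⟨2, 128, 0, 14429639240395262577, [0, 0, 2, 0, 1, 1, -2, 0]⟩,
   ⟨3, 130, 0, 13853178491346092657, [0, 0, 2, 0, 1, 1, -2, 0]⟩,
   ⟨1, 8, 0, 13853178491312589425, [0, 0, 2, 0, 1, 1, -2, 0]⟩,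
   ⟨6, 160, 0, 9286457824458869297, [0, 0, 2, 0, 1, -1, 2, -2]⟩,
   ⟨5, 80, 0, 9277679186183752209, [0, 0, 2, 0, 0, 1, 1, -2]⟩,
   ⟨4, 33, 0, 9277662560365349377, [0, 0, 2, 0, 0, 1, 1, -2]⟩,
   ⟨0, 16, 0, 9277662556070382321, [0, 0, 2, 0, 0, 1, 1, -2]⟩,
   ⟨7, 76, 0, 14717869616533867121, [0, 0, 0, -2, 0, 1, -1, 2]⟩,
   ⟨2, 128, 0, 14429639240395262577, [0, 0, 0, -2, 0, 1, -1, 2]⟩,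
   ⟨3, 130, 0, 13853178491346092657, [0, -2, 0, 2, 0, 1, -1, 0]⟩,
   ⟨1, 8, 0, 13853178491312589425, [0, 2, 0, 0, 0, 1, -1, 0]⟩,
   ⟨6, 160, 0, 9286457824458869297, [0, 1, 0, 0, 0, 0, 1, -1]⟩,
   ⟨5, 80, 0, 9277679186183752209, [0, 1, 0, 0, 0, 0, 1, -1]⟩,
   ⟨4, 33, 0, 9277662560365349377, [0, 1, 0, 0, 0, 0, 1, -1]⟩,
   ⟨0, 16, 0, 9277662556070382321, [0, 1, 0, 0, 0, 0, 1, -1]⟩,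
   ⟨7, 76, 0, 14717869616533867121, [0, 1, -1, -1, 0, 0, 0, 1]⟩,
   ⟨2, 128, 0, 14429639240395262577, [0, 1, 1, -1, 0, 0, 0, 0]⟩,
   ⟨3, 130, 0, 13853178491346092657, [0, 0, 1, 1, 0, 0, 0, -1]⟩,
   ⟨1, 8, 0, 13853178491312589425, [0, 0, 1, 1, 0, 0, 0, -1]⟩,
   ⟨6, 160, 0, 9286457824458869297, [0, 0, 1, 1, 0, 0, 0, -1]⟩,
   ⟨5, 80, 0, 9277679186183752209, [0, 0, 1, 1, 0, 0, 0, -1]⟩,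
   ⟨4, 33, 0, 9277662560365349377, [0, 0, 1, 1, 0, 0, 0, -1]⟩,
   ⟨0, 16, 0, 9277662556070382321, [0, 0, 1, 1, 0, 0, 0, -1]⟩,
   ⟨7, 76, 0, 14717869616533867121, [0, 0, 0, 0, 0, 0, -1, 1]⟩,
   ⟨2, 128, 0, 14429639240395262577, [0, 0, 0, 0, 0, 0, -1, 1]⟩,
   ⟨3, 130, 0, 13853178491346092657, [0, 0, 0, 0, 0, 0, -1, 1]⟩,
   ⟨1, 8, 0, 13853178491312589425, [0, 0, 0, 0, 0, 0, -1, 1]⟩,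
   ⟨6, 160, 0, 9286457824458869297, [0, 0, 0, 0, 0, -1, 1, 0]⟩,
   ⟨5, 80, 0, 9277679186183752209, [0, 0, 0, 0, -1, 1, 0, 0]⟩,
   ⟨4, 33, 0, 9277662560365349377, [-1, 0, 0, 0, 1, 0, 0, 0]⟩,
   ⟨0, 16, 0, 9277662556070382321, [1, 0, 0, 0, 0, 0, 0, 0]⟩]

def lad : ℕ := 9277662556075126527

theorem table_ok : check lad [-1, -1, -1, -1, -1, -1, -1, -1] table = true := by
  decide +kernel

end QRep

set_option linter.style.haveILetI false
section transfer
open QRep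

variable {K : Type} [Field K] {n : ℕ}

/-- the opposite ring of the ladder -/
abbrev LR (K : Type) [Field K] (n : ℕ) : Type := (CommLadder K n)ᵐᵒᵖ

instance instFinLad (K : Type) [Field K] (n : ℕ) : FiniteDimensional K (CommLadder K n) :=
  inferInstanceAs (FiniteDimensional K (ladderSubalgebra K n))

instance instFinLR (K : Type) [Field K] (n : ℕ) : FiniteDimensional K (LR K n) :=
  Module.Finite.equiv (MulOpposite.opLinearEquiv K : CommLadder K n ≃ₗ[K] (CommLadder K n)ᵐᵒᵖ)

/-- `K`-structure on a module -/
abbrev kmod (K : Type) [Field K] (n : ℕ) (M : Type) [AddCommGroup M] [Module (LR K n) M] :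
    Module K M := Module.compHom M (algebraMap K (LR K n))

lemma kmod_tower (M : Type) [AddCommGroup M] [Module (LR K n) M] :
    letI := kmod K n M
    IsScalarTower K (LR K n) M := by
  letI := kmod K n M
  exact IsScalarTower.of_algebraMap_smul (fun _ _ => rfl)

lemma kmod_fin (M : Type) [AddCommGroup M] [Module (LR K n) M] [Module.Finite (LR K n) M] :
    letI := kmod K n M
    FiniteDimensional K M := by
  letI := kmod K n M
  haveI := kmod_tower (K := K) (n := n) M
  exact Module.Finite.trans (LR K n) M

/-- underlying matrix -/
def mat (a : CommLadder K n) : Matrix (Fin 2 × Fin n) (Fin 2 × Fin n) K := a.1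

lemma mat_ext {a b : CommLadder K n} (hab : ∀ p q, mat a p q = mat b p q) : a = b :=
  Subtype.ext (Matrix.ext hab)
lemma mat_mul (a b : CommLadder K n) : mat (a * b) = mat a * mat b := rfl
lemma mat_one : mat (1 : CommLadder K n) = 1 := rfl
lemma mat_zero : mat (0 : CommLadder K n) = 0 := rfl
lemma mat_add (a b : CommLadder K n) : mat (a + b) = mat a + mat b := rfl
lemma mat_smul (c : K) (b : CommLadder K n) : mat (c • b) = c • mat b := rfl
lemma mat_sum {ι : Type} (s : Finset ι) (f : ι → CommLadder K n) :
    mat (∑ i ∈ s, f i) = ∑ i ∈ s, mat (f i) :=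
  map_sum (⟨⟨mat, rfl⟩, fun _ _ => rfl⟩ : CommLadder K n →+ _) f s
lemma mat_supp (a : CommLadder K n) (p q) (hpq : ¬ p ≤ q) : mat a p q = 0 := a.2 p q hpq

def code (n : ℕ) (p : Fin 2 × Fin n) : Fin 8 := Fin.ofNat 8 (4 * p.1.val + p.2.val)

lemma code_inj (hn : n ≤ 4) : ∀ p q : Fin 2 × Fin n, code n p = code n q → p = q := by
  interval_cases n <;> decide +kernel

lemma code_le (hn : n ≤ 4) : ∀ p q : Fin 2 × Fin n, p ≤ q ↔ adj lad (code n p) (code n q) = true := by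
  interval_cases n <;> decide +kernel

lemma code_conv (hn : n ≤ 4) : ∀ (p q : Fin 2 × Fin n) (j : Fin 8), adj lad (code n p) j = true →
    adj lad j (code n q) = true → ∃ z, code n z = j ∧ p ≤ z ∧ z ≤ q := by
  interval_cases n <;> decide +kernel

open Classical in
/-- matrix units -/
def eV (K : Type) [Field K] (n : ℕ) (i j : Fin 8) : CommLadder K n :=
  ⟨fun p q => if code n p = i ∧ code n q = j ∧ p ≤ q then 1 else 0, fun p q hpq => by
    simp [hpq]⟩

open Classical in
lemma mat_eV (i j : Fin 8) (p q) : mat (eV K n i j) p q =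
    if code n p = i ∧ code n q = j ∧ p ≤ q then 1 else 0 := rfl

lemma eV_one (hn : n ≤ 4) : ∑ i, eV K n i i = 1 := by
  classical
  apply mat_ext; intro p q
  rw [mat_sum, Matrix.sum_apply, mat_one, Finset.sum_eq_single (code n p)]
  · rw [mat_eV]
    by_cases hpq : p = q
    · subst hpq; simp
    · rw [Matrix.one_apply_ne hpq, if_neg]
      rintro ⟨-, h2, -⟩
      exact hpq (code_inj hn _ _ h2.symm)
  · intro b _ hb; rw [mat_eV, if_neg]; rintro ⟨h1, -⟩; exact hb h1.symm
  · simp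

lemma eV_orth (i j k l : Fin 8) (hjk : j ≠ k) : eV K n i j * eV K n k l = 0 := by
  classical
  apply mat_ext; intro p q
  rw [mat_mul, mat_zero, Matrix.mul_apply]
  refine Finset.sum_eq_zero fun z _ => ?_
  rw [mat_eV, mat_eV]
  by_cases h1 : code n z = j
  · rw [if_neg (c := code n z = k ∧ _), mul_zero]
    rintro ⟨h2, -⟩; exact hjk (h1.symm.trans h2)
  · rw [if_neg, zero_mul]; rintro ⟨-, h2, -⟩; exact h1 h2

lemma eV_comp (hn : n ≤ 4) (i j k : Fin 8) (hij : adj lad i j = true) (hjk : adj lad j k = true) :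
    eV K n i j * eV K n j k = eV K n i k := by
  classical
  apply mat_ext; intro p q
  rw [mat_mul, Matrix.mul_apply]
  by_cases hpq : code n p = i ∧ code n q = k
  · obtain ⟨rfl, rfl⟩ := hpq
    obtain ⟨z, rfl, h1, h2⟩ := code_conv hn p q j hij hjk
    rw [Finset.sum_eq_single z]
    · simp [mat_eV, h1, h2, h1.trans h2]
    · intro b _ hb
      rw [mat_eV, if_neg, zero_mul]
      rintro ⟨-, h3, -⟩; exact hb (code_inj hn _ _ h3)
    · simp
  · rw [mat_eV, if_neg (fun h => hpq ⟨h.1, h.2.1⟩)]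
    refine Finset.sum_eq_zero fun z _ => ?_
    rw [mat_eV, mat_eV]
    by_cases h1 : code n p = i
    · rw [if_neg (c := code n z = j ∧ _), mul_zero]
      rintro ⟨-, h2, -⟩; exact hpq ⟨h1, h2⟩
    · rw [if_neg, zero_mul]; rintro ⟨h2, -⟩; exact h1 h2

lemma eV_zero (hn : n ≤ 4) (i j : Fin 8) (hij : adj lad i j = false) : eV K n i j = 0 := by
  apply mat_ext; intro p q
  rw [mat_eV, if_neg]
  · rfl
  · rintro ⟨rfl, rfl, h⟩
    rw [code_le hn, hij] at h; simp at h

lemma eV_span (hn : n ≤ 4) (a : CommLadder K n) :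
    a = ∑ p, ∑ q, mat a p q • eV K n (code n p) (code n q) := by
  classical
  apply mat_ext; intro p q
  simp only [mat_sum, Matrix.sum_apply, mat_smul, Matrix.smul_apply, mat_eV]
  rw [Finset.sum_eq_single p, Finset.sum_eq_single q]
  · by_cases hpq : p ≤ q
    · simp [hpq]
    · rw [mat_supp a p q hpq]; simp
  · intro b _ hb
    rw [if_neg]; · simp
    rintro ⟨-, h, -⟩; exact hb (code_inj hn _ _ h.symm)
  · simp
  · intro b _ hb
    refine Finset.sum_eq_zero fun z _ => ?_
    rw [if_neg]; · simp
    rintro ⟨h, -⟩; exact hb (code_inj hn _ _ h.symm)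
  · simp

lemma op_sum' {ι : Type} (s : Finset ι) (f : ι → CommLadder K n) :
    ∑ i ∈ s, MulOpposite.op (f i) = MulOpposite.op (∑ i ∈ s, f i) :=
  (map_sum (MulOpposite.opAddEquiv : CommLadder K n ≃+ _) f s).symm

lemma lin_of_eV (hn : n ≤ 4) {M M' : Type} [AddCommGroup M] [AddCommGroup M'] [Module (LR K n) M]
    [Module (LR K n) M'] (f : M →+ M')
    (h1 : ∀ (i j : Fin 8) (e : M), f (MulOpposite.op (eV K n i j) • e) =
      MulOpposite.op (eV K n i j) • f e)
    (h2 : ∀ (c : K) (e : M), f (algebraMap K (LR K n) c • e) = algebraMap K (LR K n) c • f e)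
    (r : LR K n) (e : M) : f (r • e) = r • f e := by
  have hr : r = ∑ p, ∑ q, algebraMap K (LR K n) (mat r.unop p q) *
      MulOpposite.op (eV K n (code n p) (code n q)) := by
    conv_lhs => rw [← MulOpposite.op_unop r, eV_span hn r.unop]
    rw [← op_sum']
    refine Finset.sum_congr rfl fun p _ => ?_
    rw [← op_sum']
    refine Finset.sum_congr rfl fun q _ => ?_
    rw [MulOpposite.op_smul, Algebra.smul_def]
  rw [hr]
  simp only [Finset.sum_smul, map_sum, mul_smul, h2, h1]

/-- the representation attached to a module -/
def toQ (M : ModCat (LR K n)) (hM : IsFGMod M) : QRep K :=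
  letI := kmod K n M
  haveI := kmod_tower (K := K) (n := n) M
  haveI : Module.Finite (LR K n) M := hM
  haveI := kmod_fin (K := K) (n := n) M
  { E := M
    φ := fun i j => Module.toModuleEnd K (S := LR K n) M (MulOpposite.op (eV K n i j)) }

lemma toQ_φ (M : ModCat (LR K n)) (hM : IsFGMod M) (i j : Fin 8) (e : M) :
    (toQ M hM).φ i j e = (MulOpposite.op (eV K n i j) • e : M) := rfl

lemma toQ_smul (M : ModCat (LR K n)) (hM : IsFGMod M) (c : K) (e : M) :
    (c • (show (toQ M hM).E from e)) = (algebraMap K (LR K n) c • e : M) := rfl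

lemma toQ_rel (hn : n ≤ 4) (M : ModCat (LR K n)) (hM : IsFGMod M) : Rel (adj lad) (toQ M hM) := by
  constructor
  · intro e0
    let e : M := e0
    change (∑ i, (MulOpposite.op (eV K n i i) • e : M) : M) = (e : M)
    rw [← Finset.sum_smul, op_sum', eV_one hn, MulOpposite.op_one, one_smul]
  · intro i j k l e0 hjk
    let e : M := e0
    change (MulOpposite.op (eV K n k l) • MulOpposite.op (eV K n i j) • e : M) = 0
    rw [smul_smul, ← MulOpposite.op_mul, eV_orth _ _ _ _ hjk, MulOpposite.op_zero, zero_smul]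
  · intro i j k e0 hij hjk
    let e : M := e0
    change (MulOpposite.op (eV K n j k) • MulOpposite.op (eV K n i j) • e : M) =
      MulOpposite.op (eV K n i k) • e
    rw [smul_smul, ← MulOpposite.op_mul, eV_comp hn _ _ _ hij hjk]
  · intro i j e0 hij
    let e : M := e0
    change (MulOpposite.op (eV K n i j) • e : M) = 0
    rw [eV_zero hn _ _ hij, MulOpposite.op_zero, zero_smul]

/-- homs of representations are linear -/
def ofHom (hn : n ≤ 4) {M M' : ModCat (LR K n)} {hM : IsFGMod M} {hM' : IsFGMod M'}
    (f : (toQ M hM).E →ₗ[K] (toQ M' hM').E) (hf : IsHom (toQ M hM) (toQ M' hM') f) :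
    M →ₗ[LR K n] M' where
  toFun := f
  map_add' := f.map_add
  map_smul' := fun r e => lin_of_eV hn (M := M) (M' := M') (f.toAddMonoidHom : M →+ M')
    (fun i j e => hf i j e) (fun c e => f.map_smul c e) r e

lemma toQ_indec (hn : n ≤ 4) (M : ModCat (LR K n)) (hM : IsFGMod M) (hI : IsIndecMod M) :
    Indec (toQ M hM) := by
  constructor
  · by_contra hcon
    push Not at hcon
    apply hI.1
    haveI : Subsingleton M := ⟨fun a b => (hcon a).trans (hcon b).symm⟩
    exact ModuleCat.isZero_of_subsingleton M
  · intro f hf hff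
    let F := ofHom hn f hf
    have hF : ∀ e, F (F e) = F e := hff
    have hcompl : IsCompl (LinearMap.range F) (LinearMap.ker F) :=
      LinearMap.IsIdempotentElem.isCompl (f := F) (LinearMap.ext hF)
    let e1 := (Submodule.prodEquivOfIsCompl _ _ hcompl).symm
    have iso : M ≅ ModuleCat.of (LR K n) (LinearMap.range F) ⊞ ModuleCat.of (LR K n) (LinearMap.ker F) :=
      (LinearEquiv.toModuleIso e1) ≪≫ (ModuleCat.biprodIsoProd
        (ModuleCat.of (LR K n) (LinearMap.range F)) (ModuleCat.of (LR K n) (LinearMap.ker F))).symm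
    rcases hI.2 _ _ ⟨iso⟩ with h0 | h0
    · left
      haveI := ModuleCat.subsingleton_of_isZero h0
      intro e
      exact congrArg Subtype.val (Subsingleton.elim (⟨F e, e, rfl⟩ : LinearMap.range F) 0)
    · right
      haveI := ModuleCat.subsingleton_of_isZero h0
      intro e0
      let e : M := e0
      have : F (F e - e) = 0 := by rw [map_sub, hF, sub_self]
      have := congrArg Subtype.val (Subsingleton.elim (⟨F e - e, this⟩ : LinearMap.ker F) 0)
      exact sub_eq_zero.1 this

lemma toQ_good (hn : n ≤ 4) (M : ModCat (LR K n)) (hM : IsFGMod M) (hI : IsIndecMod M) :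
    Good K lad [-1, -1, -1, -1, -1, -1, -1, -1] (toQ M hM) := by
  have hi := toQ_indec hn M hM hI
  refine ⟨toQ_rel hn M hM, hi, ?_⟩
  obtain ⟨e, he⟩ := hi.1
  have h1 := (toQ_rel hn M hM).one e
  have h2 : ∃ i, (toQ M hM).φ i i e ≠ 0 := by
    by_contra hcon
    push Not at hcon
    exact he (by rw [← h1]; exact Finset.sum_eq_zero fun i _ => hcon i)
  obtain ⟨i, hi⟩ := h2
  have h3 : 0 < (toQ M hM).dim i := by
    unfold dim
    apply Module.finrank_pos_iff_exists_ne_zero.2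
    exact ⟨⟨_, e, rfl⟩, fun h => hi (congrArg Subtype.val h)⟩
  have h4 : ∀ i, lam [-1, -1, -1, -1, -1, -1, -1, -1] i = -1 := by decide
  simp only [h4]
  rw [← Finset.mul_sum]
  have h5 := Finset.single_le_sum (f := fun i => ((toQ M hM).dim i : ℤ))
    (fun i _ => Int.natCast_nonneg _) (Finset.mem_univ i)
  have h6 : (0:ℤ) < (toQ M hM).dim i := by exact_mod_cast h3
  have h7 := lt_of_lt_of_le h6 h5
  linarith

theorem repFinite_small (K : Type) [Field K] (n : ℕ) (hn : n ≤ 4) :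
    IsRepFinite (CommLadder K n) := by
  obtain ⟨N, c, hc⟩ := finite_of_check K table lad _ table_ok
  classical
  let P : Fin N → ModCat (LR K n) → Prop := fun a M =>
    ∃ hM : IsFGMod M, IsIndecMod M ∧ c (toQ M hM) = a
  refine ⟨N, fun a => if h : ∃ M, P a M then h.choose else ModuleCat.of _ (LR K n), ?_⟩
  intro M hM hI
  have hex : ∃ M', P (c (toQ M hM)) M' := ⟨M, hM, hI, rfl⟩
  refine ⟨c (toQ M hM), ?_⟩
  beta_reduce
  rw [dif_pos hex]
  obtain ⟨hM', hI', hcc⟩ := hex.choose_spec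
  obtain ⟨f, g, hf, hg, h1, h2⟩ := hc _ _ (toQ_good hn M hM hI) (toQ_good hn _ hM' hI') hcc.symm
  exact ⟨LinearEquiv.toModuleIso (LinearEquiv.ofLinearMap (ofHom hn f hf) (ofHom hn g hg)
    (LinearMap.ext h2) (LinearMap.ext h1))⟩

end transfer

section completion

variable {R : Type} [Ring R]

/-- every map from `P₁` extends along `f`. -/
def FInj {P₁ P₀ : Type} [AddCommGroup P₁] [Module R P₁] [AddCommGroup P₀] [Module R P₀]
    (f : P₁ →ₗ[R] P₀) (N : Type) [AddCommGroup N] [Module R N] : Prop :=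
  ∀ u : P₁ →ₗ[R] N, ∃ k : P₀ →ₗ[R] N, ∀ x, k (f x) = u x

/-- retract of a finite power -/
def Ret (R : Type) [Ring R] (Z Y : Type) [AddCommGroup Z] [Module R Z] [AddCommGroup Y]
    [Module R Y] : Prop :=
  ∃ (ι : Type) (_ : Fintype ι) (i : Z →ₗ[R] (ι → Y)) (r : (ι → Y) →ₗ[R] Z), ∀ z, r (i z) = z

/-- quotient of a finite power -/
def Gen (R : Type) [Ring R] (Z Y : Type) [AddCommGroup Z] [Module R Z] [AddCommGroup Y]
    [Module R Y] : Prop :=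
  ∃ (ι : Type) (_ : Fintype ι) (r : (ι → Y) →ₗ[R] Z), Function.Surjective r

variable {A B C : Type} [AddCommGroup A] [Module R A] [AddCommGroup B] [Module R B]
  [AddCommGroup C] [Module R C]

lemma Ret.gen (h : Ret R A B) : Gen R A B := by
  obtain ⟨ι, _, i, r, hr⟩ := h
  exact ⟨ι, inferInstance, r, fun z => ⟨i z, hr z⟩⟩

lemma Ret.trans (h1 : Ret R A B) (h2 : Ret R B C) : Ret R A C := by
  obtain ⟨ι, _, i, r, hr⟩ := h1
  obtain ⟨κ, _, i', r', hr'⟩ := h2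
  refine ⟨ι × κ, inferInstance, (LinearEquiv.curry R C ι κ).symm.toLinearMap ∘ₗ i'.compLeft ι ∘ₗ i,
    r ∘ₗ r'.compLeft ι ∘ₗ (LinearEquiv.curry R C ι κ).toLinearMap, fun z => ?_⟩
  simp only [LinearMap.comp_apply, LinearEquiv.coe_coe, LinearEquiv.apply_symm_apply]
  conv_rhs => rw [← hr z]
  congr 1
  ext a
  exact hr' _

lemma Gen.trans (h1 : Gen R A B) (h2 : Gen R B C) : Gen R A C := by
  obtain ⟨ι, _, r, hr⟩ := h1
  obtain ⟨κ, _, r', hr'⟩ := h2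
  refine ⟨ι × κ, inferInstance,
    r ∘ₗ r'.compLeft ι ∘ₗ (LinearEquiv.curry R C ι κ).toLinearMap, ?_⟩
  intro z
  obtain ⟨g, rfl⟩ := hr z
  choose y hy using fun a => hr' (g a)
  refine ⟨(LinearEquiv.curry R C ι κ).symm y, ?_⟩
  simp only [LinearMap.comp_apply, LinearEquiv.coe_coe, LinearEquiv.apply_symm_apply]
  congr 1
  funext a
  exact hy a

lemma Ret.of_maps (i : A →ₗ[R] B) (r : B →ₗ[R] A) (h : ∀ z, r (i z) = z) : Ret R A B :=
  ⟨Unit, inferInstance, LinearMap.pi (fun _ => i), r ∘ₗ LinearMap.proj (), h⟩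

lemma Gen.of_surj (r : B →ₗ[R] A) (h : Function.Surjective r) : Gen R A B :=
  ⟨Unit, inferInstance, r ∘ₗ LinearMap.proj (), fun z => by
    obtain ⟨y, hy⟩ := h z
    exact ⟨fun _ => y, hy⟩⟩

lemma Ret.refl : Ret R A A := Ret.of_maps LinearMap.id LinearMap.id fun _ => rfl

lemma Gen.finite [Module.Finite R B] (h : Gen R A B) : Module.Finite R A := by
  obtain ⟨ι, _, r, hr⟩ := h
  exact Module.Finite.of_surjective r hr

variable {P₁ P₀ : Type} [AddCommGroup P₁] [Module R P₁] [AddCommGroup P₀] [Module R P₀]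
  {f : P₁ →ₗ[R] P₀}

lemma FInj.quot [Module.Projective R P₁] (hB : FInj f B) (r : B →ₗ[R] A)
    (hr : Function.Surjective r) : FInj f A := by
  intro u
  obtain ⟨v, hv⟩ := Module.projective_lifting_property r u hr
  obtain ⟨k, hk⟩ := hB v
  exact ⟨r ∘ₗ k, fun x => by simp [hk, ← hv]⟩

lemma FInj.pi {ι : Type} (hB : FInj f B) : FInj f (ι → B) := by
  intro u
  choose k hk using fun i => hB (LinearMap.proj i ∘ₗ u)
  exact ⟨LinearMap.pi k, fun x => funext fun i => hk i x⟩

lemma FInj.gen [Module.Projective R P₁] (hB : FInj f B) (h : Gen R A B) : FInj f A := by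
  obtain ⟨ι, _, r, hr⟩ := h
  exact hB.pi.quot r hr

/-- a good presentation -/
def PR (f : P₁ →ₗ[R] P₀) (Y : Type) [AddCommGroup Y] [Module R Y] : Prop :=
  ∃ (A₁ A₀ : ModCat R) (j : A₁ →ₗ[R] A₀) (π : A₀ →ₗ[R] Y),
    Module.Projective R A₁ ∧ Module.Projective R A₀ ∧ Module.Finite R A₁ ∧ Module.Finite R A₀ ∧
    Function.Injective j ∧ Function.Surjective π ∧ (∀ a, π a = 0 ↔ ∃ b, j b = a) ∧
    ∀ N : ModCat R, FInj f N → ∀ u : A₁ →ₗ[R] N, ∃ k : A₀ →ₗ[R] N, ∀ x, k (j x) = u x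

lemma proj_pi {ι : Type} [Fintype ι] [Module.Projective R A] : Module.Projective R (ι → A) := by
  classical
  refine Module.Projective.of_lifting_property'' fun q hq => ?_
  obtain ⟨s, hs⟩ := hq.hasRightInverse
  choose l hl using fun i => Module.projective_lifting_property q
    (LinearMap.single R (fun _ => A) i) hq
  refine ⟨∑ i, l i ∘ₗ LinearMap.proj i, ?_⟩
  refine LinearMap.ext fun x => ?_
  have hx : x = ∑ i, LinearMap.single R (fun _ => A) i (x i) := by
    simp [LinearMap.coe_single, Finset.univ_sum_single]
  simp only [LinearMap.comp_apply, LinearMap.sum_apply, map_sum, LinearMap.proj_apply,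
    LinearMap.id_apply]
  conv_rhs => rw [hx]
  exact Finset.sum_congr rfl fun i _ => LinearMap.congr_fun (hl i) (x i)

lemma PR.pi {ι : Type} [Fintype ι] (h : PR f A) : PR f (ι → A) := by
  classical
  obtain ⟨A₁, A₀, j, π, hp1, hp0, hf1, hf0, hj, hπ, hex, hext⟩ := h
  refine ⟨ModuleCat.of R (ι → A₁), ModuleCat.of R (ι → A₀), j.compLeft ι, π.compLeft ι,
    proj_pi, proj_pi,
    (inferInstance : Module.Finite R (ι → A₁)), (inferInstance : Module.Finite R (ι → A₀)),
    ?_, ?_, ?_, ?_⟩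
  · intro a b hab
    funext i
    exact hj (congrFun hab i)
  · intro g
    choose y hy using fun a => hπ (g a)
    exact ⟨y, funext hy⟩
  · intro a
    constructor
    · intro ha
      choose b hb using fun i => (hex (a i)).1 (congrFun ha i)
      exact ⟨b, funext hb⟩
    · rintro ⟨b, rfl⟩
      funext i
      exact (hex (j (b i))).2 ⟨b i, rfl⟩
  · intro N hN u
    choose k hk using fun i => hext N hN (u ∘ₗ LinearMap.single R (fun _ => (A₁ : Type)) i)
    refine ⟨∑ i, k i ∘ₗ LinearMap.proj i, fun x => ?_⟩
    have hx : x = ∑ i, LinearMap.single R (fun _ => (A₁ : Type)) i (x i) := by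
      simp [LinearMap.coe_single, Finset.univ_sum_single]
    conv_rhs => rw [hx]
    rw [map_sum, LinearMap.sum_apply]
    refine Finset.sum_congr rfl fun i _ => ?_
    exact hk i (x i)

lemma PR.retract [IsNoetherianRing R] (h : PR f B) (i : A →ₗ[R] B) (r : B →ₗ[R] A)
    (hr : ∀ z, r (i z) = z) : PR f A := by
  obtain ⟨A₁, A₀, j, π, hp1, hp0, hf1, hf0, hj, hπ, hex, hext⟩ := h
  let L := LinearMap.ker (r ∘ₗ π)
  obtain ⟨ρ, hρ⟩ := Module.projective_lifting_property π (π - i ∘ₗ r ∘ₗ π) hπ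
  have hρ' : ∀ a, π (ρ a) = π a - i (r (π a)) := fun a => LinearMap.congr_fun hρ a
  have hρL : ∀ a, ρ a ∈ L := fun a => by
    simp only [L, LinearMap.mem_ker, LinearMap.comp_apply, hρ', map_sub, hr, sub_self]
  have hL : ∀ l ∈ L, π (ρ l) = π l := fun l hl => by
    have : r (π l) = 0 := hl
    rw [hρ', this]; simp
  have hjL : ∀ b, j b ∈ L := fun b => by
    have : π (j b) = 0 := (hex _).2 ⟨b, rfl⟩
    simp [L, this]
  let j' : A₁ →ₗ[R] L := LinearMap.codRestrict L j hjL
  let ρ' : A₀ →ₗ[R] L := LinearMap.codRestrict L ρ hρL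
  let jeq : A₁ ≃ₗ[R] LinearMap.range j := LinearEquiv.ofInjective j hj
  have hdiff : ∀ l : L, (l : A₀) - ρ l ∈ LinearMap.range j := fun l =>
    (hex _).1 (by rw [map_sub, hL l l.2, sub_self])
  let d : L →ₗ[R] A₁ := jeq.symm.toLinearMap ∘ₗ
    LinearMap.codRestrict (LinearMap.range j) (L.subtype - ρ ∘ₗ L.subtype) hdiff
  have hd : ∀ l : L, j (d l) = l - ρ l := by
    intro l
    have := congrArg Subtype.val (jeq.apply_symm_apply
      (LinearMap.codRestrict (LinearMap.range j) (L.subtype - ρ ∘ₗ L.subtype) hdiff l))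
    exact this
  have hproj : Module.Projective R L := by
    refine Module.Projective.of_split (M := A₀ × A₁) (P := L) (LinearMap.prod L.subtype d)
      (LinearMap.coprod ρ' j') ?_
    ext l
    change ρ l + j (d l) = l
    rw [hd]; abel
  refine ⟨ModuleCat.of R L, A₀, L.subtype, r ∘ₗ π, hproj, hp0,
    (inferInstance : Module.Finite R L), hf0, Subtype.val_injective, ?_, ?_, ?_⟩
  · intro a
    obtain ⟨y, hy⟩ := hπ (i a)
    exact ⟨y, by simp [hy, hr]⟩
  · intro a
    exact ⟨fun h => ⟨⟨a, h⟩, rfl⟩, by rintro ⟨b, rfl⟩; exact b.2⟩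
  · intro N hN u
    let u' : L →ₗ[R] N := u
    obtain ⟨w, hw⟩ := hext N hN (u' ∘ₗ j')
    have hw' : ∀ b, w (j b) = u' (j' b) := hw
    refine ⟨w + (u' - w ∘ₗ L.subtype) ∘ₗ ρ', fun (l : L) => ?_⟩
    change w l + (u' (ρ' l) - w (ρ l)) = u' l
    have h1 : l = ρ' l + j' (d l) := by
      apply Subtype.ext
      change (l : A₀) = ρ l + j (d l)
      rw [hd]; abel
    have h2 : (l : A₀) = ρ l + j (d l) := congrArg Subtype.val h1
    have hw2 : w (l : A₀) = w (ρ l) + w (j (d l)) := by rw [← map_add, ← h2]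
    have hu : u' l = u' (ρ' l) + w (j (d l)) := by rw [hw', ← map_add, ← h1]
    rw [hw2, hu]; abel

end completion

set_option linter.style.haveILetI false
section completion2

variable {K : Type} [Field K] {R : Type} [Ring R] [Algebra K R]
variable {A B C : Type} [AddCommGroup A] [Module R A] [AddCommGroup B] [Module R B]
  [AddCommGroup C] [Module R C]

lemma exists_factor (g : A →ₗ[R] B) (hg : Function.Surjective g) (k : A →ₗ[R] C)
    (h : ∀ a, g a = 0 → k a = 0) : ∃ l : B →ₗ[R] C, ∀ a, l (g a) = k a := by
  refine ⟨(LinearMap.ker g).liftQ k (fun a ha => h a ha) ∘ₗ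
    (g.quotKerEquivOfSurjective hg).symm.toLinearMap, fun a => ?_⟩
  have : (g.quotKerEquivOfSurjective hg).symm (g a) = (LinearMap.ker g).mkQ a := by
    rw [LinearEquiv.symm_apply_eq]; rfl
  simp only [LinearMap.comp_apply, LinearEquiv.coe_coe, this]
  exact Submodule.liftQ_apply _ _ _

/-- multiplication by a central scalar -/
def cmap (A : Type) [AddCommGroup A] [Module R A] (c : K) : A →ₗ[R] A where
  toFun y := algebraMap K R c • y
  map_add' x y := smul_add _ x y
  map_smul' r x := by
    simp only [smul_smul, RingHom.id_apply, Algebra.commutes c r]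

lemma hom_span (K : Type) [Field K] [Algebra K R] [Module.Finite K R]
    (A B : Type) [AddCommGroup A] [Module R A] [AddCommGroup B] [Module R B]
    [Module.Finite R A] [Module.Finite R B] :
    ∃ (m : ℕ) (h : Fin m → A →ₗ[R] B), ∀ g : A →ₗ[R] B, ∃ c : Fin m → K,
      ∀ x, g x = ∑ i, h i (algebraMap K R (c i) • x) := by
  letI : Module K B := Module.compHom B (algebraMap K R)
  haveI : IsScalarTower K R B := IsScalarTower.of_algebraMap_smul fun _ _ => rfl
  haveI : Module.Finite K B := Module.Finite.trans R B
  haveI : SMulCommClass R K B := IsScalarTower.to_smulCommClass'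
  obtain ⟨s, hs⟩ := Module.Finite.fg_top (R := R) (M := A)
  let ev : (A →ₗ[R] B) →ₗ[K] (s → B) :=
    { toFun := fun g a => g a
      map_add' := fun _ _ => rfl
      map_smul' := fun _ _ => rfl }
  have hev : Function.Injective ev := by
    intro g g' h
    refine LinearMap.ext_on hs fun a ha => ?_
    exact congrFun h ⟨a, ha⟩
  haveI : Module.Finite K (A →ₗ[R] B) := Module.Finite.of_injective ev hev
  let b := Module.finBasis K (A →ₗ[R] B)
  refine ⟨_, b, fun g => ⟨b.repr g, fun x => ?_⟩⟩
  conv_lhs => rw [← b.sum_repr g]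
  rw [LinearMap.sum_apply]
  refine Finset.sum_congr rfl fun i _ => ?_
  rw [map_smul]; rfl

theorem completion (K : Type) [Field K] [Algebra K R] [Module.Finite K R]
    {P₁ P₀ X : Type} [AddCommGroup P₁] [Module R P₁] [AddCommGroup P₀] [Module R P₀]
    [AddCommGroup X] [Module R X] [Module.Finite R P₁] [Module.Finite R P₀]
    [Module.Projective R P₁] [Module.Projective R P₀] (f : P₁ →ₗ[R] P₀) (g : P₀ →ₗ[R] X)
    (hf : Function.Injective f) (hg : Function.Surjective g)
    (hex : ∀ y, g y = 0 ↔ ∃ x, f x = y) (hX : FInj f X) :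
    ∃ T : ModCat R, Module.Finite R T ∧ FInj f T ∧ PR f T ∧ Ret R X T ∧
      (∃ e : R →ₗ[R] T, Function.Injective e) ∧
      ∀ N : ModCat R, FInj f N → Module.Finite R N → Gen R N T := by
  classical
  obtain ⟨m, h', hh⟩ := hom_span (R := R) K P₁ R
  let ι := Option (Fin m)
  let h : ι → P₁ →ₗ[R] R := fun i => i.elim 0 h'
  let hsum : (ι → P₁) →ₗ[R] R := ∑ i, h i ∘ₗ LinearMap.proj i
  have hsum_apply : ∀ x, hsum x = ∑ i, h i (x i) := fun x => by
    simp [hsum, LinearMap.sum_apply]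
  let jT : (ι → P₁) →ₗ[R] R × (ι → P₀) := LinearMap.prod hsum (-(f.compLeft ι))
  have jT1 : ∀ x, (jT x).1 = ∑ i, h i (x i) := hsum_apply
  have jT2 : ∀ x i, (jT x).2 i = - f (x i) := fun x i => rfl
  have hjT : Function.Injective jT := by
    intro x y hxy
    funext i
    have := congrFun (congrArg Prod.snd hxy) i
    rw [jT2, jT2, neg_inj] at this
    exact hf this
  let T := (R × (ι → P₀)) ⧸ LinearMap.range jT
  let π : R × (ι → P₀) →ₗ[R] T := (LinearMap.range jT).mkQ
  have hπ : Function.Surjective π := Submodule.mkQ_surjective _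
  have hker : ∀ a, π a = 0 ↔ ∃ b, jT b = a := fun a => by
    rw [← LinearMap.mem_ker, Submodule.ker_mkQ]; rfl
  let e : R →ₗ[R] T := π ∘ₗ LinearMap.inl R R (ι → P₀)
  let inn : (ι → P₀) →ₗ[R] T := π ∘ₗ LinearMap.inr R R (ι → P₀)
  have hdec : ∀ r y, π (r, y) = e r + inn y := fun r y => by
    change π (r, y) = π (r, 0) + π (0, y)
    rw [← map_add]; simp
  have hrel : ∀ x : ι → P₁, inn (fun i => f (x i)) = e (∑ i, h i (x i)) := fun x => by
    have : π (jT x) = 0 := (hker _).2 ⟨x, rfl⟩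
    have h2 : jT x = (∑ i, h i (x i), -(fun i => f (x i))) := Prod.ext (jT1 x) rfl
    rw [h2, hdec, map_neg] at this
    rw [← sub_eq_zero, ← neg_eq_zero, ← this]; abel
  have he : Function.Injective e := by
    rw [injective_iff_map_eq_zero]
    intro r hr
    obtain ⟨x, hx⟩ := (hker _).1 hr
    have hx0 : x = 0 := by
      funext i
      have := congrFun (congrArg Prod.snd hx) i
      rw [jT2] at this
      have h0 : f (x i) = 0 := by simpa using this
      exact hf (by rw [h0]; simp)
    have := congrArg Prod.fst hx
    rw [hx0, map_zero] at this
    exact this.symm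
  obtain ⟨q, hq⟩ := exists_factor π hπ (g.compLeft ι ∘ₗ LinearMap.snd R R (ι → P₀)) (by
    intro a ha
    obtain ⟨x, rfl⟩ := (hker a).1 ha
    funext i
    change g ((jT x).2 i) = 0
    rw [jT2]
    exact (hex _).2 ⟨- x i, map_neg _ _⟩)
  have hq' : ∀ r y i, q (π (r, y)) i = g (y i) := fun r y i => congrFun (hq (r, y)) i
  have hqs : Function.Surjective q := by
    intro z
    choose y hy using fun i => hg (z i)
    exact ⟨π (0, y), funext fun i => (hq' 0 y i).trans (hy i)⟩
  have hkq : ∀ t, q t = 0 → ∃ r, e r = t := by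
    intro t ht
    obtain ⟨⟨r, y⟩, rfl⟩ := hπ t
    choose x hx using fun i => (hex (y i)).1 ((hq' r y i).symm.trans (congrFun ht i))
    refine ⟨r + ∑ i, h i (x i), ?_⟩
    rw [map_add, ← hrel, hdec]
    congr 2
    exact funext hx
  have hrel1 : ∀ (i : ι) (x : P₁), inn (Pi.single i (f x)) = e (h i x) := by
    intro i x
    have := hrel (Pi.single i x)
    rw [Finset.sum_eq_single i (fun j _ hj => by simp [hj]) (by simp), Pi.single_eq_same] at this
    rw [← this]
    congr 1
    funext j
    by_cases hj : j = i
    · subst hj; simp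
    · simp [hj]
  refine ⟨ModuleCat.of R T, (inferInstance : Module.Finite R T), ?_, ?_, ?_, ⟨e, he⟩, ?_⟩
  · intro (u : P₁ →ₗ[R] T)
    obtain ⟨k0, hk0⟩ := (FInj.pi (ι := ι) hX) (q ∘ₗ u)
    obtain ⟨w, hw⟩ := Module.projective_lifting_property q k0 hqs
    have hdiff : ∀ x, (u - w ∘ₗ f) x ∈ LinearMap.ker q := fun x => by
      have h1 := LinearMap.congr_fun hw (f x)
      simp only [LinearMap.comp_apply] at h1
      simp only [LinearMap.mem_ker, LinearMap.sub_apply, LinearMap.comp_apply, map_sub, h1, hk0]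
      exact sub_self _
    let e' : R →ₗ[R] LinearMap.ker q := LinearMap.codRestrict _ e (fun r => by
      rw [LinearMap.mem_ker]
      funext i
      change q (π (r, 0)) i = 0
      rw [hq']; simp)
    have he' : Function.Surjective e' := by
      rintro ⟨t, ht⟩
      obtain ⟨r, hr⟩ := hkq t ht
      exact ⟨r, Subtype.ext hr⟩
    obtain ⟨v, hv⟩ := Module.projective_lifting_property e'
      (LinearMap.codRestrict _ (u - w ∘ₗ f) hdiff) he'
    have hv' : ∀ x, e (v x) = u x - w (f x) := fun x =>
      congrArg Subtype.val (LinearMap.congr_fun hv x)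
    obtain ⟨c, hc⟩ := hh v
    refine ⟨w + ∑ i, inn ∘ₗ LinearMap.single R (fun _ => P₀) (some i) ∘ₗ cmap P₀ (c i),
      fun x => ?_⟩
    have h1 : ∀ i, (inn ∘ₗ LinearMap.single R (fun _ => P₀) (some i) ∘ₗ cmap P₀ (c i)) (f x) =
        e (h' i (algebraMap K R (c i) • x)) := by
      intro i
      change inn (Pi.single (some i) (algebraMap K R (c i) • f x)) = _
      rw [← map_smul, hrel1]; rfl
    rw [LinearMap.add_apply, LinearMap.sum_apply, Finset.sum_congr rfl (fun i _ => h1 i),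
      ← map_sum, ← hc, hv']
    abel
  · refine ⟨ModuleCat.of R (ι → P₁), ModuleCat.of R (R × (ι → P₀)), jT, π, proj_pi, ?_,
      (inferInstance : Module.Finite R (ι → P₁)),
      (inferInstance : Module.Finite R (R × (ι → P₀))), hjT, hπ, hker, ?_⟩
    · haveI : Module.Projective R (ι → P₀) := proj_pi
      exact (inferInstance : Module.Projective R (R × (ι → P₀)))
    · intro N hN (u : (ι → P₁) →ₗ[R] N)
      choose w hw using fun i => hN (u ∘ₗ LinearMap.single R (fun _ => P₁) i)
      refine ⟨-(∑ i, w i ∘ₗ LinearMap.proj i) ∘ₗ LinearMap.snd R R (ι → P₀),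
        fun (x : ι → P₁) => ?_⟩
      have hx : x = ∑ i, LinearMap.single R (fun _ => P₁) i (x i) := by
        simp [LinearMap.coe_single, Finset.univ_sum_single]
      conv_rhs => rw [hx]
      have h1 : ∀ i, w i (- f (x i)) = - u (LinearMap.single R (fun _ => P₁) i (x i)) :=
        fun i => by rw [map_neg, hw]; rfl
      rw [map_sum]
      change -((∑ i, w i ∘ₗ LinearMap.proj i) (jT x).2) = _
      rw [LinearMap.sum_apply, ← Finset.sum_neg_distrib]
      refine Finset.sum_congr rfl fun i _ => ?_
      change - (w i (- f (x i))) = _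
      rw [h1, neg_neg]
  · obtain ⟨l, hl⟩ := exists_factor g hg
      (inn ∘ₗ LinearMap.single R (fun _ => P₀) (none : ι)) (by
        intro y hy
        obtain ⟨x, rfl⟩ := (hex y).1 hy
        change inn (Pi.single none (f x)) = 0
        rw [hrel1]
        exact map_zero e)
    refine Ret.of_maps l (LinearMap.proj (none : ι) ∘ₗ q) fun z => ?_
    obtain ⟨y, rfl⟩ := hg z
    rw [hl]
    change q (π (0, Pi.single none y)) none = g y
    rw [hq', Pi.single_eq_same]
  · intro N hN hNf
    have key : ∀ n : N, ∃ φ : T →ₗ[R] N, φ (e 1) = n := by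
      intro n
      choose k hk using fun i => hN (LinearMap.toSpanSingleton R N n ∘ₗ h i)
      obtain ⟨φ, hφ⟩ := exists_factor π hπ (LinearMap.coprod (LinearMap.toSpanSingleton R N n)
        (∑ i, k i ∘ₗ LinearMap.proj i)) (by
          intro a ha
          obtain ⟨x, rfl⟩ := (hker a).1 ha
          rw [LinearMap.coprod_apply, jT1, LinearMap.sum_apply, map_sum, ← Finset.sum_add_distrib]
          refine Finset.sum_eq_zero fun i _ => ?_
          change _ + k i (- f (x i)) = 0
          rw [map_neg, hk]
          exact add_neg_cancel _)
      refine ⟨φ, ?_⟩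
      change φ (π (1, 0)) = n
      rw [hφ]; simp
    obtain ⟨s, hs⟩ := Module.Finite.fg_top (R := R) (M := N)
    choose φ hφ using key
    refine ⟨s, inferInstance, ∑ a : s, φ a ∘ₗ LinearMap.proj a, ?_⟩
    rw [← LinearMap.range_eq_top, eq_top_iff, ← hs, Submodule.span_le]
    intro a ha
    refine ⟨Pi.single ⟨a, ha⟩ (e 1), ?_⟩
    rw [LinearMap.sum_apply, Finset.sum_eq_single ⟨a, ha⟩]
    · change φ a ((Pi.single (⟨a, ha⟩ : s) (e 1) : s → T) ⟨a, ha⟩) = a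
      rw [Pi.single_eq_same, hφ]
    · intro b _ hb
      change φ b ((Pi.single (⟨a, ha⟩ : s) (e 1) : s → T) b) = 0
      rw [Pi.single_eq_of_ne hb, map_zero]
    · simp

end completion2

set_option linter.unusedSectionVars false
set_option linter.style.haveILetI false
section completion3

variable {R : Type} [Ring R]
variable {A B C Z W Y N : Type} [AddCommGroup A] [Module R A] [AddCommGroup B] [Module R B]
  [AddCommGroup C] [Module R C] [AddCommGroup Z] [Module R Z] [AddCommGroup W] [Module R W]
  [AddCommGroup Y] [Module R Y] [AddCommGroup N] [Module R N]

lemma lift_ret (p : W →ₗ[R] N) (h : ∀ s : Y →ₗ[R] N, ∃ l : Y →ₗ[R] W, ∀ y, p (l y) = s y)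
    (hZ : Ret R Z Y) (s : Z →ₗ[R] N) : ∃ l : Z →ₗ[R] W, ∀ z, p (l z) = s z := by
  classical
  obtain ⟨ι, _, i, r, hr⟩ := hZ
  choose l hl using fun a => h (s ∘ₗ r ∘ₗ LinearMap.single R (fun _ => Y) a)
  refine ⟨(∑ a, l a ∘ₗ LinearMap.proj a) ∘ₗ i, fun z => ?_⟩
  have hx : i z = ∑ a, LinearMap.single R (fun _ => Y) a (i z a) := by
    simp [LinearMap.coe_single, Finset.univ_sum_single]
  conv_rhs => rw [← hr z, hx]
  simp only [LinearMap.comp_apply, LinearMap.sum_apply, map_sum]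
  exact Finset.sum_congr rfl fun a _ => hl a (i z a)

/-- τ-rigidity in the language of linear maps -/
def TR (R : Type) [Ring R] (Y : Type) [AddCommGroup Y] [Module R Y] : Prop :=
  ∃ (Q₁ Q₀ : ModCat R) (φ : Q₁ →ₗ[R] Q₀) (γ : Q₀ →ₗ[R] Y),
    Module.Projective R Q₁ ∧ Module.Projective R Q₀ ∧
    Function.Surjective γ ∧ (∀ a, γ a = 0 ↔ ∃ b, φ b = a) ∧
    ∀ u : Q₁ →ₗ[R] Y, ∃ k : Q₀ →ₗ[R] Y, ∀ x, k (φ x) = u x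

lemma TR.lift (hY : TR R Y) (p : W →ₗ[R] N) (hp : Function.Surjective p)
    (hk : Gen R (LinearMap.ker p) Y) (hZ : Ret R Z Y) (s : Z →ₗ[R] N) :
    ∃ l : Z →ₗ[R] W, ∀ z, p (l z) = s z := by
  refine lift_ret p (fun s => ?_) hZ s
  obtain ⟨Q₁, Q₀, φ, γ, _, _, hγ, hex, hext⟩ := hY
  obtain ⟨ι, _, r, hr⟩ := hk
  obtain ⟨k, hk⟩ := Module.projective_lifting_property p (s ∘ₗ γ) hp
  have hk' : ∀ x, p (k x) = s (γ x) := fun x => LinearMap.congr_fun hk x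
  have hφ : ∀ x, γ (φ x) = 0 := fun x => (hex _).2 ⟨x, rfl⟩
  obtain ⟨v, hv⟩ := Module.projective_lifting_property r
    (LinearMap.codRestrict (LinearMap.ker p) (k ∘ₗ φ) (fun x => by
      rw [LinearMap.mem_ker, LinearMap.comp_apply, hk', hφ, map_zero])) hr
  have hv' : ∀ x, (r (v x) : W) = k (φ x) := fun x =>
    congrArg Subtype.val (LinearMap.congr_fun hv x)
  choose w hw using fun a => hext (LinearMap.proj a ∘ₗ v)
  let k' : Q₀ →ₗ[R] W := (LinearMap.ker p).subtype ∘ₗ r ∘ₗ LinearMap.pi w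
  have hk2 : ∀ x, k' (φ x) = k (φ x) := fun x => by
    rw [← hv' x]
    have : LinearMap.pi w (φ x) = v x := funext fun a => hw a x
    simp only [k', LinearMap.comp_apply, this]; rfl
  have hk3 : ∀ x, p (k' x) = 0 := fun x => (r (LinearMap.pi w x)).2
  obtain ⟨l, hl⟩ := exists_factor γ hγ (k - k') (by
    intro a ha
    obtain ⟨b, rfl⟩ := (hex a).1 ha
    rw [LinearMap.sub_apply, hk2, sub_self])
  refine ⟨l, fun y => ?_⟩
  obtain ⟨x, rfl⟩ := hγ y
  rw [hl, LinearMap.sub_apply, map_sub, hk', hk3, sub_zero]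

variable {P₁ P₀ X : Type} [AddCommGroup P₁] [Module R P₁] [AddCommGroup P₀] [Module R P₀]
  [AddCommGroup X] [Module R X] [Module.Projective R P₁] [Module.Projective R P₀]
  {f : P₁ →ₗ[R] P₀} {g : P₀ →ₗ[R] X}

lemma TR.finj (hY : TR R Y) (hf : Function.Injective f) (hg : Function.Surjective g)
    (hex : ∀ y, g y = 0 ↔ ∃ x, f x = y) (hX : Ret R X Y) (hN : Ret R N Y) : FInj f N := by
  intro u
  let j : P₁ →ₗ[R] N × P₀ := LinearMap.prod u (-f)
  let π := (LinearMap.range j).mkQ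
  have hπ : Function.Surjective π := Submodule.mkQ_surjective _
  have hker : ∀ a, π a = 0 ↔ ∃ b, j b = a := fun a => by
    rw [← LinearMap.mem_ker, Submodule.ker_mkQ]; rfl
  have hgf : ∀ x, g (f x) = 0 := fun x => (hex _).2 ⟨x, rfl⟩
  obtain ⟨p, hp⟩ := exists_factor π hπ (g ∘ₗ LinearMap.snd R N P₀) (by
    intro a ha
    obtain ⟨b, rfl⟩ := (hker a).1 ha
    change g (- f b) = 0
    rw [map_neg, hgf, neg_zero])
  have hp' : ∀ n y, p (π (n, y)) = g y := fun n y => hp (n, y)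
  have hps : Function.Surjective p := fun z => by
    obtain ⟨y, rfl⟩ := hg z
    exact ⟨π (0, y), hp' 0 y⟩
  have hj : ∀ x, π (u x, 0) = π (0, f x) := fun x => by
    rw [← sub_eq_zero, ← map_sub, hker]
    exact ⟨x, by simp [j]⟩
  let i : N →ₗ[R] LinearMap.ker p := LinearMap.codRestrict _ (π ∘ₗ LinearMap.inl R N P₀)
    (fun n => by
      rw [LinearMap.mem_ker]
      change p (π (n, 0)) = 0
      rw [hp', map_zero])
  have hi : ∀ n, (i n : _) = π (n, 0) := fun n => rfl
  have his : Function.Surjective i := by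
    rintro ⟨w, hw⟩
    obtain ⟨⟨n, y⟩, rfl⟩ := hπ w
    obtain ⟨x, rfl⟩ := (hex y).1 ((hp' n y).symm.trans hw)
    refine ⟨n + u x, Subtype.ext ?_⟩
    change π (n + u x, 0) = π (n, f x)
    have : π (n, 0) + π (u x, 0) = π (n, 0) + π (0, f x) := by rw [hj]
    rw [← map_add, ← map_add] at this
    simpa using this
  obtain ⟨σ, hσ⟩ := hY.lift p hps ((Gen.of_surj i his).trans hN.gen) hX LinearMap.id
  obtain ⟨θ, hθ⟩ := Module.projective_lifting_property i
    (LinearMap.codRestrict _ (π ∘ₗ LinearMap.inr R N P₀ - σ ∘ₗ g) (fun y => by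
      rw [LinearMap.mem_ker]
      change p (π (0, y) - σ (g y)) = 0
      rw [map_sub, hp', hσ, LinearMap.id_apply, sub_self])) his
  have hθ' : ∀ y, π (θ y, 0) = π (0, y) - σ (g y) := fun y =>
    congrArg Subtype.val (LinearMap.congr_fun hθ y)
  refine ⟨θ, fun x => ?_⟩
  have h1 := hθ' (f x)
  rw [hgf, map_zero, sub_zero, ← hj, ← sub_eq_zero, ← map_sub, hker] at h1
  obtain ⟨b, hb⟩ := h1
  have h2 : f b = 0 := by simpa [j] using congrArg Prod.snd hb
  have h3 : b = 0 := hf (by rw [h2, map_zero])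
  have h4 := congrArg Prod.fst hb
  rw [h3, map_zero] at h4
  exact (sub_eq_zero.1 h4.symm)

lemma TR.ret (K : Type) [Field K] [Algebra K R] [Module.Finite K R] (T : ModCat R)
    [Module.Finite R T] [Module.Finite R N]
    (hY : TR R Y) (hf : Function.Injective f) (hg : Function.Surjective g)
    (hex : ∀ y, g y = 0 ↔ ∃ x, f x = y) (hX : Ret R X T) (hT : FInj f T)
    (hgen : ∀ N : ModCat R, FInj f N → Module.Finite R N → Gen R N T)
    (hTY : Ret R T Y) (hN : Ret R N Y) : Ret R N T := by
  classical
  haveI : IsNoetherianRing R := IsNoetherianRing.of_finite K R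
  have hNI : FInj f N := hY.finj hf hg hex (hX.trans hTY) hN
  obtain ⟨m, h, hh⟩ := hom_span (R := R) K T N
  let a : (Fin m → T) →ₗ[R] N := ∑ i, h i ∘ₗ LinearMap.proj i
  have ha : ∀ t, a t = ∑ i, h i (t i) := fun t => by simp [a, LinearMap.sum_apply]
  have hfac : ∀ s : T →ₗ[R] N, ∃ l : T →ₗ[R] (Fin m → T), ∀ y, a (l y) = s y := by
    intro s
    obtain ⟨c, hc⟩ := hh s
    exact ⟨LinearMap.pi fun i => cmap T (c i), fun y => by rw [ha, hc]; rfl⟩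
  have has : Function.Surjective a := by
    obtain ⟨ι, _, r, hr⟩ := hgen (ModuleCat.of R N) hNI ‹_›
    intro n
    obtain ⟨t, rfl⟩ := hr n
    obtain ⟨l, hl⟩ := lift_ret a hfac (Z := ι → T) ⟨ι, inferInstance, LinearMap.id, LinearMap.id,
      fun _ => rfl⟩ r
    exact ⟨l t, hl t⟩
  have hC : FInj f (LinearMap.ker a) := by
    intro u
    obtain ⟨w, hw⟩ := (FInj.pi (ι := Fin m) hT) ((LinearMap.ker a).subtype ∘ₗ u)
    have hw' : ∀ x, w (f x) = u x := hw
    obtain ⟨μ, hμ⟩ := exists_factor g hg (a ∘ₗ w) (by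
      intro y hy
      obtain ⟨x, rfl⟩ := (hex y).1 hy
      rw [LinearMap.comp_apply, hw']
      exact (u x).2)
    obtain ⟨ν, hν⟩ := lift_ret a hfac hX μ
    refine ⟨LinearMap.codRestrict _ (w - ν ∘ₗ g) (fun y => ?_), fun x => Subtype.ext ?_⟩
    · rw [LinearMap.mem_ker, LinearMap.sub_apply, map_sub, LinearMap.comp_apply, hν, hμ]
      exact sub_self _
    · change w (f x) - ν (g (f x)) = u x
      rw [(hex _).2 ⟨x, rfl⟩, map_zero, sub_zero, hw']
  have hCg : Gen R (LinearMap.ker a) T := hgen (ModuleCat.of R (LinearMap.ker a)) hC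
    (inferInstance : Module.Finite R (LinearMap.ker a))
  obtain ⟨l, hl⟩ := hY.lift a has (hCg.trans hTY.gen) hN LinearMap.id
  exact ⟨Fin m, inferInstance, l, a, hl⟩

end completion3

set_option linter.style.haveILetI false
section completion4

variable {R : Type} [Ring R]

/-- dimension over the ground field -/
def kdim (K : Type) [Field K] (R : Type) [Ring R] [Algebra K R] (A : Type) [AddCommGroup A]
    [Module R A] : ℕ :=
  @Module.finrank K A _ _ (Module.compHom A (algebraMap K R))

section
variable (K : Type) [Field K] [Algebra K R] [Module.Finite K R]
variable {A B : Type} [AddCommGroup A] [Module R A] [AddCommGroup B] [Module R B]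

lemma finite_compHom (A : Type) [AddCommGroup A] [Module R A] [Module.Finite R A] :
    @Module.Finite K A _ _ (Module.compHom A (algebraMap K R)) := by
  letI : Module K A := Module.compHom A (algebraMap K R)
  haveI : IsScalarTower K R A := IsScalarTower.of_algebraMap_smul fun _ _ => rfl
  exact Module.Finite.trans R A

lemma kdim_le [Module.Finite R B] (i : A →ₗ[R] B) (hi : Function.Injective i) :
    kdim K R A ≤ kdim K R B := by
  letI : Module K A := Module.compHom A (algebraMap K R)
  letI : Module K B := Module.compHom B (algebraMap K R)
  haveI : Module.Finite K B := finite_compHom (R := R) K B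
  let i' : A →ₗ[K] B :=
    { toFun := i, map_add' := map_add i, map_smul' := fun c x => map_smul i (algebraMap K R c) x }
  exact LinearMap.finrank_le_finrank_of_injective (f := i') hi

lemma kdim_prod [Module.Finite R A] [Module.Finite R B] :
    kdim K R (A × B) = kdim K R A + kdim K R B := by
  letI : Module K A := Module.compHom A (algebraMap K R)
  letI : Module K B := Module.compHom B (algebraMap K R)
  haveI : Module.Finite K A := finite_compHom (R := R) K A
  haveI : Module.Finite K B := finite_compHom (R := R) K B
  exact Module.finrank_prod (R := K) (M := A) (M' := B)

lemma kdim_zero [Module.Finite R A] (h : kdim K R A = 0) : Subsingleton A := by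
  letI : Module K A := Module.compHom A (algebraMap K R)
  haveI : Module.Finite K A := finite_compHom (R := R) K A
  exact Module.finrank_zero_iff.1 h

end

lemma Ret.memAdd {N M : ModCat R} (h : Ret R N M) : MemAddMod N M := by
  obtain ⟨ι, _, i, r, hr⟩ := h
  let e : ι ≃ Fin (Fintype.card ι) := Fintype.equivFin ι
  let E : (ι → M) ≃ₗ[R] (Fin (Fintype.card ι) → M) := LinearEquiv.funCongrLeft R M e.symm
  let b := ModuleCat.biproductIsoPi (fun _ : Fin (Fintype.card ι) => M)
  refine ⟨Fintype.card ι, ModuleCat.ofHom (E.toLinearMap ∘ₗ i) ≫ b.inv,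
    b.hom ≫ ModuleCat.ofHom (r ∘ₗ E.symm.toLinearMap), ?_⟩
  ext x
  simp only [Category.assoc, Iso.inv_hom_id_assoc]
  change r (E.symm (E (i x))) = x
  rw [LinearEquiv.symm_apply_apply, hr]

lemma IsTauRigidMod.tr {M : ModCat R} (h : IsTauRigidMod M) : TR R M := by
  obtain ⟨P₁, P₀, f, g, h1, h0, -, -, hg, hex, hext⟩ := h
  refine ⟨P₁, P₀, f.hom, g.hom, ?_, ?_, hg, hex, fun u => ?_⟩
  · exact (IsProjective.iff_projective P₁).2 h1
  · exact (IsProjective.iff_projective P₀).2 h0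
  · obtain ⟨k, hk⟩ := hext (ModuleCat.ofHom u)
    exact ⟨k.hom, fun x => congrArg (fun t : P₁ ⟶ M => t.hom x) hk⟩

lemma PR.tauRigid {P₁ P₀ : Type} [AddCommGroup P₁] [Module R P₁] [AddCommGroup P₀] [Module R P₀]
    {f : P₁ →ₗ[R] P₀} {M : ModCat R} (h : PR f M) (hM : FInj f M) : IsTauRigidMod M := by
  obtain ⟨A₁, A₀, j, π, hp1, hp0, hf1, hf0, hj, hπ, hex, hext⟩ := h
  refine ⟨A₁, A₀, ModuleCat.ofHom j, ModuleCat.ofHom π, (IsProjective.iff_projective A₁).1 hp1,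
    (IsProjective.iff_projective A₀).1 hp0, hf1, hf0, hπ, hex, fun u => ?_⟩
  obtain ⟨k, hk⟩ := hext M hM u.hom
  exact ⟨ModuleCat.ofHom k, by ext x; exact hk x⟩

lemma ret_inl (M N : ModCat R) : Ret R M (M ⊞ N : ModCat R) :=
  Ret.of_maps (biprod.inl : M ⟶ M ⊞ N).hom (biprod.fst : M ⊞ N ⟶ M).hom fun x =>
    congrArg (fun t : M ⟶ M => t.hom x) (biprod.inl_fst (X := M) (Y := N))

lemma ret_inr (M N : ModCat R) : Ret R N (M ⊞ N : ModCat R) :=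
  Ret.of_maps (biprod.inr : N ⟶ M ⊞ N).hom (biprod.snd : M ⊞ N ⟶ N).hom fun x =>
    congrArg (fun t : N ⟶ N => t.hom x) (biprod.inr_snd (X := M) (Y := N))

lemma hom_zero_of_biprod {T N P Q : ModCat R} (h : ∀ u : P ⊞ Q ⟶ T ⊞ N, u = 0) (u : Q ⟶ T) :
    u = 0 := by
  have h1 := h (biprod.snd ≫ u ≫ biprod.inl)
  calc u = (biprod.inr : Q ⟶ P ⊞ Q) ≫ (biprod.snd ≫ u ≫ biprod.inl) ≫
        (biprod.fst : T ⊞ N ⟶ T) := by simp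
    _ = 0 := by rw [h1]; simp

theorem exists_supp (K : Type) [Field K] [Algebra K R] [Module.Finite K R]
    {P₁ P₀ X : Type} [AddCommGroup P₁] [Module R P₁] [AddCommGroup P₀] [Module R P₀]
    [AddCommGroup X] [Module R X] [Module.Finite R P₁] [Module.Finite R P₀]
    [Module.Projective R P₁] [Module.Projective R P₀] (f : P₁ →ₗ[R] P₀) (g : P₀ →ₗ[R] X)
    (hf : Function.Injective f) (hg : Function.Surjective g)
    (hex : ∀ y, g y = 0 ↔ ∃ x, f x = y) (hX : FInj f X) :
    ∃ T : ModCat R, IsSupportTauTiltingMod T ∧ IsBasicMod T ∧ Ret R X T ∧ Module.Finite R T := by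
  classical
  haveI : IsNoetherianRing R := IsNoetherianRing.of_finite K R
  obtain ⟨T, hTf, hTI, hTP, hXT, ⟨e, he⟩, hgen⟩ := completion K f g hf hg hex hX
  let p : ℕ → Prop := fun d => ∃ M : ModCat R, Ret R M T ∧ Ret R T M ∧ kdim K R M = d
  have hp : ∃ d, p d := ⟨_, T, Ret.refl, Ret.refl, rfl⟩
  obtain ⟨T', hT1, hT2, hd⟩ := Nat.find_spec hp
  have hT'f : Module.Finite R T' := hT1.gen.finite
  have hT'I : FInj f T' := hTI.gen hT1.gen
  have hT'P : PR f T' := by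
    obtain ⟨ι, _, i, r, hr⟩ := hT1
    exact (hTP.pi (ι := ι)).retract i r hr
  have hrig : IsTauRigidMod T' := hT'P.tauRigid hT'I
  refine ⟨T', ⟨ModuleCat.of R PUnit, ⟨hT'f, hrig, (inferInstance : Module.Finite R PUnit),
    (ModuleCat.isZero_of_subsingleton _).projective, ?_⟩, ?_⟩, ?_, hXT.trans hT2, hT'f⟩
  · intro u
    exact (ModuleCat.isZero_of_subsingleton (ModuleCat.of R PUnit)).eq_of_src _ _
  · rintro N Q ⟨hYf, hYr, hQf, hQp, hhom⟩
    have hTN := ret_inl T' N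
    have hNN := ret_inr T' N
    haveI : Module.Finite R (T' ⊞ N : ModCat R) := hYf
    haveI : Module.Finite R N := hNN.gen.finite
    constructor
    · exact ((hYr.tr.ret K T hf hg hex hXT hTI hgen (hT2.trans hTN) hNN).trans hT2).memAdd
    · have hQ0 : ∀ u : Q →ₗ[R] T', u = 0 := by
        intro u
        exact congrArg ModuleCat.Hom.hom (hom_zero_of_biprod hhom (ModuleCat.ofHom u))
      have hret := ret_inr (ModuleCat.of R PUnit) Q
      haveI : Module.Finite R (ModuleCat.of R PUnit ⊞ Q : ModCat R) := hQf
      haveI : Module.Finite R Q := hret.gen.finite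
      haveI : Module.Projective R Q := by
        haveI : Module.Projective R (ModuleCat.of R PUnit ⊞ Q : ModCat R) :=
          (IsProjective.iff_projective _).2 hQp
        obtain ⟨ι, _, i, r, hr⟩ := hret
        haveI : Module.Projective R (ι → (ModuleCat.of R PUnit ⊞ Q : ModCat R)) := proj_pi
        exact Module.Projective.of_split i r (LinearMap.ext hr)
      obtain ⟨m, q, hq⟩ := Module.Finite.exists_fin' R Q
      obtain ⟨s, hs⟩ := Module.projective_lifting_property q LinearMap.id hq
      obtain ⟨ι, _, i, r, hr⟩ := hT2
      have hs0 : ∀ x, s x = 0 := by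
        intro x
        funext a
        apply he
        have : i (e (s x a)) = 0 := by
          funext b
          have := LinearMap.congr_fun
            (hQ0 (LinearMap.proj b ∘ₗ i ∘ₗ e ∘ₗ LinearMap.proj a ∘ₗ s)) x
          exact this
        rw [← hr (e (s x a)), this]; simp
      have hQz : ∀ x : Q, x = 0 := fun x => by
        have := LinearMap.congr_fun hs x
        rw [LinearMap.comp_apply, hs0, map_zero] at this
        exact this.symm
      exact Ret.memAdd ⟨PEmpty, inferInstance, 0, 0, fun z => (hQz z).symm⟩
  · rintro N Z ⟨iso⟩
    let E : T' ≃ₗ[R] ((N ⊞ N) ⊞ Z : ModCat R) := iso.toLinearEquiv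
    let E1 : ((N ⊞ N) ⊞ Z : ModCat R) ≃ₗ[R] (N ⊞ N : ModCat R) × Z :=
      (ModuleCat.biprodIsoProd (N ⊞ N) Z).toLinearEquiv
    let E2 : (N ⊞ N : ModCat R) ≃ₗ[R] N × N := (ModuleCat.biprodIsoProd N N).toLinearEquiv
    let F : T' ≃ₗ[R] (N × N) × Z :=
      E.trans (E1.trans (LinearEquiv.prodCongr E2 (LinearEquiv.refl R Z)))
    haveI : Module.Finite R ((N × N) × Z) := Module.Finite.equiv F
    haveI : Module.Finite R N := Module.Finite.of_surjective
      (LinearMap.fst R N N ∘ₗ LinearMap.fst R (N × N) Z)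
      (fun x => ⟨((x, 0), 0), rfl⟩)
    haveI : Module.Finite R Z := Module.Finite.of_surjective (LinearMap.snd R (N × N) Z)
      (fun x => ⟨(0, x), rfl⟩)
    have h1 : Ret R (N × Z) T' := by
      refine Ret.of_maps (F.symm.toLinearMap ∘ₗ
        LinearMap.prodMap (LinearMap.inl R N N) LinearMap.id)
        (LinearMap.prodMap (LinearMap.fst R N N) LinearMap.id ∘ₗ F.toLinearMap) fun z => ?_
      simp only [LinearMap.comp_apply, LinearEquiv.coe_coe, LinearEquiv.apply_symm_apply]
      rfl
    have h2 : Ret R T' (N × Z) := by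
      let i : (N × N) × Z →ₗ[R] (Bool → N × Z) := LinearMap.pi fun b =>
        cond b (LinearMap.prodMap (LinearMap.fst R N N) LinearMap.id)
          (LinearMap.inl R N Z ∘ₗ LinearMap.snd R N N ∘ₗ LinearMap.fst R (N × N) Z)
      let r : (Bool → N × Z) →ₗ[R] (N × N) × Z := LinearMap.prod
        (LinearMap.prod (LinearMap.fst R N Z ∘ₗ LinearMap.proj true)
          (LinearMap.fst R N Z ∘ₗ LinearMap.proj false))
        (LinearMap.snd R N Z ∘ₗ LinearMap.proj true)
      refine ⟨Bool, inferInstance, i ∘ₗ F.toLinearMap, F.symm.toLinearMap ∘ₗ r, fun z => ?_⟩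
      have hri : ∀ y, r (i y) = y := fun y => rfl
      simp only [LinearMap.comp_apply, LinearEquiv.coe_coe, hri, LinearEquiv.symm_apply_apply]
    have h3 : Nat.find hp ≤ kdim K R (N × Z) := Nat.find_min' hp
      ⟨ModuleCat.of R (N × Z), h1.trans hT1, hT2.trans h2, rfl⟩
    have h4 : kdim K R ((N × N) × Z) ≤ kdim K R T' :=
      kdim_le K F.symm.toLinearMap F.symm.injective
    rw [hd, kdim_prod, kdim_prod] at h4
    rw [kdim_prod] at h3
    have h5 : kdim K R N = 0 := by omega
    haveI := kdim_zero K h5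
    exact ModuleCat.isZero_of_subsingleton N

theorem not_tau_finite (K : Type) [Field K] [Algebra K R] [Module.Finite K R]
    (H : ∀ m : ℕ, ∃ (P₁ P₀ X : ModCat R) (f : P₁ →ₗ[R] P₀) (g : P₀ →ₗ[R] X),
      Module.Finite R P₁ ∧ Module.Finite R P₀ ∧ Module.Projective R P₁ ∧ Module.Projective R P₀ ∧
      Function.Injective f ∧ Function.Surjective g ∧ (∀ y, g y = 0 ↔ ∃ x, f x = y) ∧ FInj f X ∧
      m < kdim K R X ∧ ∀ φ : X →ₗ[R] X, φ = 0 ∨ Function.Injective φ) :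
    ¬ IsTauTiltingFiniteRing R := by
  classical
  rintro ⟨n, F, hF⟩
  obtain ⟨P₁, P₀, X, f, g, _, _, _, _, hf, hg, hex, hX, hm, hbr⟩ :=
    H (∑ i, kdim K R (F i))
  obtain ⟨T, hs, hb, ⟨ι, _, i, r, hr⟩, hTf⟩ := exists_supp K f g hf hg hex hX
  obtain ⟨a, ⟨iso⟩⟩ := hF T hs hb
  let E : T ≃ₗ[R] F a := iso.toLinearEquiv
  haveI : Module.Finite R (F a) := Module.Finite.equiv E
  have h1 : kdim K R T ≤ kdim K R (F a) := kdim_le K E.toLinearMap E.injective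
  have h2 : kdim K R (F a) ≤ ∑ i, kdim K R (F i) :=
    Finset.single_le_sum (f := fun i => kdim K R (F i)) (fun _ _ => Nat.zero_le _)
      (Finset.mem_univ a)
  have h3 : ∃ b, Function.Injective ((r ∘ₗ LinearMap.single R (fun _ => (T : Type)) b) ∘ₗ
      (LinearMap.proj b ∘ₗ i)) := by
    by_contra hcon
    push Not at hcon
    have hz : ∀ x : X, x = 0 := by
      intro x
      have hx : i x = ∑ b, LinearMap.single R (fun _ => (T : Type)) b (i x b) := by
        simp [LinearMap.coe_single, Finset.univ_sum_single]
      rw [← hr x, hx, map_sum]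
      refine Finset.sum_eq_zero fun b _ => ?_
      have := (hbr _).resolve_right (hcon b)
      exact LinearMap.congr_fun this x
    haveI : Subsingleton X := ⟨fun x y => by rw [hz x, hz y]⟩
    have h0 : kdim K R X ≤ 0 := by
      have : kdim K R X ≤ kdim K R PUnit :=
        kdim_le K (0 : X →ₗ[R] PUnit) (fun x y _ => Subsingleton.elim x y)
      have h2 : kdim K R PUnit = 0 := by
        letI : Module K PUnit := Module.compHom PUnit (algebraMap K R)
        exact Module.finrank_zero_of_subsingleton (R := K) (M := PUnit)
      omega
    omega
  obtain ⟨b, hbi⟩ := h3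
  have h4 : kdim K R X ≤ kdim K R T :=
    kdim_le K (LinearMap.proj b ∘ₗ i) (fun x y hxy => hbi (by
      rw [LinearMap.comp_apply, hxy, ← LinearMap.comp_apply]))
  omega

end completion4

set_option linter.unusedSectionVars false
set_option linter.style.haveILetI false
section concrete

variable {K : Type} [Field K] {n : ℕ}

/-- ambient module of row vectors -/
def Amb (n : ℕ) (U : Type) : Type := Fin 2 × Fin n → U

instance (U : Type) [AddCommGroup U] : AddCommGroup (Amb n U) :=
  inferInstanceAs (AddCommGroup (Fin 2 × Fin n → U))

variable {U U' : Type} [AddCommGroup U] [Module K U] [AddCommGroup U'] [Module K U']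

instance : Module (LR K n) (Amb n U) where
  smul a x := fun w => ∑ z, mat a.unop z w • x z
  one_smul x := by
    funext w
    change ∑ z, (1 : Matrix _ _ K) z w • x z = x w
    rw [Finset.sum_eq_single w]
    · simp
    · intro z _ hz; simp [Matrix.one_apply_ne hz]
    · simp
  mul_smul a b x := by
    funext w
    change ∑ z, (mat b.unop * mat a.unop) z w • x z =
      ∑ y, mat a.unop y w • ∑ z, mat b.unop z y • x z
    simp only [Matrix.mul_apply, Finset.sum_smul, Finset.smul_sum, smul_smul]
    rw [Finset.sum_comm]
    refine Finset.sum_congr rfl fun y _ => Finset.sum_congr rfl fun z _ => ?_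
    rw [mul_comm]
  smul_zero a := by
    funext w
    exact Finset.sum_eq_zero fun z _ => smul_zero _
  smul_add a x y := by
    funext w
    change ∑ z, mat a.unop z w • (x z + y z) = ∑ z, mat a.unop z w • x z + ∑ z, mat a.unop z w • y z
    simp only [smul_add, Finset.sum_add_distrib]
  add_smul a b x := by
    funext w
    change ∑ z, (mat a.unop z w + mat b.unop z w) • x z = ∑ z, mat a.unop z w • x z + ∑ z, mat b.unop z w • x z
    simp only [add_smul, Finset.sum_add_distrib]
  zero_smul x := by
    funext w
    exact Finset.sum_eq_zero fun z _ => zero_smul K _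

lemma amb_smul (a : LR K n) (x : Amb n U) (w) : (a • x) w = ∑ z, mat a.unop z w • x z := rfl
lemma amb_add (x y : Amb n U) (w) : (x + y) w = x w + y w := rfl
lemma amb_zero (w) : (0 : Amb n U) w = 0 := rfl

/-- projective module generated by `U` at the vertex `v` -/
def Pt (K : Type) [Field K] (n : ℕ) (U : Type) [AddCommGroup U] [Module K U]
    (v : Fin 2 × Fin n) : Submodule (LR K n) (Amb n U) where
  carrier := {x | ∀ w, ¬ v ≤ w → x w = 0}
  add_mem' := fun {x y} hx hy w hw => by rw [amb_add, hx w hw, hy w hw, add_zero]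
  zero_mem' := fun w _ => rfl
  smul_mem' := fun a x hx w hw => by
    rw [amb_smul]
    refine Finset.sum_eq_zero fun z _ => ?_
    by_cases hz : v ≤ z
    · rw [mat_supp _ z w (fun h => hw (hz.trans h)), zero_smul]
    · rw [hx z hz, smul_zero]

/-- value of an element at a vertex -/
def ev {v : Fin 2 × Fin n} (x : Pt K n U v) (w : Fin 2 × Fin n) : U := (x : Amb n U) w

section evl
variable {v : Fin 2 × Fin n}
lemma ev_add (x y : Pt K n U v) (w) : ev (x + y) w = ev x w + ev y w := rfl
lemma ev_sub (x y : Pt K n U v) (w) : ev (x - y) w = ev x w - ev y w := rfl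
lemma ev_neg (x : Pt K n U v) (w) : ev (-x) w = - ev x w := rfl
lemma ev_zero (w) : ev (0 : Pt K n U v) w = 0 := rfl
lemma ev_smul (a : LR K n) (x : Pt K n U v) (w) :
    ev (a • x) w = ∑ z, mat a.unop z w • ev x z := rfl
lemma ev_supp (x : Pt K n U v) (w) (h : ¬ v ≤ w) : ev x w = 0 := x.2 w h
lemma ev_ext {x y : Pt K n U v} (h : ∀ w, ev x w = ev y w) : x = y :=
  Subtype.ext (funext h)
/-- evaluation as additive map -/
def evHom (v w : Fin 2 × Fin n) : Pt K n U v →+ U := ⟨⟨fun x => ev x w, rfl⟩, fun _ _ => rfl⟩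
lemma ev_sum {ι : Type} (s : Finset ι) (x : ι → Pt K n U v) (w) :
    ev (∑ i ∈ s, x i) w = ∑ i ∈ s, ev (x i) w := map_sum (evHom v w) x s

/-- element supported at the generating vertex -/
def dl (K : Type) [Field K] [Module K U] (v : Fin 2 × Fin n) (u : U) : Pt K n U v :=
  ⟨fun w => if w = v then u else 0, fun w hw => if_neg (fun h : w = v => hw (le_of_eq h.symm))⟩

lemma ev_dl (u : U) (w) : ev (dl K v u) w = if w = v then u else 0 := rfl

open Classical in
/-- matrix units -/
def eU (K : Type) [Field K] (v z : Fin 2 × Fin n) : LR K n :=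
  MulOpposite.op ⟨fun p q => if p = v ∧ q = z ∧ p ≤ q then 1 else 0, fun p q hpq => by
    simp [hpq]⟩

open Classical in
lemma mat_eU (v z p q : Fin 2 × Fin n) : mat (eU K v z).unop p q =
    if p = v ∧ q = z ∧ p ≤ q then 1 else 0 := rfl

lemma pt_eq_sum (x : Pt K n U v) : x = ∑ z, eU K v z • dl K v (ev x z) := by
  classical
  apply ev_ext; intro w
  rw [ev_sum, Finset.sum_eq_single w]
  · rw [ev_smul, Finset.sum_eq_single v]
    · rw [mat_eU, ev_dl]
      by_cases h : v ≤ w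
      · simp [h]
      · simp [h, ev_supp x w h]
    · intro z _ hz; rw [ev_dl, if_neg hz, smul_zero]
    · simp
  · intro z _ hz
    rw [ev_smul]
    refine Finset.sum_eq_zero fun y _ => ?_
    rw [mat_eU, if_neg, zero_smul]
    rintro ⟨-, h, -⟩; exact hz h.symm
  · simp

lemma ev_alg (c : K) (x : Pt K n U v) (w) : ev (algebraMap K (LR K n) c • x) w = c • ev x w := by
  rw [ev_smul, Finset.sum_eq_single w]
  · congr 1
    change (algebraMap K (Matrix (Fin 2 × Fin n) (Fin 2 × Fin n) K) c) w w = c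
    simp [Matrix.algebraMap_matrix_apply]
  · intro z _ hz
    have : mat (algebraMap K (LR K n) c).unop z w = 0 := by
      change (algebraMap K (Matrix (Fin 2 × Fin n) (Fin 2 × Fin n) K) c) z w = 0
      simp [Matrix.algebraMap_matrix_apply, hz]
    rw [this, zero_smul]
  · simp

end evl

lemma hom_pt {v v' : Fin 2 × Fin n} (φ : Pt K n U v →ₗ[LR K n] Pt K n U' v') :
    ∃ θ : U →ₗ[K] U', (∀ x w, ev (φ x) w = θ (ev x w)) ∧ (¬ v' ≤ v → θ = 0) := by
  classical
  let θ : U →ₗ[K] U' :=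
    { toFun := fun u => ev (φ (dl K v u)) v
      map_add' := fun a b => by
        have : dl K v (a + b) = dl K v a + dl K v b := by
          apply ev_ext; intro w; rw [ev_add]; simp only [ev_dl]; split <;> simp
        rw [this, map_add, ev_add]
      map_smul' := fun c a => by
        have : dl K v (c • a) = algebraMap K (LR K n) c • dl K v a := by
          apply ev_ext; intro w; rw [ev_alg]; simp only [ev_dl]; split <;> simp
        rw [this, map_smul, ev_alg]; rfl }
  refine ⟨θ, fun x w => ?_, fun h => LinearMap.ext fun u => ev_supp _ _ h⟩
  conv_lhs => rw [pt_eq_sum x, map_sum, ev_sum]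
  rw [Finset.sum_eq_single w]
  · rw [map_smul, ev_smul, Finset.sum_eq_single v]
    · rw [mat_eU]
      by_cases h : v ≤ w
      · simp [h, θ]
      · simp [h, ev_supp x w h]
    · intro z _ hz
      rw [mat_eU, if_neg (fun h => hz h.1), zero_smul]
    · simp
  · intro z _ hz
    rw [map_smul, ev_smul]
    refine Finset.sum_eq_zero fun y _ => ?_
    rw [mat_eU, if_neg, zero_smul]
    rintro ⟨-, h, -⟩; exact hz h.symm
  · simp

/-- map induced by a linear map -/
def pm {v v' : Fin 2 × Fin n} (h : v' ≤ v) (θ : U →ₗ[K] U') :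
    Pt K n U v →ₗ[LR K n] Pt K n U' v' where
  toFun x := ⟨fun w => θ (ev x w), fun w hw => by
    change θ (ev x w) = 0
    rw [ev_supp x w (fun h' => hw (h.trans h')), map_zero]⟩
  map_add' x y := ev_ext fun w => map_add θ _ _
  map_smul' a x := ev_ext fun w => by
    change θ (ev (a • x) w) = _
    rw [RingHom.id_apply, ev_smul, ev_smul, map_sum]
    exact Finset.sum_congr rfl fun z _ => map_smul θ _ _

lemma ev_pm {v v' : Fin 2 × Fin n} (h : v' ≤ v) (θ : U →ₗ[K] U') (x : Pt K n U v) (w) :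
    ev (pm h θ x) w = θ (ev x w) := rfl

section proj
variable {J : Type} [Fintype J] {v : Fin 2 × Fin n}

open Classical in
/-- embedding into a free module -/
def ptInc (v : Fin 2 × Fin n) : Pt K n (J → K) v →ₗ[LR K n] (J → LR K n) where
  toFun x j := MulOpposite.op ⟨fun p q => if p = v ∧ p ≤ q then ev x q j else 0,
    fun p q hpq => by simp [hpq]⟩
  map_add' x y := by
    funext j
    apply MulOpposite.unop_injective
    apply mat_ext; intro p q
    change (if _ then ev x q j + ev y q j else 0) =
      (if _ then ev x q j else 0) + (if _ then ev y q j else 0)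
    split <;> simp
  map_smul' a x := by
    funext j
    apply MulOpposite.unop_injective
    apply mat_ext; intro p q
    change (if p = v ∧ p ≤ q then ev (a • x) q j else 0) =
      ∑ z, (if p = v ∧ p ≤ z then ev x z j else 0) * mat a.unop z q
    rw [ev_smul, Finset.sum_apply]
    by_cases hp : p = v
    · subst hp
      by_cases hq : p ≤ q
      · rw [if_pos ⟨rfl, hq⟩]
        refine Finset.sum_congr rfl fun z _ => ?_
        by_cases hz : p ≤ z
        · simp [hz, mul_comm]
        · simp [hz, ev_supp x z hz]
      · rw [if_neg (fun h => hq h.2)]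
        symm
        refine Finset.sum_eq_zero fun z _ => ?_
        by_cases hz : p ≤ z
        · rw [mat_supp _ z q (fun h => hq (hz.trans h)), mul_zero]
        · simp [hz]
    · simp [hp]

/-- projection from a free module -/
def ptPr (v : Fin 2 × Fin n) : (J → LR K n) →ₗ[LR K n] Pt K n (J → K) v where
  toFun m := ⟨fun w j => mat (m j).unop v w, fun w hw => funext fun j => mat_supp _ _ _ hw⟩
  map_add' x y := rfl
  map_smul' a m := ev_ext fun w => by
    funext j
    change (mat (m j).unop * mat a.unop) v w = _
    rw [RingHom.id_apply, ev_smul, Finset.sum_apply, Matrix.mul_apply]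
    exact Finset.sum_congr rfl fun z _ => mul_comm _ _

lemma ptPr_inc (x : Pt K n (J → K) v) : ptPr v (ptInc v x) = x := by
  classical
  apply ev_ext; intro w
  funext j
  change (if v = v ∧ v ≤ w then ev x w j else 0) = _
  by_cases h : v ≤ w
  · simp [h]
  · simp [h, ev_supp x w h]

instance : Module.Projective (LR K n) (Pt K n (J → K) v) :=
  Module.Projective.of_split (ptInc v) (ptPr v) (LinearMap.ext ptPr_inc)

instance : Module.Finite (LR K n) (Pt K n (J → K) v) :=
  Module.Finite.of_surjective (ptPr v) (fun x => ⟨ptInc v x, ptPr_inc x⟩)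

end proj

end concrete

section kron
variable {K : Type} [Field K] {m : ℕ}

/-- first Kronecker map -/
def kf (K : Type) [Field K] (m : ℕ) : (Fin m → K) →ₗ[K] (Fin (m + 1) → K) where
  toFun a := Fin.snoc (α := fun _ => K) a 0
  map_add' x y := by
    funext i
    refine Fin.lastCases ?_ (fun i => ?_) i <;> simp
  map_smul' c x := by
    funext i
    refine Fin.lastCases ?_ (fun i => ?_) i <;> simp

/-- second Kronecker map -/
def kg (K : Type) [Field K] (m : ℕ) : (Fin m → K) →ₗ[K] (Fin (m + 1) → K) where
  toFun a := Fin.cons (α := fun _ => K) 0 a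
  map_add' x y := by
    funext i
    refine Fin.cases ?_ (fun i => ?_) i <;> simp
  map_smul' c x := by
    funext i
    refine Fin.cases ?_ (fun i => ?_) i <;> simp

lemma kf_cs (a : Fin m → K) (i) : kf K m a i.castSucc = a i := by simp [kf]
lemma kf_last (a : Fin m → K) : kf K m a (Fin.last m) = 0 := by simp [kf]
lemma kg_s (a : Fin m → K) (i) : kg K m a i.succ = a i := by simp [kg]
lemma kg_z (a : Fin m → K) : kg K m a 0 = 0 := by simp [kg]
lemma kf_single (j : Fin m) : kf K m (Pi.single j 1) = Pi.single j.castSucc 1 := by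
  funext i
  refine Fin.lastCases ?_ (fun i => ?_) i
  · rw [kf_last, Pi.single_eq_of_ne]
    exact (Fin.castSucc_lt_last j).ne'
  · rw [kf_cs]
    by_cases h : i = j
    · subst h; simp
    · rw [Pi.single_eq_of_ne h, Pi.single_eq_of_ne]
      exact fun h' => h (Fin.castSucc_injective _ h')
lemma kg_single (j : Fin m) : kg K m (Pi.single j 1) = Pi.single j.succ 1 := by
  funext i
  refine Fin.cases ?_ (fun i => ?_) i
  · rw [kg_z, Pi.single_eq_of_ne]
    exact (Fin.succ_ne_zero j).symm
  · rw [kg_s]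
    by_cases h : i = j
    · subst h; simp
    · rw [Pi.single_eq_of_ne h, Pi.single_eq_of_ne]
      exact fun h' => h (Fin.succ_injective _ h')

lemma kron_ker (α : (Fin m → K) →ₗ[K] (Fin m → K)) (β : (Fin (m + 1) → K) →ₗ[K] (Fin (m + 1) → K))
    (hf : ∀ a, kf K m (α a) = β (kf K m a)) (hg : ∀ a, kg K m (α a) = β (kg K m a)) :
    ∃ c : K, (∀ a, α a = c • a) ∧ ∀ b, β b = c • b := by
  let b : Fin (m + 1) → Fin (m + 1) → K := fun i j => β (Pi.single j 1) i
  have hf1 : ∀ i j, b i (Fin.castSucc j) = kf K m (α (Pi.single j 1)) i := fun i j => by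
    rw [hf, kf_single]
  have hg1 : ∀ i j, b i (Fin.succ j) = kg K m (α (Pi.single j 1)) i := fun i j => by
    rw [hg, kg_single]
  have h1 : ∀ i j : Fin m, b i.succ j.succ = b i.castSucc j.castSucc := fun i j => by
    rw [hf1, hg1, kf_cs, kg_s]
  have h2 : ∀ j : Fin m, b (Fin.last m) j.castSucc = 0 := fun j => by rw [hf1, kf_last]
  have h3 : ∀ j : Fin m, b 0 j.succ = 0 := fun j => by rw [hg1, kg_z]
  have hup : ∀ i j, i < j → b i j = 0 := by
    intro i
    induction i using Fin.induction with
    | zero =>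
      intro j
      refine Fin.cases ?_ (fun j => ?_) j
      · intro h; exact absurd h (lt_irrefl _)
      · intro _; exact h3 j
    | succ i ih =>
      intro j
      refine Fin.cases ?_ (fun j => ?_) j
      · intro h; exact absurd h (Fin.not_lt_zero _)
      · intro h
        rw [h1]
        exact ih _ (Fin.castSucc_lt_castSucc_iff.2 (Fin.succ_lt_succ_iff.1 h))
  have hlo : ∀ i j, j < i → b i j = 0 := by
    intro i
    induction i using Fin.reverseInduction with
    | last =>
      intro j
      refine Fin.lastCases ?_ (fun j => ?_) j
      · intro h; exact absurd h (lt_irrefl _)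
      · intro _; exact h2 j
    | cast i ih =>
      intro j
      refine Fin.lastCases ?_ (fun j => ?_) j
      · intro h; exact absurd h (Fin.le_last _).not_gt
      · intro h
        rw [← h1]
        exact ih _ (Fin.succ_lt_succ_iff.2 (Fin.castSucc_lt_castSucc_iff.1 h))
  have hdi : ∀ i, b i i = b 0 0 := by
    intro i
    induction i using Fin.induction with
    | zero => rfl
    | succ i ih => rw [h1, ih]
  have hβ : ∀ x, β x = b 0 0 • x := by
    intro x
    funext i
    have hx : x = ∑ j, x j • Pi.single (M := fun _ => K) j 1 := by
      funext k; simp [Finset.sum_apply, Pi.single_apply]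
    conv_lhs => rw [hx, map_sum, Finset.sum_apply]
    rw [Finset.sum_eq_single i]
    · rw [map_smul, Pi.smul_apply, Pi.smul_apply, smul_eq_mul, smul_eq_mul, mul_comm, ← hdi i]
    · intro j _ hj
      rw [map_smul, Pi.smul_apply]
      have : b i j = 0 := by
        rcases lt_or_gt_of_ne hj with h | h
        · exact hlo _ _ h
        · exact hup _ _ h
      change x j • b i j = 0
      rw [this, smul_zero]
    · simp
  refine ⟨b 0 0, fun a => ?_, hβ⟩
  funext i
  rw [← kf_cs (α a) i, hf, hβ, Pi.smul_apply, kf_cs]; rfl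

lemma kron_surj (p q : (Fin m → K) →ₗ[K] (Fin (m + 1) → K)) :
    ∃ (α : (Fin m → K) →ₗ[K] (Fin m → K)) (β : (Fin (m + 1) → K) →ₗ[K] (Fin (m + 1) → K)),
      (∀ a, kf K m (α a) - β (kf K m a) = p a) ∧ ∀ a, kg K m (α a) - β (kg K m a) = q a := by
  let L : (((Fin m → K) →ₗ[K] (Fin m → K)) × ((Fin (m + 1) → K) →ₗ[K] (Fin (m + 1) → K))) →ₗ[K]
      (((Fin m → K) →ₗ[K] (Fin (m + 1) → K)) × ((Fin m → K) →ₗ[K] (Fin (m + 1) → K))) :=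
    { toFun := fun t => (kf K m ∘ₗ t.1 - t.2 ∘ₗ kf K m, kg K m ∘ₗ t.1 - t.2 ∘ₗ kg K m)
      map_add' := fun s t => by
        ext <;> simp <;> ring
      map_smul' := fun c t => by
        ext <;> simp <;> ring }
  have hker : LinearMap.ker L ≤ Submodule.span K {(LinearMap.id, LinearMap.id)} := by
    rintro ⟨α, β⟩ h
    have h1 := congrArg Prod.fst h
    have h2 := congrArg Prod.snd h
    obtain ⟨c, hc1, hc2⟩ := kron_ker α β
      (fun a => sub_eq_zero.1 (LinearMap.congr_fun h1 a))
      (fun a => sub_eq_zero.1 (LinearMap.congr_fun h2 a))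
    rw [Submodule.mem_span_singleton]
    refine ⟨c, Prod.ext (LinearMap.ext fun a => ?_) (LinearMap.ext fun a => ?_)⟩
    · exact (hc1 a).symm
    · exact (hc2 a).symm
  have hk1 : Module.finrank K (LinearMap.ker L) ≤ 1 :=
    (Submodule.finrank_mono hker).trans ((finrank_span_le_card _).trans (by simp))
  have hrn := LinearMap.finrank_range_add_finrank_ker L
  have hs : LinearMap.range L = ⊤ := by
    apply Submodule.eq_top_of_finrank_eq
    apply le_antisymm (Submodule.finrank_le _)
    simp only [Module.finrank_prod, Module.finrank_linearMap, Module.finrank_fin_fun] at hrn ⊢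
    nlinarith
  obtain ⟨⟨α, β⟩, h⟩ := LinearMap.range_eq_top.1 hs (p, q)
  exact ⟨α, β, fun a => LinearMap.congr_fun (congrArg Prod.fst h) a,
    fun a => LinearMap.congr_fun (congrArg Prod.snd h) a⟩

end kron

set_option linter.style.haveILetI false
section family
variable {K : Type} [Field K] {n : ℕ}

/-- upper vertices -/
def va (hn : 5 ≤ n) (i : Fin 5) : Fin 2 × Fin n := (0, Fin.castLE hn i)
/-- lower vertices -/
def vb (hn : 5 ≤ n) (i : Fin 5) : Fin 2 × Fin n := (1, Fin.castLE hn i)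

lemma va_va (hn : 5 ≤ n) (i j : Fin 5) : va hn i ≤ va hn j ↔ i ≤ j := by
  simp [va, Prod.le_def]
lemma vb_vb (hn : 5 ≤ n) (i j : Fin 5) : vb hn i ≤ vb hn j ↔ i ≤ j := by
  simp [vb, Prod.le_def]
lemma va_vb (hn : 5 ≤ n) (i j : Fin 5) : va hn i ≤ vb hn j ↔ i ≤ j := by
  simp [va, vb, Prod.le_def]
lemma vb_va (hn : 5 ≤ n) (i j : Fin 5) : ¬ vb hn i ≤ va hn j := by
  simp [va, vb, Prod.le_def]

variable {U₁ U₂ U₃ W : Type} [AddCommGroup U₁] [Module K U₁] [AddCommGroup U₂] [Module K U₂]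
  [AddCommGroup U₃] [Module K U₃] [AddCommGroup W] [Module K W]

lemma hom_pt3 {v₁ v₂ v₃ v : Fin 2 × Fin n}
    (φ : (Pt K n U₁ v₁ × Pt K n U₂ v₂ × Pt K n U₃ v₃) →ₗ[LR K n] Pt K n W v) :
    ∃ (t₁ : U₁ →ₗ[K] W) (t₂ : U₂ →ₗ[K] W) (t₃ : U₃ →ₗ[K] W),
      (∀ x w, ev (φ x) w = t₁ (ev x.1 w) + t₂ (ev x.2.1 w) + t₃ (ev x.2.2 w)) ∧
      (¬ v ≤ v₁ → t₁ = 0) ∧ (¬ v ≤ v₂ → t₂ = 0) ∧ (¬ v ≤ v₃ → t₃ = 0) := by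
  obtain ⟨t₁, h1, z1⟩ := hom_pt (φ ∘ₗ LinearMap.inl _ _ _)
  obtain ⟨t₂, h2, z2⟩ := hom_pt (φ ∘ₗ LinearMap.inr _ _ _ ∘ₗ LinearMap.inl _ _ _)
  obtain ⟨t₃, h3, z3⟩ := hom_pt (φ ∘ₗ LinearMap.inr _ _ _ ∘ₗ LinearMap.inr _ _ _)
  refine ⟨t₁, t₂, t₃, fun x w => ?_, z1, z2, z3⟩
  rw [← h1, ← h2, ← h3, ← ev_add, ← ev_add]
  simp only [LinearMap.comp_apply, ← map_add]
  congr 2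
  ext <;> simp

variable (K) in
/-- the relation module -/
abbrev FP1 (hn : 5 ≤ n) (m : ℕ) : Type :=
  Pt K n (Fin m → K) (va hn 4) × Pt K n (Fin m → K) (vb hn 2) × Pt K n (Fin (m + 1) → K) (vb hn 3)

variable (K) in
/-- the generator module -/
abbrev FP0 (hn : 5 ≤ n) (m : ℕ) : Type :=
  Pt K n (Fin m → K) (va hn 1) × Pt K n (Fin m → K) (vb hn 0) × Pt K n (Fin (m + 1) → K) (va hn 2)

/-- project, then apply an induced map -/
def p1 {v₁ v₂ v₃ v : Fin 2 × Fin n} (h : v ≤ v₁) (t : U₁ →ₗ[K] W) :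
    (Pt K n U₁ v₁ × Pt K n U₂ v₂ × Pt K n U₃ v₃) →ₗ[LR K n] Pt K n W v :=
  pm h t ∘ₗ LinearMap.fst _ _ _
/-- project, then apply an induced map -/
def p2 {v₁ v₂ v₃ v : Fin 2 × Fin n} (h : v ≤ v₂) (t : U₂ →ₗ[K] W) :
    (Pt K n U₁ v₁ × Pt K n U₂ v₂ × Pt K n U₃ v₃) →ₗ[LR K n] Pt K n W v :=
  pm h t ∘ₗ LinearMap.fst _ _ _ ∘ₗ LinearMap.snd _ _ _
/-- project, then apply an induced map -/
def p3 {v₁ v₂ v₃ v : Fin 2 × Fin n} (h : v ≤ v₃) (t : U₃ →ₗ[K] W) :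
    (Pt K n U₁ v₁ × Pt K n U₂ v₂ × Pt K n U₃ v₃) →ₗ[LR K n] Pt K n W v :=
  pm h t ∘ₗ LinearMap.snd _ _ _ ∘ₗ LinearMap.snd _ _ _

variable (K) in
/-- the presentation map -/
def FD (hn : 5 ≤ n) (m : ℕ) : FP1 K hn m →ₗ[LR K n] FP0 K hn m :=
  LinearMap.prod
    (p1 ((va_va hn 1 4).2 (by decide)) LinearMap.id - p2 ((va_vb hn 1 2).2 (by decide)) LinearMap.id)
    (LinearMap.prod (p2 ((vb_vb hn 0 2).2 (by decide)) LinearMap.id)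
      (-p1 ((va_va hn 2 4).2 (by decide)) (kf K m) +
        p2 ((va_vb hn 2 2).2 (by decide)) (kf K m - kg K m) +
        p3 ((va_vb hn 2 3).2 (by decide)) LinearMap.id))

section
variable (hn : 5 ≤ n) (m : ℕ)
lemma FD1 (x : FP1 K hn m) (w) : ev (FD K hn m x).1 w = ev x.1 w - ev x.2.1 w := rfl
lemma FD2 (x : FP1 K hn m) (w) : ev (FD K hn m x).2.1 w = ev x.2.1 w := rfl
lemma FD3 (x : FP1 K hn m) (w) : ev (FD K hn m x).2.2 w =
    -kf K m (ev x.1 w) + (kf K m (ev x.2.1 w) - kg K m (ev x.2.1 w)) + ev x.2.2 w := rfl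

lemma FD_inj : Function.Injective (FD K hn m) := by
  rw [injective_iff_map_eq_zero]
  intro x hx
  have h1 : ∀ w, ev x.1 w - ev x.2.1 w = 0 := fun w => by rw [← FD1, hx]; rfl
  have h2 : ∀ w, ev x.2.1 w = 0 := fun w => by rw [← FD2, hx]; rfl
  have h3 : ∀ w, -kf K m (ev x.1 w) + (kf K m (ev x.2.1 w) - kg K m (ev x.2.1 w)) + ev x.2.2 w
      = 0 := fun w => by rw [← FD3, hx]; rfl
  have h1' : ∀ w, ev x.1 w = 0 := fun w => by simpa [h2 w] using h1 w
  refine Prod.ext (ev_ext h1') (Prod.ext (ev_ext h2) (ev_ext fun w => ?_))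
  have := h3 w
  rw [h1', h2, map_zero, map_zero] at this
  change ev x.2.2 w = 0
  simpa using this

lemma FD_rigid (h : FP1 K hn m →ₗ[LR K n] FP0 K hn m) :
    ∃ k : FP0 K hn m →ₗ[LR K n] FP0 K hn m, ∀ x, ∃ y, h x = k (FD K hn m x) + FD K hn m y := by
  obtain ⟨r1, t1, u1, h1, -, -, -⟩ := hom_pt3 (LinearMap.fst _ _ _ ∘ₗ h)
  obtain ⟨r2, t2, u2, h2, hr2, -, -⟩ := hom_pt3 (LinearMap.fst _ _ _ ∘ₗ LinearMap.snd _ _ _ ∘ₗ h)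
  obtain ⟨r3, t3, u3, h3, -, -, -⟩ := hom_pt3 (LinearMap.snd _ _ _ ∘ₗ LinearMap.snd _ _ _ ∘ₗ h)
  have hr2 := hr2 (vb_va hn _ _)
  let F := kf K m
  let G := kg K m
  let k31 := u1 + u2
  let s := k31 ∘ₗ (F - G) - t1
  obtain ⟨α, β, hα, hβ⟩ := kron_surj (r3 + F ∘ₗ (r1 + k31 ∘ₗ F))
    ((r3 + F ∘ₗ (r1 + k31 ∘ₗ F)) + t3 - (F - G) ∘ₗ s)
  let l2 := s - α
  let k2 := t2 - l2
  let l1 := r1 - α + k31 ∘ₗ F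
  let k : FP0 K hn m →ₗ[LR K n] FP0 K hn m := LinearMap.prod
    (p1 le_rfl α + p3 ((va_va hn 1 2).2 (by decide)) k31)
    (LinearMap.prod (p2 le_rfl k2) (p3 le_rfl β))
  refine ⟨k, fun x => ⟨(p1 le_rfl l1 x, p2 le_rfl l2 x + p3 ((vb_vb hn 2 3).2 (by decide)) u2 x,
    p3 le_rfl (u3 - β - (F - G) ∘ₗ u2) x), ?_⟩⟩
  refine Prod.ext (ev_ext fun w => ?_) (Prod.ext (ev_ext fun w => ?_) (ev_ext fun w => ?_))
  · refine (h1 x w).trans ?_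
    change _ = (α (ev (FD K hn m x).1 w) + k31 (ev (FD K hn m x).2.2 w)) +
      (l1 (ev x.1 w) - (l2 (ev x.2.1 w) + u2 (ev x.2.2 w)))
    rw [FD1, FD3]
    simp only [l1, l2, s, k31, F, G, LinearMap.add_apply, LinearMap.sub_apply,
      LinearMap.comp_apply, map_add, map_sub, map_neg]
    abel
  · refine (h2 x w).trans ?_
    change _ = k2 (ev (FD K hn m x).2.1 w) + (l2 (ev x.2.1 w) + u2 (ev x.2.2 w))
    rw [FD2, hr2]
    simp only [k2, LinearMap.zero_apply, LinearMap.sub_apply]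
    abel
  · refine (h3 x w).trans ?_
    change _ = β (ev (FD K hn m x).2.2 w) + (-F (l1 (ev x.1 w)) +
      (F (l2 (ev x.2.1 w) + u2 (ev x.2.2 w)) - G (l2 (ev x.2.1 w) + u2 (ev x.2.2 w))) +
      (u3 - β - (F - G) ∘ₗ u2) (ev x.2.2 w))
    rw [FD3]
    have e1 : r3 (ev x.1 w) = (kf K m (α (ev x.1 w)) - β (kf K m (ev x.1 w))) -
        F (r1 (ev x.1 w) + k31 (F (ev x.1 w))) := by
      rw [hα]; simp
    have e2 : t3 (ev x.2.1 w) = (kg K m (α (ev x.2.1 w)) - β (kg K m (ev x.2.1 w))) -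
        (kf K m (α (ev x.2.1 w)) - β (kf K m (ev x.2.1 w))) +
        (F (s (ev x.2.1 w)) - G (s (ev x.2.1 w))) := by
      rw [hα, hβ]; simp only [LinearMap.add_apply, LinearMap.sub_apply, LinearMap.comp_apply]; abel
    rw [e1, e2]
    simp only [l1, l2, F, G, LinearMap.add_apply, LinearMap.sub_apply,
      LinearMap.comp_apply, map_add, map_sub, map_neg]
    abel

lemma FD_brick (k : FP0 K hn m →ₗ[LR K n] FP0 K hn m) (l : FP1 K hn m →ₗ[LR K n] FP1 K hn m)
    (hkl : ∀ x, k (FD K hn m x) = FD K hn m (l x)) :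
    ∃ c : K, ∀ x, k x = algebraMap K (LR K n) c • x := by
  obtain ⟨k1, z12, k31, h1, -, hz12, -⟩ := hom_pt3 (LinearMap.fst _ _ _ ∘ₗ k)
  obtain ⟨z21, k2, z23, h2, hz21, -, hz23⟩ :=
    hom_pt3 (LinearMap.fst _ _ _ ∘ₗ LinearMap.snd _ _ _ ∘ₗ k)
  obtain ⟨z31, z32, k33, h3, hz31, hz32, -⟩ :=
    hom_pt3 (LinearMap.snd _ _ _ ∘ₗ LinearMap.snd _ _ _ ∘ₗ k)
  obtain ⟨l1, y12, y13, g1, -, hy12, hy13⟩ := hom_pt3 (LinearMap.fst _ _ _ ∘ₗ l)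
  obtain ⟨y21, l2, l23, g2, hy21, -, -⟩ :=
    hom_pt3 (LinearMap.fst _ _ _ ∘ₗ LinearMap.snd _ _ _ ∘ₗ l)
  obtain ⟨y31, y32, l33, g3, hy31, hy32, -⟩ :=
    hom_pt3 (LinearMap.snd _ _ _ ∘ₗ LinearMap.snd _ _ _ ∘ₗ l)
  have h1 : ∀ x w, ev (k x).1 w = k1 (ev x.1 w) + k31 (ev x.2.2 w) := fun x w => by
    refine (h1 x w).trans ?_
    rw [hz12 (by rw [va_vb]; decide)]; simp
  have h2 : ∀ x w, ev (k x).2.1 w = k2 (ev x.2.1 w) := fun x w => by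
    refine (h2 x w).trans ?_
    rw [hz21 (vb_va hn _ _), hz23 (vb_va hn _ _)]; simp
  have h3 : ∀ x w, ev (k x).2.2 w = k33 (ev x.2.2 w) := fun x w => by
    refine (h3 x w).trans ?_
    rw [hz31 (by rw [va_va]; decide), hz32 (by rw [va_vb]; decide)]; simp
  have g1 : ∀ x w, ev (l x).1 w = l1 (ev x.1 w) := fun x w => by
    refine (g1 x w).trans ?_
    rw [hy12 (by rw [va_vb]; decide), hy13 (by rw [va_vb]; decide)]; simp
  have g2 : ∀ x w, ev (l x).2.1 w = l2 (ev x.2.1 w) + l23 (ev x.2.2 w) := fun x w => by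
    refine (g2 x w).trans ?_
    rw [hy21 (vb_va hn _ _)]; simp
  have g3 : ∀ x w, ev (l x).2.2 w = l33 (ev x.2.2 w) := fun x w => by
    refine (g3 x w).trans ?_
    rw [hy31 (vb_va hn _ _), hy32 (by rw [vb_vb]; decide)]; simp
  have E1 : ∀ (x : FP1 K hn m) w, k1 (ev x.1 w - ev x.2.1 w) + k31 (-kf K m (ev x.1 w) +
      (kf K m (ev x.2.1 w) - kg K m (ev x.2.1 w)) + ev x.2.2 w) =
      l1 (ev x.1 w) - (l2 (ev x.2.1 w) + l23 (ev x.2.2 w)) := fun x w => by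
    have := h1 (FD K hn m x) w
    rw [hkl, FD1, FD1, FD3, g1, g2] at this; exact this.symm
  have E2 : ∀ x : FP1 K hn m, ∀ w, k2 (ev x.2.1 w) = l2 (ev x.2.1 w) + l23 (ev x.2.2 w) :=
    fun x w => by
    have := h2 (FD K hn m x) w
    rw [hkl, FD2, FD2, g2] at this; exact this.symm
  have E3 : ∀ (x : FP1 K hn m) w, k33 (-kf K m (ev x.1 w) +
      (kf K m (ev x.2.1 w) - kg K m (ev x.2.1 w)) + ev x.2.2 w) =
      -kf K m (l1 (ev x.1 w)) + (kf K m (l2 (ev x.2.1 w) + l23 (ev x.2.2 w)) -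
        kg K m (l2 (ev x.2.1 w) + l23 (ev x.2.2 w))) + l33 (ev x.2.2 w) := fun x w => by
    have := h3 (FD K hn m x) w
    rw [hkl, FD3, FD3, g1, g2, g3] at this; exact this.symm
  have xr : ∀ a, ∃ (x : FP1 K hn m) (w : _), ev x.1 w = a ∧ ev x.2.1 w = 0 ∧ ev x.2.2 w = 0 :=
    fun a => ⟨(dl K _ a, 0, 0), va hn 4, by simp [ev_dl], rfl, rfl⟩
  have xt : ∀ a, ∃ (x : FP1 K hn m) (w : _), ev x.1 w = 0 ∧ ev x.2.1 w = a ∧ ev x.2.2 w = 0 :=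
    fun a => ⟨(0, dl K _ a, 0), vb hn 2, rfl, by simp [ev_dl], rfl⟩
  have xu : ∀ a, ∃ (x : FP1 K hn m) (w : _), ev x.1 w = 0 ∧ ev x.2.1 w = 0 ∧ ev x.2.2 w = a :=
    fun a => ⟨(0, 0, dl K _ a), vb hn 3, rfl, rfl, by simp [ev_dl]⟩
  have c1 : ∀ b, l23 b = 0 := fun b => by
    obtain ⟨x, w, e1, e2, e3⟩ := xu b
    have := E2 x w
    simp only [e2, e3, map_zero, zero_add] at this
    exact this.symm
  have c2 : ∀ b, k31 b = 0 := fun b => by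
    obtain ⟨x, w, e1, e2, e3⟩ := xu b
    have := E1 x w
    simpa [e1, e2, e3, c1] using this
  have c3 : ∀ a, l1 a = k1 a := fun a => by
    obtain ⟨x, w, e1, e2, e3⟩ := xr a
    have := E1 x w
    simpa [e1, e2, e3, c1, c2] using this.symm
  have c4 : ∀ a, l2 a = k1 a := fun a => by
    obtain ⟨x, w, e1, e2, e3⟩ := xt a
    have := E1 x w
    simpa [e1, e2, e3, c1, c2] using this.symm
  have c5 : ∀ a, k2 a = k1 a := fun a => by
    obtain ⟨x, w, e1, e2, e3⟩ := xt a
    have := E2 x w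
    simpa [e1, e2, e3, c1, c4] using this
  have c6 : ∀ a, kf K m (k1 a) = k33 (kf K m a) := fun a => by
    obtain ⟨x, w, e1, e2, e3⟩ := xr a
    have := E3 x w
    simpa [e1, e2, e3, c1, c3] using this.symm
  have c7 : ∀ a, kg K m (k1 a) = k33 (kg K m a) := fun a => by
    obtain ⟨x, w, e1, e2, e3⟩ := xt a
    have := E3 x w
    simpa [e1, e2, e3, c1, c4, c6] using this.symm
  obtain ⟨c, hc1, hc2⟩ := kron_ker k1 k33 c6 c7
  refine ⟨c, fun x => ?_⟩
  refine Prod.ext (ev_ext fun w => ?_) (Prod.ext (ev_ext fun w => ?_) (ev_ext fun w => ?_))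
  · rw [h1, c2, add_zero, hc1]; exact (ev_alg c x.1 w).symm
  · rw [h2, c5, hc1]; exact (ev_alg c x.2.1 w).symm
  · rw [h3, hc2]; exact (ev_alg c x.2.2 w).symm

end

set_option maxHeartbeats 1600000 in
theorem not_finite_large (K : Type) [Field K] (n : ℕ) (hn : 5 ≤ n) :
    ¬ IsTauTiltingFinite (CommLadder K n) := by
  refine not_tau_finite (R := LR K n) K fun M => ?_
  let m := M + 1
  let D := FD K hn m
  let X := FP0 K hn m ⧸ LinearMap.range D
  let q : FP0 K hn m →ₗ[LR K n] X := (LinearMap.range D).mkQ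
  have hq : Function.Surjective q := Submodule.mkQ_surjective _
  have hker : ∀ a, q a = 0 ↔ ∃ b, D b = a := fun a => by
    rw [← LinearMap.mem_ker, Submodule.ker_mkQ]; rfl
  refine ⟨ModuleCat.of _ (FP1 K hn m), ModuleCat.of _ (FP0 K hn m), ModuleCat.of _ X, D, q,
    (inferInstance : Module.Finite (LR K n) (FP1 K hn m)),
    (inferInstance : Module.Finite (LR K n) (FP0 K hn m)),
    (inferInstance : Module.Projective (LR K n) (FP1 K hn m)),
    (inferInstance : Module.Projective (LR K n) (FP0 K hn m)), FD_inj hn m, hq, hker, ?_, ?_, ?_⟩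
  · intro (u : FP1 K hn m →ₗ[LR K n] X)
    obtain ⟨h, hh⟩ := Module.projective_lifting_property q u hq
    obtain ⟨k, hk⟩ := FD_rigid hn m h
    refine ⟨q ∘ₗ k, fun (x : FP1 K hn m) => ?_⟩
    obtain ⟨y, hy⟩ := hk x
    have h0 : q (D y) = 0 := (hker _).2 ⟨y, rfl⟩
    have h1 : q (h x) = u x := LinearMap.congr_fun hh x
    change q (k (D x)) = u x
    rw [← h1, hy, map_add]
    change _ = _ + q (D y)
    rw [h0, add_zero]
  · letI : Module K X := Module.compHom X (algebraMap K (LR K n))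
    haveI : Module.Finite K X := finite_compHom (R := LR K n) K X
    let j : (Fin m → K) →ₗ[K] X :=
      { toFun := fun a => q (0, dl K _ a, 0)
        map_add' := fun a b => by
          rw [← map_add]
          congr 1
          refine Prod.ext (by simp) (Prod.ext (ev_ext fun w => ?_) (by simp))
          change ev (dl K _ (a + b)) w = ev (dl K _ a) w + ev (dl K _ b) w
          simp only [ev_dl]; split <;> simp
        map_smul' := fun c a => by
          change _ = algebraMap K (LR K n) c • q _
          rw [← map_smul]
          congr 1
          refine Prod.ext (by simp) (Prod.ext (ev_ext fun w => ?_) (by simp))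
          change ev (dl K _ (c • a)) w = ev (algebraMap K (LR K n) c • dl K _ a) w
          rw [ev_alg]
          simp only [ev_dl]; split <;> simp }
    have hj : Function.Injective j := by
      rw [injective_iff_map_eq_zero]
      intro a ha
      obtain ⟨b, hb⟩ := (hker _).1 ha
      have h1 : ev (D b).2.1 (vb hn 0) = a := by
        rw [hb]; change ev (dl K (vb hn 0) a) (vb hn 0) = a
        simp [ev_dl]
      rw [← h1]
      change ev (FD K hn m b).2.1 _ = 0
      rw [FD2]
      exact ev_supp _ _ (by rw [vb_vb]; decide)
    have := LinearMap.finrank_le_finrank_of_injective hj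
    rw [Module.finrank_fin_fun] at this
    exact this
  · intro (φ : X →ₗ[LR K n] X)
    obtain ⟨k, hk⟩ := Module.projective_lifting_property q (φ ∘ₗ q) hq
    have hk' : ∀ x, q (k x) = φ (q x) := fun x => LinearMap.congr_fun hk x
    obtain ⟨l, hl⟩ := Module.projective_lifting_property D.rangeRestrict
      (LinearMap.codRestrict (LinearMap.range D) (k ∘ₗ D) (fun x => (hker _).1 (by
        rw [LinearMap.comp_apply, hk', (hker _).2 ⟨x, rfl⟩, map_zero])))
      D.surjective_rangeRestrict
    obtain ⟨c, hc⟩ := FD_brick hn m k l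
      (fun x => (congrArg Subtype.val (LinearMap.congr_fun hl x)).symm)
    have hφ : ∀ z, φ z = algebraMap K (LR K n) c • z := by
      intro z
      obtain ⟨x, rfl⟩ := hq z
      rw [← hk', hc, map_smul]
    by_cases h0 : c = 0
    · left
      refine LinearMap.ext fun (z : X) => ?_
      refine (hφ z).trans ?_
      rw [h0, map_zero, zero_smul]; rfl
    · right
      intro (y : X) (z : X) hyz
      have h1 : algebraMap K (LR K n) c • y = algebraMap K (LR K n) c • z := by
        rw [← hφ, ← hφ]; exact hyz
      have h2 := congrArg (fun t => algebraMap K (LR K n) c⁻¹ • t) h1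
      simp only [smul_smul] at h2
      rw [← map_mul, inv_mul_cancel₀ h0, map_one, one_smul, one_smul] at h2
      exact h2

end family

/-- Corollary 4.6 of the paper.  Every τ-tilting-finite
commutative ladder over an algebraically closed field is
representation-finite. -/
theorem tau_tilting_finite_commutative_ladder_is_rep_finite
    (K : Type) [Field K] [IsAlgClosed K] (n : ℕ) (hn : 1 ≤ n)
    (ht : IsTauTiltingFinite (CommLadder K n)) :
    IsRepFinite (CommLadder K n) := by
  
  by_cases h : n ≤ 4
  · exact repFinite_small K n h
  · exact absurd ht (not_finite_large K n (by omega))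

end PaperSilting
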